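/- Let K = GF(q) be a finite field with q ≡ 3 (mod 4) and (V, f) a finite-dimensional nondegenerate symmetric bilinear space over K. Let φ ∈ Ω(V) be reversible in Ω(V). Then φ is bireflectional in Ω(V) if and only if the image of φ in PΩ(V) = Ω(V)/(Ω(V) ∩ {id, −id}) is bireflectional in PΩ(V). -/

import Mathlib

open Polynomial Module

namespace Biref

variable {K V : Type*} [Field K] [AddCommGroup V] [Module K V]

/-- The orthogonal group of a bilinear form: all linear automorphisms preserving `f`. -/
def orthGroup (f : LinearMap.BilinForm K V) : Subgroup (V ≃ₗ[K] V) where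
  carrier := {φ | ∀ x y : V, f (φ x) (φ y) = f x y}
  one_mem' := fun _ _ => rfl
  mul_mem' := by
    intro a b ha hb x y
    simpa using (ha (b x) (b y)).trans (hb x y)
  inv_mem' := by
    intro a ha x y
    show f (a.symm x) (a.symm y) = f x y
    conv_rhs => rw [← a.apply_symm_apply x, ← a.apply_symm_apply y]
    exact (ha _ _).symm

/-- The special orthogonal group: isometries of determinant 1. -/
def specialOrthGroup (f : LinearMap.BilinForm K V) : Subgroup (V ≃ₗ[K] V) where
  carrier := {φ | (∀ x y : V, f (φ x) (φ y) = f x y) ∧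
      LinearMap.det (φ : V →ₗ[K] V) = 1}
  one_mem' := ⟨fun _ _ => rfl, by simp⟩
  mul_mem' := by
    rintro a b ⟨ha, ha'⟩ ⟨hb, hb'⟩
    refine ⟨fun x y => by simpa using (ha (b x) (b y)).trans (hb x y), ?_⟩
    rw [LinearEquiv.coe_toLinearMap_mul, map_mul, ha', hb', one_mul]
  inv_mem' := by
    rintro a ⟨ha, ha'⟩
    refine ⟨fun x y => ?_, ?_⟩
    · show f (a.symm x) (a.symm y) = f x y
      conv_rhs => rw [← a.apply_symm_apply x, ← a.apply_symm_apply y]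
      exact (ha _ _).symm
    · have h1 : LinearMap.det ((a⁻¹ * a : V ≃ₗ[K] V) : V →ₗ[K] V) = 1 := by
        rw [inv_mul_cancel, LinearEquiv.coe_toLinearMap_one, LinearMap.det_id]
      rw [LinearEquiv.coe_toLinearMap_mul, map_mul, ha', mul_one] at h1
      exact h1

/-- The commutator subgroup `Ω(V)` of the orthogonal group. -/
def omegaGroup (f : LinearMap.BilinForm K V) : Subgroup (V ≃ₗ[K] V) :=
  ⁅orthGroup f, orthGroup f⁆

/-- `g` is a product of two involutions lying in the subgroup `H`. -/
def IsBireflectionalIn {G : Type*} [Group G] (H : Subgroup G) (g : G) : Prop :=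
  ∃ σ τ : G, σ ∈ H ∧ τ ∈ H ∧ σ ^ 2 = 1 ∧ τ ^ 2 = 1 ∧ g = σ * τ

/-- `g` is bireflectional in the group `G`. -/
def IsBireflectional {G : Type*} [Group G] (g : G) : Prop :=
  ∃ σ τ : G, σ ^ 2 = 1 ∧ τ ^ 2 = 1 ∧ g = σ * τ

/-- `g` is reversed by some element of `H`. -/
def IsReversibleIn {G : Type*} [Group G] (H : Subgroup G) (g : G) : Prop :=
  ∃ α : G, α ∈ H ∧ α * g * α⁻¹ = g⁻¹

/-- A subspace is invariant under an endomorphism. -/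
def Invt (ψ : V →ₗ[K] V) (U : Submodule K V) : Prop :=
  ∀ x ∈ U, ψ x ∈ U

/-- The discriminant of a (finite-dimensional, nondegenerate) bilinear space is the class
of `d` in `K*/(K*)²`: some Gram determinant equals `d` times a nonzero square. -/
def HasDisc (f : LinearMap.BilinForm K V) (d : K) : Prop :=
  ∃ (b : Basis (Fin (Module.finrank K V)) K V) (c : Kˣ),
    (Matrix.of fun i j => f (b i) (b j)).det = d * (c : K) ^ 2

/-- A nondegenerate symmetric bilinear space is hyperbolic iff its Witt index is half its
dimension, i.e. there is a totally isotropic subspace of half the dimension. -/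
def IsHyperbolicSpace (f : LinearMap.BilinForm K V) : Prop :=
  ∃ W : Submodule K V, (∀ x ∈ W, ∀ y ∈ W, f x y = 0) ∧
    2 * Module.finrank K W = Module.finrank K V

/-- The multiplicity of `p ^ d` as an elementary divisor of `φ`. -/
noncomputable def edMult (φ : Module.End K V) (p : K[X]) (d : ℕ) : ℕ :=
  (2 * Module.finrank K (LinearMap.ker (Polynomial.aeval φ p ^ d))
    - Module.finrank K (LinearMap.ker (Polynomial.aeval φ p ^ (d + 1)))
    - Module.finrank K (LinearMap.ker (Polynomial.aeval φ p ^ (d - 1)))) / p.natDegree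

/-- `n_j(φ)`: the number of elementary divisors `(x ± 1) ^ d` of `φ` with `d ≡ j mod 8`,
counted with multiplicity. -/
noncomputable def nPM [FiniteDimensional K V] (φ : Module.End K V) (j : ℕ) : ℕ :=
  ∑ d ∈ Finset.range (Module.finrank K V + 1),
    if d % 8 = j % 8 then edMult φ (X - 1) d + edMult φ (X + 1) d else 0

/-- The Fitting one space `Bahn^∞(ψ) = ⋂ⱼ im (ψ - 1)^j`. -/
noncomputable def bahnInf (ψ : Module.End K V) : Submodule K V :=
  ⨅ j : ℕ, LinearMap.range ((ψ - 1) ^ j)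

/-- The `K[x]`-submodule generated by `v` (`x` acting as `ψ`). -/
def cycSub (ψ : Module.End K V) (v : V) : Submodule K V :=
  Submodule.span K (Set.range fun n : ℕ => (ψ ^ n) v)

/-- `V` is a cyclic `K[x]`-module, `x` acting as `ψ`. -/
def IsCyclicEnd (ψ : Module.End K V) : Prop :=
  ∃ v : V, cycSub ψ v = ⊤

/-- `V` is a direct sum of two cyclic `K[x]`-submodules, `x` acting as `ψ`. -/
def IsBicyclicEnd (ψ : Module.End K V) : Prop :=
  ∃ v w : V, cycSub ψ v ⊓ cycSub ψ w = ⊥ ∧ cycSub ψ v ⊔ cycSub ψ w = ⊤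

/-- `V` is an indecomposable `K[x]`-module, `x` acting as `ψ`. -/
def ModIndec (ψ : Module.End K V) : Prop :=
  (⊥ : Submodule K V) ≠ ⊤ ∧
    ¬∃ A B : Submodule K V, Invt ψ A ∧ Invt ψ B ∧ A ≠ ⊥ ∧ B ≠ ⊥ ∧ A ⊓ B = ⊥ ∧ A ⊔ B = ⊤

/-- `ψ` is orthogonally indecomposable w.r.t. `f`: `V ≠ 0` and the only nondegenerate
invariant subspaces are `0` and `V`. -/
def OrthIndec (f : LinearMap.BilinForm K V) (ψ : Module.End K V) : Prop :=
  (⊥ : Submodule K V) ≠ ⊤ ∧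
    ∀ U : Submodule K V, Invt ψ U → (f.restrict U).Nondegenerate → U = ⊥ ∨ U = ⊤

/-- The Witt index: the dimension of a maximal totally isotropic subspace. -/
noncomputable def wittIndex (f : LinearMap.BilinForm K V) : ℕ :=
  sSup {n | ∃ W : Submodule K V, (∀ x ∈ W, ∀ y ∈ W, f x y = 0) ∧ Module.finrank K W = n}


/-- The subgroup `Ω(V) ∩ {id, -id}` of `Ω(V)`. -/
def pmOne (f : LinearMap.BilinForm K V) : Subgroup ↥(omegaGroup f) where
  carrier := {x | (∀ v : V, (x : V ≃ₗ[K] V) v = v) ∨ (∀ v : V, (x : V ≃ₗ[K] V) v = -v)}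
  one_mem' := Or.inl fun _ => rfl
  mul_mem' := by
    rintro a b (ha | ha) (hb | hb)
    · refine Or.inl fun v => ?_
      show (a : V ≃ₗ[K] V) ((b : V ≃ₗ[K] V) v) = v
      rw [hb, ha]
    · refine Or.inr fun v => ?_
      show (a : V ≃ₗ[K] V) ((b : V ≃ₗ[K] V) v) = -v
      rw [hb, map_neg, ha]
    · refine Or.inr fun v => ?_
      show (a : V ≃ₗ[K] V) ((b : V ≃ₗ[K] V) v) = -v
      rw [hb, ha]
    · refine Or.inl fun v => ?_
      show (a : V ≃ₗ[K] V) ((b : V ≃ₗ[K] V) v) = v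
      rw [hb, map_neg, ha, neg_neg]
  inv_mem' := by
    rintro a (ha | ha)
    · refine Or.inl fun v => ?_
      show ((a : V ≃ₗ[K] V)).symm v = v
      rw [LinearEquiv.symm_apply_eq, ha]
    · refine Or.inr fun v => ?_
      show ((a : V ≃ₗ[K] V)).symm v = -v
      rw [LinearEquiv.symm_apply_eq, map_neg, ha, neg_neg]

instance pmOne_normal (f : LinearMap.BilinForm K V) : (pmOne f).Normal := by
  constructor
  rintro x (hx | hx) g
  · refine Or.inl fun v => ?_
    show (g : V ≃ₗ[K] V) ((x : V ≃ₗ[K] V) (((g : V ≃ₗ[K] V)).symm v)) = v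
    rw [hx]
    exact (g : V ≃ₗ[K] V).apply_symm_apply v
  · refine Or.inr fun v => ?_
    show (g : V ≃ₗ[K] V) ((x : V ≃ₗ[K] V) (((g : V ≃ₗ[K] V)).symm v)) = -v
    rw [hx, map_neg, (g : V ≃ₗ[K] V).apply_symm_apply v]

end Biref
namespace Biref
universe u v
variable {K : Type u} [Field K] {V A B : Type v} [AddCommGroup V] [Module K V]
  [AddCommGroup A] [Module K A] [AddCommGroup B] [Module K B]

structure QS (f : LinearMap.BilinForm K V) : Prop where
  symm : ∀ x y, f x y = f y x
  nd : ∀ x, (∀ y, f x y = 0) → x = 0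

def Adj (f : LinearMap.BilinForm K V) (s t : Module.End K V) : Prop :=
  ∀ x y, f (s x) y = f x (t y)

section adj
variable {f : LinearMap.BilinForm K V} {s t s' t' : Module.End K V}

lemma Adj.mul (h : Adj f s t) (h' : Adj f s' t') : Adj f (s * s') (t' * t) := fun x y => by
  simp only [Module.End.mul_apply]; rw [h, h']
lemma Adj.add (h : Adj f s t) (h' : Adj f s' t') : Adj f (s + s') (t + t') := fun x y => by
  simp only [LinearMap.add_apply, map_add]; rw [h, h']
lemma Adj.sub (h : Adj f s t) (h' : Adj f s' t') : Adj f (s - s') (t - t') := fun x y => by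
  simp only [LinearMap.sub_apply, map_sub]; rw [h, h']
lemma Adj.neg (h : Adj f s t) : Adj f (-s) (-t) := fun x y => by
  simp only [LinearMap.neg_apply, map_neg]; rw [h]
lemma Adj.smul (a : K) (h : Adj f s t) : Adj f (a • s) (a • t) := fun x y => by
  simp only [LinearMap.smul_apply, map_smul]; rw [h]
lemma Adj.one : Adj f 1 1 := fun _ _ => rfl
lemma Adj.zero : Adj f 0 0 := fun x y => by simp
lemma Adj.pow (h : Adj f s t) (n : ℕ) : Adj f (s ^ n) (t ^ n) := by
  induction n with
  | zero => simpa using Adj.one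
  | succ n ih => rw [pow_succ, pow_succ']; exact ih.mul h
lemma Adj.aeval (h : Adj f s t) (g : K[X]) : Adj f (aeval s g) (aeval t g) := by
  induction g using Polynomial.induction_on' with
  | add p q hp hq => simpa using hp.add hq
  | monomial n a =>
    simp only [aeval_monomial, ← Algebra.smul_def]; exact (h.pow n).smul a
lemma Adj.swap (q : QS f) (h : Adj f s t) : Adj f t s := fun x y => by
  rw [q.symm, ← h, q.symm]
lemma Adj.uniq (q : QS f) (h : Adj f s t) (h' : Adj f s t') : t = t' := by
  ext x
  rw [← sub_eq_zero]
  apply q.nd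
  intro y
  rw [q.symm, map_sub, ← h, ← h', sub_self]
lemma Adj.exists [FiniteDimensional K V] (q : QS f) (s : Module.End K V) : ∃ t, Adj f s t := by
  have hn : f.Nondegenerate := by
    constructor
    · intro x hx; exact q.nd x hx
    · intro x hx; exact q.nd x fun y => by rw [q.symm]; exact hx y
  refine ⟨LinearMap.BilinForm.leftAdjointOfNondegenerate f hn s, ?_⟩
  have := LinearMap.BilinForm.isAdjointPairLeftAdjointOfNondegenerate f hn s
  intro x y
  have h1 := this y x
  rw [q.symm, ← h1, q.symm]
end adj

structure IsoP (f : LinearMap.BilinForm K V) (g g' : Module.End K V) : Prop where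
  adj : Adj f g g'
  rinv : g * g' = 1
  linv : g' * g = 1

section
variable {f : LinearMap.BilinForm K V} {g g' h h' : Module.End K V}
lemma IsoP.one : IsoP f 1 1 := ⟨Adj.one, one_mul 1, one_mul 1⟩
lemma IsoP.mul (a : IsoP f g g') (b : IsoP f h h') : IsoP f (g * h) (h' * g') :=
  ⟨a.adj.mul b.adj, by rw [mul_assoc, ← mul_assoc h, b.rinv, one_mul, a.rinv],
   by rw [mul_assoc, ← mul_assoc g', a.linv, one_mul, b.linv]⟩
lemma IsoP.inv (q : QS f) (a : IsoP f g g') : IsoP f g' g := ⟨a.adj.swap q, a.linv, a.rinv⟩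
lemma IsoP.map (a : IsoP f g g') (x y : V) : f (g x) (g y) = f x y := by
  rw [a.adj, ← Module.End.mul_apply, a.linv]; rfl
lemma IsoP.neg (a : IsoP f g g') : IsoP f (-g) (-g') :=
  ⟨a.adj.neg, by simp [a.rinv], by simp [a.linv]⟩
lemma IsoP.of_map [FiniteDimensional K V] (q : QS f) (hg : ∀ x y, f (g x) (g y) = f x y) :
    ∃ g', IsoP f g g' := by
  obtain ⟨t, ht⟩ := Adj.exists q g
  have : t * g = 1 := by
    ext x
    rw [← sub_eq_zero]
    apply q.nd
    intro y
    rw [q.symm, map_sub, Module.End.mul_apply, ← ht, hg]; simp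
  exact ⟨t, ht, mul_eq_one_comm.mp this, this⟩
lemma IsoP.invol (a : Adj f g g) (h : g * g = 1) : IsoP f g g := ⟨a, h, h⟩
end

inductive Om (f : LinearMap.BilinForm K V) : Module.End K V → Prop
  | one : Om f 1
  | step (g a a' b b') : Om f g → IsoP f a a' → IsoP f b b' → Om f (g * (a * b * a' * b'))

section
variable {f : LinearMap.BilinForm K V} {g g' h h' : Module.End K V}
lemma Om.mul (a : Om f g) (b : Om f h) : Om f (g * h) := by
  induction b with
  | one => simpa using a
  | step g a a' b b' _ h1 h2 ih => rw [← mul_assoc]; exact ih.step _ _ _ _ _ h1 h2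
lemma Om.comm (a : IsoP f g g') (b : IsoP f h h') : Om f (g * h * g' * h') := by
  simpa using Om.one.step _ _ _ _ _ a b
lemma Om.map {f' : LinearMap.BilinForm K A} (F : Module.End K V →* Module.End K A)
    (hF : ∀ g g', IsoP f g g' → IsoP f' (F g) (F g')) (a : Om f g) : Om f' (F g) := by
  induction a with
  | one => rw [map_one]; exact Om.one
  | step g a a' b b' _ h1 h2 ih =>
    simp only [map_mul]
    exact ih.step _ _ _ _ _ (hF _ _ h1) (hF _ _ h2)
lemma Om.iso (a : Om f g) : ∃ g', IsoP f g g' := by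
  induction a with
  | one => exact ⟨1, IsoP.one⟩
  | step g a a' b b' _ h1 h2 ih =>
    obtain ⟨g', hg'⟩ := ih
    have i1 : ∀ x y, f (a' x) (a' y) = f x y := fun x y => by
      rw [← h1.map, ← Module.End.mul_apply, ← Module.End.mul_apply, h1.rinv]; rfl
    have i2 : ∀ x y, f (b' x) (b' y) = f x y := fun x y => by
      rw [← h2.map, ← Module.End.mul_apply, ← Module.End.mul_apply, h2.rinv]; rfl
    have j1 : Adj f a' a := fun x y => by
      rw [← h1.map, ← Module.End.mul_apply, h1.rinv]; rfl
    have j2 : Adj f b' b := fun x y => by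
      rw [← h2.map, ← Module.End.mul_apply, h2.rinv]; rfl
    exact ⟨_, hg'.mul (((h1.mul h2).mul ⟨j1, h1.linv, h1.rinv⟩).mul ⟨j2, h2.linv, h2.rinv⟩)⟩
lemma Om.det (a : Om f g) : LinearMap.det g = 1 := by
  induction a with
  | one => simp
  | step g a a' b b' _ h1 h2 ih =>
    have e1 : LinearMap.det a * LinearMap.det a' = 1 := by rw [← map_mul, h1.rinv, map_one]
    have e2 : LinearMap.det b * LinearMap.det b' = 1 := by rw [← map_mul, h2.rinv, map_one]
    simp only [map_mul, ih]
    linear_combination LinearMap.det b * LinearMap.det b' * e1 + e2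
def conjHom (a a' : Module.End K V) (h : a' * a = 1) (h' : a * a' = 1) :
    Module.End K V →* Module.End K V where
  toFun g := a * g * a'
  map_one' := by simp [h']
  map_mul' x y := by
    calc a * (x * y) * a' = a * x * 1 * y * a' := by simp [mul_assoc]
      _ = _ := by rw [← h]; simp [mul_assoc]
lemma Om.conj (a : IsoP f g g') (b : Om f h) : Om f (g * h * g') := by
  have := Om.map (f' := f) (conjHom g g' a.linv a.rinv) ?_ b
  · exact this
  · intro k k' hk
    have j1 : Adj f g' g := fun x y => by
      rw [← a.map, ← Module.End.mul_apply, a.rinv]; rfl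
    have := (a.mul hk).mul ⟨j1, a.linv, a.rinv⟩
    simpa [conjHom, mul_assoc] using this
end

lemma toEquiv {f : LinearMap.BilinForm K V} {g g' : Module.End K V} (a : IsoP f g g') :
    ∃ e : V ≃ₗ[K] V, e ∈ orthGroup f ∧ (∀ x, e x = g x) ∧ (∀ x, e⁻¹ x = g' x) :=
  ⟨LinearEquiv.ofLinearMap g g' a.rinv a.linv, a.map, fun _ => rfl, fun _ => rfl⟩

lemma Om.toOmega {f : LinearMap.BilinForm K V} {g : Module.End K V} (a : Om f g) :
    ∃ e : V ≃ₗ[K] V, e ∈ omegaGroup f ∧ (∀ x, e x = g x) := by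
  induction a with
  | one => exact ⟨1, one_mem _, fun _ => rfl⟩
  | step g a a' b b' _ h1 h2 ih =>
    obtain ⟨e, he, hx⟩ := ih
    obtain ⟨e1, m1, p1, q1⟩ := toEquiv h1
    obtain ⟨e2, m2, p2, q2⟩ := toEquiv h2
    refine ⟨e * (e1 * e2 * e1⁻¹ * e2⁻¹), mul_mem he (Subgroup.commutator_mem_commutator m1 m2), fun x => ?_⟩
    simp only [LinearEquiv.mul_apply, hx, p1, p2, q1, q2,
      Module.End.mul_apply]

structure Dec (f : LinearMap.BilinForm K V) (fA : LinearMap.BilinForm K A)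
    (fB : LinearMap.BilinForm K B) where
  i : A →ₗ[K] V
  p : V →ₗ[K] A
  j : B →ₗ[K] V
  r : V →ₗ[K] B
  pi : ∀ a, p (i a) = a
  rj : ∀ b, r (j b) = b
  pj : ∀ b, p (j b) = 0
  ri : ∀ a, r (i a) = 0
  sum : ∀ v, i (p v) + j (r v) = v
  fi : ∀ a v, f (i a) v = fA a (p v)
  fj : ∀ b v, f (j b) v = fB b (r v)

namespace Dec
variable {f : LinearMap.BilinForm K V} {fA : LinearMap.BilinForm K A}
    {fB : LinearMap.BilinForm K B} (D : Dec f fA fB)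

def swap : Dec f fB fA where
  i := D.j
  p := D.r
  j := D.i
  r := D.p
  pi := D.rj
  rj := D.pi
  pj := D.ri
  ri := D.pj
  sum v := by rw [add_comm]; exact D.sum v
  fi := D.fj
  fj := D.fi

def glue (g : Module.End K A) (h : Module.End K B) : Module.End K V :=
  D.i ∘ₗ g ∘ₗ D.p + D.j ∘ₗ h ∘ₗ D.r

lemma glue_apply (g : Module.End K A) (h : Module.End K B) (v : V) :
    D.glue g h v = D.i (g (D.p v)) + D.j (h (D.r v)) := rfl
lemma p_glue (g : Module.End K A) (h : Module.End K B) (v : V) :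
    D.p (D.glue g h v) = g (D.p v) := by
  simp [glue_apply, D.pi, D.pj]
lemma r_glue (g : Module.End K A) (h : Module.End K B) (v : V) :
    D.r (D.glue g h v) = h (D.r v) := by
  simp [glue_apply, D.rj, D.ri]
lemma glue_mul (g g' : Module.End K A) (h h' : Module.End K B) :
    D.glue g h * D.glue g' h' = D.glue (g * g') (h * h') := by
  ext v
  simp [glue_apply, D.pi, D.pj, D.ri, D.rj]
lemma glue_one : D.glue 1 1 = 1 := by
  ext v
  simp [glue_apply, D.sum]
lemma glue_neg (g : Module.End K A) (h : Module.End K B) : -D.glue g h = D.glue (-g) (-h) := by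
  ext v
  simp [glue_apply]; abel
lemma glue_add (g g' : Module.End K A) (h h' : Module.End K B) :
    D.glue g h + D.glue g' h' = D.glue (g + g') (h + h') := by
  ext v
  simp [glue_apply]; abel
lemma glue_smul (a : K) (g : Module.End K A) (h : Module.End K B) :
    a • D.glue g h = D.glue (a • g) (a • h) := by
  ext v
  simp [glue_apply]
lemma glue_inj {g g' : Module.End K A} {h h' : Module.End K B}
    (e : D.glue g h = D.glue g' h') : g = g' ∧ h = h' := by
  constructor
  · ext a
    have := congrArg (fun F => D.p (F (D.i a))) e
    simpa [p_glue, D.pi] using this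
  · ext a
    have := congrArg (fun F => D.r (F (D.j a))) e
    simpa [r_glue, D.rj] using this
lemma glue_adj {g g' : Module.End K A} {h h' : Module.End K B} (a : Adj fA g g')
    (b : Adj fB h h') : Adj f (D.glue g h) (D.glue g' h') := fun x y => by
  rw [glue_apply, map_add, LinearMap.add_apply, D.fi, D.fj, a, b]
  conv_rhs => rw [← D.sum x]
  rw [map_add, LinearMap.add_apply, D.fi, D.fj, p_glue, r_glue]
lemma glue_iso {g g' : Module.End K A} {h h' : Module.End K B} (a : IsoP fA g g')
    (b : IsoP fB h h') : IsoP f (D.glue g h) (D.glue g' h') :=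
  ⟨D.glue_adj a.adj b.adj, by rw [glue_mul, a.rinv, b.rinv, glue_one],
    by rw [glue_mul, a.linv, b.linv, glue_one]⟩
def extA : Module.End K A →* Module.End K V where
  toFun g := D.glue g 1
  map_one' := D.glue_one
  map_mul' x y := by rw [glue_mul, one_mul]
lemma om_extA {g : Module.End K A} (a : Om fA g) : Om f (D.glue g 1) :=
  a.map D.extA fun _ _ h => D.glue_iso h IsoP.one
lemma swap_glue (g : Module.End K A) (h : Module.End K B) : D.swap.glue h g = D.glue g h := by
  ext v
  simp only [glue_apply]; rw [add_comm]; rfl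
lemma om_glue {g : Module.End K A} {h : Module.End K B} (a : Om fA g) (b : Om fB h) :
    Om f (D.glue g h) := by
  have h1 := D.om_extA a
  have h2 := D.swap.om_extA b
  rw [swap_glue] at h2
  have := h1.mul h2
  rwa [glue_mul, mul_one, one_mul] at this
lemma qsA (D : Dec f fA fB) (q : QS f) : QS fA := by
  constructor
  · intro x y
    have := D.fi x (D.i y)
    rw [D.pi] at this
    rw [← this, q.symm, D.fi, D.pi]
  · intro x hx
    have : D.i x = 0 := q.nd _ fun y => by rw [D.fi, hx]
    rw [← D.pi x, this, map_zero]
lemma qsB (D : Dec f fA fB) (q : QS f) : QS fB := D.swap.qsA q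

def Stab (X : Module.End K V) : Prop := X = D.glue (D.p ∘ₗ X ∘ₗ D.i) (D.r ∘ₗ X ∘ₗ D.j)

lemma glue_stab (g : Module.End K A) (h : Module.End K B) : D.Stab (D.glue g h) := by
  unfold Stab
  congr 1 <;> ext v <;> simp [p_glue, r_glue, D.pi, D.rj]

def equiv : (A × B) ≃ₗ[K] V :=
  LinearEquiv.ofLinearMap (LinearMap.coprod D.i D.j) (LinearMap.prod D.p D.r)
    (by ext v; simp [D.sum]) (by ext v <;> simp [D.pi, D.ri, D.rj, D.pj])

lemma det_glue [FiniteDimensional K A] [FiniteDimensional K B]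
    (g : Module.End K A) (h : Module.End K B) :
    LinearMap.det (D.glue g h) = LinearMap.det g * LinearMap.det h := by
  have : D.glue g h = D.equiv ∘ₗ (LinearMap.prodMap g h) ∘ₗ (D.equiv.symm : V →ₗ[K] A × B) := by
    ext v; rfl
  rw [this, LinearMap.det_conj, LinearMap.det_prodMap]
lemma finrank_add (D : Dec f fA fB) [FiniteDimensional K A] [FiniteDimensional K B] :
    finrank K V = finrank K A + finrank K B := by
  rw [← D.equiv.finrank_eq, Module.finrank_prod]
end Dec
end Biref
namespace Biref
universe u v
variable {K : Type u} [Field K] {V A B : Type v} [AddCommGroup V] [Module K V]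
  [AddCommGroup A] [Module K A] [AddCommGroup B] [Module K B]

def NdOn (f : LinearMap.BilinForm K V) (U : Submodule K V) : Prop :=
  ∀ x ∈ U, (∀ y ∈ U, f x y = 0) → x = 0

lemma ndOn_isCompl [FiniteDimensional K V] {f : LinearMap.BilinForm K V} (q : QS f)
    {U : Submodule K V} (h : NdOn f U) : IsCompl U (f.orthogonal U) := by
  apply LinearMap.BilinForm.isCompl_orthogonal_of_restrict_nondegenerate
  · intro x y hxy; rw [q.symm]; exact hxy
  · constructor
    · intro x hx
      exact Subtype.ext (h x x.2 fun y hy => hx ⟨y, hy⟩)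
    · intro x hx
      exact Subtype.ext (h x x.2 fun y hy => by rw [q.symm]; exact hx ⟨y, hy⟩)

noncomputable def decCompl {f : LinearMap.BilinForm K V} (q : QS f) (U W : Submodule K V)
    (hc : IsCompl U W) (ho : ∀ u ∈ U, ∀ w ∈ W, f u w = 0) :
    Dec f (f.restrict U) (f.restrict W) where
  i := U.subtype
  p := U.projectionOnto W hc
  j := W.subtype
  r := W.projectionOnto U hc.symm
  pi a := by simp
  rj b := by simp
  pj b := by simp
  ri b := by simp
  sum v := Submodule.projection_add_projection_eq_self hc v
  fi a v := by
    conv_lhs => rw [← Submodule.projection_add_projection_eq_self hc v]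
    rw [map_add]
    have := ho a a.2 (W.projectionOnto U hc.symm v) (Subtype.property _)
    simp only [Submodule.coe_projectionOnto_apply] at this
    simp [this]
  fj b v := by
    conv_lhs => rw [← Submodule.projection_add_projection_eq_self hc v]
    rw [map_add]
    have := ho (U.projectionOnto W hc v) (Subtype.property _) b b.2
    rw [q.symm] at this
    simp only [Submodule.coe_projectionOnto_apply] at this
    simp [this]

lemma decCompl_stab {f : LinearMap.BilinForm K V} (q : QS f) (U W : Submodule K V)
    (hc : IsCompl U W) (ho : ∀ u ∈ U, ∀ w ∈ W, f u w = 0) (X : Module.End K V)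
    (h1 : ∀ x ∈ U, X x ∈ U) (h2 : ∀ x ∈ W, X x ∈ W) : (decCompl q U W hc ho).Stab X := by
  set D := decCompl q U W hc ho
  unfold Dec.Stab
  ext v
  rw [Dec.glue_apply]
  have a1 : ∀ a : U, D.i (D.p (X (D.i a))) = X (D.i a) := by
    intro a
    have : X (D.i a) = D.i ⟨X a, h1 a a.2⟩ := rfl
    rw [this, D.pi]
  have a2 : ∀ a : W, D.j (D.r (X (D.j a))) = X (D.j a) := by
    intro a
    have : X (D.j a) = D.j ⟨X a, h2 a a.2⟩ := rfl
    rw [this, D.rj]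
  simp only [LinearMap.comp_apply]
  rw [a1, a2, ← map_add, D.sum]

noncomputable def decNd [FiniteDimensional K V] {f : LinearMap.BilinForm K V} (q : QS f)
    (U : Submodule K V) (h : NdOn f U) : Dec f (f.restrict U) (f.restrict (f.orthogonal U)) :=
  decCompl q U (f.orthogonal U) (ndOn_isCompl q h) (fun u hu w hw => by
    exact (LinearMap.BilinForm.mem_orthogonal_iff.mp hw) u hu)

lemma decNd_stab [FiniteDimensional K V] {f : LinearMap.BilinForm K V} (q : QS f)
    (U : Submodule K V) (h : NdOn f U) (X X' : Module.End K V) (ha : Adj f X X')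
    (h1 : ∀ x ∈ U, X x ∈ U) (h2 : ∀ x ∈ U, X' x ∈ U) : (decNd q U h).Stab X := by
  refine decCompl_stab _ _ _ _ _ _ h1 ?_
  intro x hx
  rw [LinearMap.BilinForm.mem_orthogonal_iff] at hx ⊢
  intro y hy
  have := hx _ (h2 y hy)
  rw [← this, q.symm, ha, q.symm]

lemma Dec.adjA {f : LinearMap.BilinForm K V} {fA : LinearMap.BilinForm K A}
    {fB : LinearMap.BilinForm K B} (D : Dec f fA fB) {g g' : Module.End K A}
    {h h' : Module.End K B} (a : Adj f (D.glue g h) (D.glue g' h')) : Adj fA g g' := by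
  intro x y
  have := a (D.i x) (D.i y)
  simp only [Dec.glue_apply, D.pi, D.ri, map_zero, add_zero, D.fi] at this
  exact this
lemma Dec.adjB {f : LinearMap.BilinForm K V} {fA : LinearMap.BilinForm K A}
    {fB : LinearMap.BilinForm K B} (D : Dec f fA fB) {g g' : Module.End K A}
    {h h' : Module.End K B} (a : Adj f (D.glue g h) (D.glue g' h')) : Adj fB h h' := by
  rw [← D.swap_glue, ← D.swap_glue] at a
  exact D.swap.adjA a

structure Sys (f : LinearMap.BilinForm K V) (c N s : Module.End K V) (e1 e2 e3 : K) : Prop where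
  q : QS f
  cc : Adj f c c
  nn : Adj f N (-N)
  ss : Adj f s (e3 • s)
  cn : c * N = N * c
  n2 : N * N = c * c - (4 : K) • 1
  sc : s * c = e1 • (c * s)
  sn : s * N = e2 • (N * s)
  s2 : s * s = e3 • 1

lemma Sys.left {f : LinearMap.BilinForm K V} {fA : LinearMap.BilinForm K A}
    {fB : LinearMap.BilinForm K B} (D : Dec f fA fB) {cA NA sA : Module.End K A}
    {cB NB sB : Module.End K B} {e1 e2 e3 : K}
    (S : Sys f (D.glue cA cB) (D.glue NA NB) (D.glue sA sB) e1 e2 e3) :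
    Sys fA cA NA sA e1 e2 e3 ∧ Sys fB cB NB sB e1 e2 e3 := by
  obtain ⟨q, cc, nn, ss, cn, n2, sc, sn, s2⟩ := S
  rw [D.glue_neg] at nn
  rw [D.glue_smul] at ss
  rw [← D.glue_one] at n2 s2
  simp only [D.glue_mul, D.glue_smul, sub_eq_add_neg, D.glue_neg, D.glue_add] at cn n2 sc sn s2
  have cn := D.glue_inj cn
  have n2 := D.glue_inj n2
  have sc := D.glue_inj sc
  have sn := D.glue_inj sn
  have s2 := D.glue_inj s2
  exact ⟨⟨D.qsA q, D.adjA cc, D.adjA nn, D.adjA ss, cn.1, by rw [n2.1]; abel, sc.1, sn.1, s2.1⟩,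
    ⟨D.qsB q, D.adjB cc, D.adjB nn, D.adjB ss, cn.2, by rw [n2.2]; abel, sc.2, sn.2, s2.2⟩⟩

def Indec (f : LinearMap.BilinForm K V) (c N s : Module.End K V) : Prop :=
  ∀ U : Submodule K V, (∀ x ∈ U, c x ∈ U) → (∀ x ∈ U, N x ∈ U) → (∀ x ∈ U, s x ∈ U) →
    NdOn f U → U = ⊥ ∨ U = ⊤

theorem ind {e1 e2 e3 : K}
    (Q : ∀ (V : Type v) [AddCommGroup V] [Module K V], LinearMap.BilinForm K V →
      Module.End K V → Module.End K V → Module.End K V → Prop)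
    (hglue : ∀ (V A B : Type v) [AddCommGroup V] [Module K V] [AddCommGroup A] [Module K A]
      [AddCommGroup B] [Module K B] [FiniteDimensional K V] [FiniteDimensional K A]
      [FiniteDimensional K B] (f : LinearMap.BilinForm K V) (fA : LinearMap.BilinForm K A)
      (fB : LinearMap.BilinForm K B) (D : Dec f fA fB) (cA NA sA : Module.End K A)
      (cB NB sB : Module.End K B),
      Sys f (D.glue cA cB) (D.glue NA NB) (D.glue sA sB) e1 e2 e3 →
      Sys fA cA NA sA e1 e2 e3 → Sys fB cB NB sB e1 e2 e3 →
      Q A fA cA NA sA → Q B fB cB NB sB →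
      Q V f (D.glue cA cB) (D.glue NA NB) (D.glue sA sB))
    (hzero : ∀ (V : Type v) [AddCommGroup V] [Module K V] (f : LinearMap.BilinForm K V)
      (c N s : Module.End K V), Subsingleton V → Sys f c N s e1 e2 e3 → Q V f c N s)
    (hbase : ∀ (V : Type v) [AddCommGroup V] [Module K V] [FiniteDimensional K V]
      [Nontrivial V] (f : LinearMap.BilinForm K V)
      (c N s : Module.End K V), Sys f c N s e1 e2 e3 → Indec f c N s → Q V f c N s) :
    ∀ (n : ℕ) (V : Type v) [AddCommGroup V] [Module K V] [FiniteDimensional K V]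
      (f : LinearMap.BilinForm K V) (c N s : Module.End K V), finrank K V = n →
      Sys f c N s e1 e2 e3 → Q V f c N s := by
  intro n
  induction n using Nat.strong_induction_on with
  | _ n ih =>
    intro V _ _ _ f c N s hn S
    rcases subsingleton_or_nontrivial V with h | h
    · exact hzero V f c N s h S
    by_cases hI : Indec f c N s
    · exact hbase V f c N s S hI
    · unfold Indec at hI
      push Not at hI
      obtain ⟨U, uc, uN, us, und, hb, ht⟩ := hI
      let D := decNd S.q U und
      have sc : D.Stab c := decNd_stab _ _ _ _ _ S.cc uc uc
      have sN : D.Stab N := decNd_stab _ _ _ _ _ S.nn uN fun x hx => U.neg_mem (uN x hx)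
      have ss : D.Stab s := decNd_stab _ _ _ _ _ S.ss us fun x hx => U.smul_mem _ (us x hx)
      have hadd := D.finrank_add
      have h1 : finrank K U ≠ 0 := by
        intro h0; exact hb (Submodule.finrank_eq_zero.mp h0)
      have h2 : finrank K U < finrank K V := Submodule.finrank_lt ht
      unfold Dec.Stab at sc sN ss
      have S' := S
      rw [sc, sN, ss] at S'
      obtain ⟨SA, SB⟩ := Sys.left D S'
      rw [sc, sN, ss]
      exact hglue _ _ _ _ _ _ D _ _ _ _ _ _ S' SA SB (ih _ (by omega) U _ _ _ _ rfl SA)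
        (ih _ (by omega) _ _ _ _ _ rfl SB)

lemma pow_semi {s t : Module.End K V} {a : K} (h : t * s = a • (s * t)) (n : ℕ) :
    t ^ n * s = a ^ n • (s * t ^ n) := by
  induction n with
  | zero => simp
  | succ n ih =>
    rw [pow_succ, mul_assoc, h, mul_smul_comm, ← mul_assoc, ih, smul_mul_assoc, smul_smul,
      mul_assoc, pow_succ, mul_comm a]

lemma fitting_nd [FiniteDimensional K V] {f : LinearMap.BilinForm K V} (q : QS f)
    {t : Module.End K V} {δ : K} (ht : Adj f t (δ • t)) :
    ∃ n, n ≠ 0 ∧ NdOn f (LinearMap.ker (t ^ n)) ∧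
      IsCompl (LinearMap.ker (t ^ n)) (LinearMap.range (t ^ n)) := by
  obtain ⟨k, hk⟩ := Filter.eventually_atTop.mp (LinearMap.eventually_isCompl_ker_pow_range_pow t)
  refine ⟨k + 1, by omega, ?_, hk (k + 1) (by omega)⟩
  have hc := hk (k + 1) (by omega)
  intro x hx hy
  apply q.nd
  intro z
  have : z ∈ LinearMap.ker (t ^ (k + 1)) ⊔ LinearMap.range (t ^ (k + 1)) := by
    rw [hc.sup_eq_top]; trivial
  obtain ⟨a, ha, b, ⟨w, rfl⟩, rfl⟩ := Submodule.mem_sup.mp this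
  rw [map_add, hy a ha, zero_add, q.symm, ht.pow, _root_.smul_pow, LinearMap.smul_apply]
  rw [LinearMap.mem_ker] at hx
  simp [hx]

lemma fit [FiniteDimensional K V] {f : LinearMap.BilinForm K V} {c N s t : Module.End K V}
    (q : QS f) (hI : Indec f c N s) {δ a1 a2 a3 : K} (ht : Adj f t (δ • t))
    (h1 : t * c = a1 • (c * t)) (h2 : t * N = a2 • (N * t)) (h3 : t * s = a3 • (s * t)) :
    IsNilpotent t ∨ IsUnit t := by
  obtain ⟨n, hn, hnd, -⟩ := fitting_nd q ht
  have key : ∀ (X : Module.End K V) (a : K), t * X = a • (X * t) →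
      ∀ x ∈ LinearMap.ker (t ^ n), X x ∈ LinearMap.ker (t ^ n) := by
    intro X a h x hx
    rw [LinearMap.mem_ker] at hx ⊢
    rw [← Module.End.mul_apply, pow_semi h]
    simp [hx]
  rcases hI _ (key c _ h1) (key N _ h2) (key s _ h3) hnd with h | h
  · right
    rw [LinearMap.isUnit_iff_ker_eq_bot, eq_bot_iff]
    intro x hx
    rw [← h]
    rw [LinearMap.mem_ker] at hx ⊢
    obtain ⟨m, rfl⟩ := Nat.exists_eq_succ_of_ne_zero hn
    rw [pow_succ, Module.End.mul_apply, hx, map_zero]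
  · left
    exact ⟨n, LinearMap.ker_eq_top.mp h⟩
end Biref
namespace Biref
universe u v
variable {K : Type u} [Field K] {V A B : Type v} [AddCommGroup V] [Module K V]

lemma unip (p : ℕ) [CharP K p] [hp : Fact p.Prime] {R : Type*} [Ring R] [Algebra K R] {n : R}
    (h : IsNilpotent n) : ∃ a, ∀ b, a ≤ b → (1 + n) ^ (p ^ b) = 1 := by
  rcases subsingleton_or_nontrivial R with hs | hs
  · exact ⟨0, fun b _ => Subsingleton.elim _ _⟩
  have : CharP R p := charP_of_injective_algebraMap (algebraMap K R).injective p
  obtain ⟨k, hk⟩ := h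
  refine ⟨k, fun b hb => ?_⟩
  rw [add_pow_char_pow_of_commute _ _ (Commute.one_left n), one_pow]
  have : k ≤ p ^ b := hb.trans (Nat.lt_pow_self hp.out.one_lt).le
  rw [pow_eq_zero_of_le this hk, add_zero]

lemma unip' (p : ℕ) [CharP K p] [hp : Fact p.Prime] {R : Type*} [Ring R] [Algebra K R] {x : R}
    (h : IsNilpotent (x - 1)) : ∃ a, ∀ b, a ≤ b → x ^ (p ^ b) = 1 := by
  have := unip (K := K) p h
  simpa using this

lemma mul_pow_odd {η : K} (h : η * η = 1) {n : ℕ} (hn : Odd n) : η ^ n = η := by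
  obtain ⟨m, rfl⟩ := hn
  rw [pow_succ, pow_mul, pow_two, h, one_pow, one_mul]

lemma commute_pow_semi {E X : Module.End K V} {η : K} (h : E * X = η • (X * E)) (n : ℕ) :
    E ^ n * X = η ^ n • (X * E ^ n) := pow_semi h n

theorem lemmaP (p : ℕ) [CharP K p] [hp : Fact p.Prime] (hp2 : p ≠ 2) [FiniteDimensional K V]
    {f : LinearMap.BilinForm K V} (q : QS f) {D E0 : Module.End K V} {δ η : K} {k : ℕ}
    (hδ : δ ≠ 0) (hη : η * η = 1) (hD : D ^ k = 0) (aD : Adj f D (δ • D))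
    (hE : E0 * D = η • (D * E0)) (hE2 : E0 * E0 = 1)
    (hf : ∀ v w, f (E0 ((D ^ (k - 1)) v)) (E0 w) = f ((D ^ (k - 1)) v) w)
    (hker : ∀ v, (D ^ (k - 1)) v = 0 → ∃ w, v = D w) :
    ∃ E : Module.End K V, Adj f E E ∧ E * E = 1 ∧
      ∀ (X : Module.End K V) (ξ η' : K), ξ ≠ 0 → η' * η' = 1 → Adj f X (ξ • X) →
        E0 * X = η' • (X * E0) → E * X = η' • (X * E) := by
  obtain ⟨E0', aE⟩ := Adj.exists q E0
  set u := E0' * E0 with hu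
  have au : Adj f u u := (aE.swap q).mul aE
  have comm : ∀ (X : Module.End K V) (ξ η' : K), ξ ≠ 0 → η' * η' = 1 → Adj f X (ξ • X) →
        E0 * X = η' • (X * E0) → u * X = X * u := by
    intro X ξ η' hξ hη' aX hX
    have h1 : Adj f (E0 * X) ((ξ • X) * E0') := aE.mul aX
    have h2 : Adj f (E0 * X) (η' • (E0' * (ξ • X))) := by
      rw [hX]; exact (aX.mul aE).smul _
    have h3 := Adj.uniq q h1 h2
    have h4 : X * E0' = η' • (E0' * X) := by
      have := congrArg (fun Y => ξ⁻¹ • Y) h3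
      simp only [smul_mul_assoc, mul_smul_comm, smul_smul] at this
      rw [inv_mul_cancel₀ hξ, one_smul, mul_comm, mul_assoc, mul_inv_cancel₀ hξ, mul_one] at this
      exact this
    rw [hu, mul_assoc, hX, mul_smul_comm, ← mul_assoc, ← smul_mul_assoc, ← h4, mul_assoc]
  have uD : u * D = D * u := comm D δ η hδ hη aD hE
  have hk1 : D ^ (k - 1) * (u - 1) = 0 := by
    have hh : u * D ^ (k - 1) = D ^ (k - 1) := by
      ext v
      rw [← sub_eq_zero]
      apply q.nd
      intro w
      rw [map_sub, LinearMap.sub_apply, Module.End.mul_apply, hu, Module.End.mul_apply,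
        (aE.swap q), hf, sub_self]
    have hc : Commute u (D ^ (k - 1)) := Commute.pow_right uD _
    rw [mul_sub, ← hc.eq, hh, mul_one, sub_self]
  have hr : ∀ v, ∃ w, (u - 1) v = D w := fun v => hker _ (by
    rw [← Module.End.mul_apply, hk1]; rfl)
  have nil : ∀ (Y : Module.End K V), Y * D = D * Y → (∀ v, ∃ w, Y v = D w) → IsNilpotent Y := by
    intro Y hY hv
    have : ∀ m v, ∃ w, (Y ^ m) v = (D ^ m) w := by
      intro m
      induction m with
      | zero => intro v; exact ⟨v, rfl⟩
      | succ m ih =>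
        intro v
        obtain ⟨w, hw⟩ := ih (Y v)
        obtain ⟨w, hw⟩ := ih v
        obtain ⟨w', hw'⟩ := hv w
        refine ⟨w', ?_⟩
        have hc : Commute Y (D ^ m) := Commute.pow_right hY m
        rw [pow_succ', Module.End.mul_apply, hw, ← Module.End.mul_apply, hc.eq,
          Module.End.mul_apply, hw', ← Module.End.mul_apply, ← pow_succ]
    refine ⟨k, ?_⟩
    ext v
    obtain ⟨w, hw⟩ := this k v
    rw [hw, hD]; rfl
  have nu : IsNilpotent (u - 1) := nil _ (by rw [sub_mul, mul_sub, uD]; simp) hr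
  obtain ⟨a, ha⟩ := unip' (K := K) p nu
  have hpo : Odd p := hp.out.odd_of_ne_two hp2
  have hpa : ∀ b, Odd (p ^ b) := fun b => hpo.pow
  obtain ⟨m, hm⟩ := hpa a
  set w := u ^ m with hw
  have aw : Adj f w w := au.pow m
  have hw2 : w * u * w = 1 := by
    rw [hw, ← pow_succ, ← pow_add, ← ha a le_rfl, hm]; congr 1; ring
  set E1 := E0 * w with hE1
  have wX : ∀ X : Module.End K V, u * X = X * u → w * X = X * w := fun X h =>
    (Commute.pow_left h m).eq
  have comm1 : ∀ (X : Module.End K V) (ξ η' : K), ξ ≠ 0 → η' * η' = 1 → Adj f X (ξ • X) →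
        E0 * X = η' • (X * E0) → E1 * X = η' • (X * E1) := by
    intro X ξ η' hξ hη' aX hX
    have := wX X (comm X ξ η' hξ hη' aX hX)
    rw [hE1, mul_assoc, this, ← mul_assoc, hX, smul_mul_assoc, mul_assoc]
  have hE1D := comm1 D δ η hδ hη aD hE
  have iso1' : Adj f E1 (w * E0') := aE.mul aw
  have hl : (w * E0') * E1 = 1 := by
    rw [hE1, ← hw2, hu]; simp only [mul_assoc]
  have iso1 : IsoP f E1 (w * E0') := ⟨iso1', mul_eq_one_comm.mp hl, hl⟩
  -- w - 1 maps into the image of D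
  have hwr : ∀ v, ∃ z, w v = v + D z := by
    have : ∀ l v, ∃ z, (u ^ l) v = v + D z := by
      intro l
      induction l with
      | zero => intro v; exact ⟨0, by simp⟩
      | succ l ih =>
        intro v
        obtain ⟨z, hz⟩ := ih v
        obtain ⟨z', hz'⟩ := hr v
        refine ⟨z' + u z, ?_⟩
        have : u v = v + D z' := by rw [← hz']; simp
        rw [pow_succ', Module.End.mul_apply, hz, map_add, this, map_add, ← Module.End.mul_apply,
          uD, Module.End.mul_apply, add_assoc]
    exact this m
  have hE0D : ∀ z, E0 (D z) = D (η • E0 z) := fun z => by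
    rw [← Module.End.mul_apply, hE]; simp
  have hE0E0 : ∀ z, E0 (E0 z) = z := fun z => by rw [← Module.End.mul_apply, hE2]; rfl
  have nE : IsNilpotent (E1 * E1 - 1) := by
    apply nil
    · rw [sub_mul, mul_sub, mul_assoc, hE1D, mul_smul_comm, ← mul_assoc, hE1D, smul_mul_assoc,
        smul_smul, hη, one_smul, mul_assoc]; simp
    · intro v
      obtain ⟨z, hz⟩ := hwr v
      obtain ⟨z', hz'⟩ := hwr (E0 (w v))
      refine ⟨z + η • E0 z', ?_⟩
      simp only [LinearMap.sub_apply, Module.End.mul_apply, hE1, Module.End.one_apply]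
      rw [hz', map_add, hE0E0, hz, hE0D, map_add]; abel
  obtain ⟨b, hb⟩ := unip' (K := K) p nE
  have hEE : E1 ^ (p ^ b) * E1 ^ (p ^ b) = 1 := by
    rw [← pow_add, ← two_mul, pow_mul, pow_two]; exact hb b le_rfl
  refine ⟨E1 ^ (p ^ b), ?_, hEE, ?_⟩
  · have h1 := iso1'.pow (p ^ b)
    have h2 : (w * E0') ^ (p ^ b) * E1 ^ (p ^ b) = 1 := by
      have hc : Commute (w * E0') E1 := by rw [Commute, SemiconjBy, iso1.linv, iso1.rinv]
      rw [← hc.mul_pow, iso1.linv, one_pow]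
    have h3 : (w * E0') ^ (p ^ b) = E1 ^ (p ^ b) := by
      calc (w * E0') ^ (p ^ b) = (w * E0') ^ (p ^ b) * (E1 ^ (p ^ b) * E1 ^ (p ^ b)) := by
            rw [hEE, mul_one]
        _ = _ := by rw [← mul_assoc, h2, one_mul]
    rwa [h3] at h1
  · intro X ξ η' hξ hη' aX hX
    have := pow_semi (comm1 X ξ η' hξ hη' aX hX) (p ^ b)
    rwa [mul_pow_odd hη' (hpa b)] at this

section free
variable {ι : Type} [Fintype ι] [DecidableEq ι]

def fam (D : Module.End K V) (k : ℕ) (z : ι → V) : ι × Fin k → V := fun x => (D ^ (x.2 : ℕ)) (z x.1)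

def famSpan (D : Module.End K V) (k : ℕ) (z : ι → V) : Submodule K V :=
  Submodule.span K (Set.range (fam D k z))

variable {f : LinearMap.BilinForm K V} {D : Module.End K V} {k : ℕ} {z : ι → V} {δ : K}

lemma fam_mem (hD : D ^ k = 0) (m : ℕ) (i : ι) : (D ^ m) (z i) ∈ famSpan D k z := by
  by_cases h : m < k
  · exact Submodule.subset_span ⟨(i, ⟨m, h⟩), rfl⟩
  · rw [pow_eq_zero_of_le (not_lt.mp h) hD]; simp

lemma famSpan_inv (hD : D ^ k = 0) {X : Module.End K V} {a : K} (hX : X * D = a • (D * X))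
    (hz : ∀ i, X (z i) ∈ famSpan D k z) : ∀ v ∈ famSpan D k z, X v ∈ famSpan D k z := by
  have hDD : ∀ v ∈ famSpan D k z, D v ∈ famSpan D k z := by
    intro v hv
    induction hv using Submodule.span_induction with
    | mem x hx =>
      obtain ⟨⟨i, m⟩, rfl⟩ := hx
      have := fam_mem (z := z) hD (m + 1) i
      rwa [pow_succ', Module.End.mul_apply] at this
    | zero => simp
    | add x y _ _ h1 h2 => rw [map_add]; exact add_mem h1 h2
    | smul c x _ h => rw [map_smul]; exact Submodule.smul_mem _ _ h
  have hDm : ∀ m, ∀ v ∈ famSpan D k z, (D ^ m) v ∈ famSpan D k z := by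
    intro m
    induction m with
    | zero => intro v hv; simpa using hv
    | succ m ih => intro v hv; rw [pow_succ', Module.End.mul_apply]; exact hDD _ (ih v hv)
  have hXm : ∀ m, X * D ^ m = a ^ m • (D ^ m * X) := by
    intro m
    induction m with
    | zero => simp
    | succ m ih =>
      rw [pow_succ, ← mul_assoc, ih, smul_mul_assoc, mul_assoc, hX, mul_smul_comm, smul_smul,
        mul_assoc, ← pow_succ]
  intro v hv
  induction hv using Submodule.span_induction with
    | mem x hx =>
      obtain ⟨⟨i, m⟩, rfl⟩ := hx
      unfold fam
      rw [← Module.End.mul_apply, hXm]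
      exact Submodule.smul_mem _ _ (hDm _ _ (hz i))
    | zero => simp
    | add x y _ _ h1 h2 => rw [map_add]; exact add_mem h1 h2
    | smul c x _ h => rw [map_smul]; exact Submodule.smul_mem _ _ h

lemma free_key (hδ : δ ≠ 0) (hD : D ^ k = 0) (aD : Adj f D (δ • D))
    (hG : ∀ a : ι → K, (∀ j, ∑ i, a i * f ((D ^ (k - 1)) (z i)) (z j) = 0) → a = 0)
    (a : ι × Fin k → K) (h : ∀ v ∈ famSpan D k z, f (∑ x, a x • fam D k z x) v = 0) : a = 0 := by
  have hmv : ∀ l (x y : V), f x ((D ^ l) y) = (δ⁻¹) ^ l * f ((D ^ l) x) y := by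
    intro l x y
    have := aD.pow l x y
    rw [this, _root_.smul_pow, LinearMap.smul_apply, map_smul, smul_eq_mul, ← mul_assoc,
      ← mul_pow, inv_mul_cancel₀ hδ, one_pow, one_mul]
  have main : ∀ m (hm : m < k), ∀ i, a (i, ⟨m, hm⟩) = 0 := by
    intro m
    induction m using Nat.strong_induction_on with
    | _ m ih =>
      intro hm
      suffices (fun i => a (i, ⟨m, hm⟩)) = 0 from fun i => congrFun this i
      apply hG
      intro j
      have h1 := h _ (fam_mem hD (k - 1 - m) j)
      rw [hmv, map_sum, map_sum, LinearMap.sum_apply, mul_eq_zero] at h1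
      have h2 := h1.resolve_left (pow_ne_zero _ (inv_ne_zero hδ))
      rw [Fintype.sum_prod_type] at h2
      rw [← h2]
      refine Finset.sum_congr rfl fun i _ => ?_
      rw [Finset.sum_eq_single ⟨m, hm⟩]
      · simp only [map_smul, LinearMap.smul_apply, smul_eq_mul, fam]
        rw [← Module.End.mul_apply, ← pow_add]
        congr 5; omega
      · intro b _ hb
        rcases lt_trichotomy (b : ℕ) m with hlt | heq | hgt
        · rw [ih b hlt b.2 i]; simp
        · exact absurd (Fin.ext heq) hb
        · simp only [map_smul, LinearMap.smul_apply, smul_eq_mul, fam]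
          rw [← Module.End.mul_apply, ← pow_add, pow_eq_zero_of_le (by omega) hD]
          simp
      · intro hh; exact absurd (Finset.mem_univ _) hh
  ext ⟨i, m⟩
  exact main m m.2 i

lemma mem_famSpan {v : V} (h : v ∈ famSpan D k z) : ∃ a : ι × Fin k → K, v = ∑ x, a x • fam D k z x := by
  unfold famSpan at h
  rw [Submodule.mem_span_range_iff_exists_fun] at h
  obtain ⟨a, ha⟩ := h
  exact ⟨a, ha.symm⟩

lemma free_nd (hδ : δ ≠ 0) (hD : D ^ k = 0) (aD : Adj f D (δ • D))
    (hG : ∀ a : ι → K, (∀ j, ∑ i, a i * f ((D ^ (k - 1)) (z i)) (z j) = 0) → a = 0) :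
    NdOn f (famSpan D k z) := by
  intro x hx h
  obtain ⟨a, rfl⟩ := mem_famSpan hx
  rw [free_key hδ hD aD hG a h]; simp

lemma free_li (hδ : δ ≠ 0) (hD : D ^ k = 0) (aD : Adj f D (δ • D))
    (hG : ∀ a : ι → K, (∀ j, ∑ i, a i * f ((D ^ (k - 1)) (z i)) (z j) = 0) → a = 0) :
    LinearIndependent K (fam D k z) := by
  rw [Fintype.linearIndependent_iff]
  intro a ha i
  have := free_key hδ hD aD hG a (fun v _ => by rw [ha]; simp)
  rw [this]; rfl

theorem freeP (p : ℕ) [CharP K p] [hp : Fact p.Prime] (hp2 : p ≠ 2) [FiniteDimensional K V]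
    (q : QS f) (hk : k ≠ 0) (hδ : δ ≠ 0) (hD : D ^ k = 0) (aD : Adj f D (δ • D))
    (hG : ∀ a : ι → K, (∀ j, ∑ i, a i * f ((D ^ (k - 1)) (z i)) (z j) = 0) → a = 0)
    (htop : famSpan D k z = ⊤) (π : ι → ι) (hπ : ∀ i, π (π i) = i) (s : ι → K)
    (hs : ∀ i, s i * s (π i) = 1) (η : K) (hη : η * η = 1)
    (hGs : ∀ i j, η ^ (k - 1) * s i * s j * f ((D ^ (k - 1)) (z (π i))) (z (π j)) =
      f ((D ^ (k - 1)) (z i)) (z j)) :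
    ∃ E0 E : Module.End K V, (∀ i, E0 (z i) = s i • z (π i)) ∧ E0 * D = η • (D * E0) ∧ Adj f E E ∧ E * E = 1 ∧
      E * D = η • (D * E) ∧
      ∀ (X : Module.End K V) (ξ ξ' η' : K), ξ ≠ 0 → η' * η' = 1 → Adj f X (ξ • X) →
        X * D = ξ' • (D * X) → (∀ i, E0 (X (z i)) = (η' * s i) • X (z (π i))) →
        E * X = η' • (X * E) := by
  let bs : Basis (ι × Fin k) K V := Basis.mk (free_li hδ hD aD hG) (by rw [← htop]; rfl)
  have hbs : ∀ x, bs x = fam D k z x := fun x => by simp [bs]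
  let E0 : Module.End K V := bs.constr K fun x => (η ^ (x.2 : ℕ) * s x.1) • (D ^ (x.2 : ℕ)) (z (π x.1))
  have hE0 : ∀ m i, E0 ((D ^ m) (z i)) = (η ^ m * s i) • (D ^ m) (z (π i)) := by
    intro m i
    by_cases h : m < k
    · have h1 : (D ^ m) (z i) = bs (i, ⟨m, h⟩) := by rw [hbs]; rfl
      rw [h1, Basis.constr_basis]
    · rw [pow_eq_zero_of_le (not_lt.mp h) hD]; simp
  have hE0D : E0 * D = η • (D * E0) := by
    apply bs.ext
    rintro ⟨i, m⟩
    rw [hbs]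
    simp only [fam, Module.End.mul_apply, LinearMap.smul_apply]
    rw [hE0, ← Module.End.mul_apply D, ← pow_succ', hE0, map_smul, smul_smul, pow_succ', pow_succ',
      Module.End.mul_apply, mul_assoc]
  have hDm : ∀ m, E0 * D ^ m = η ^ m • (D ^ m * E0) := by
    intro m
    induction m with
    | zero => simp
    | succ m ih =>
      rw [pow_succ, ← mul_assoc, ih, smul_mul_assoc, mul_assoc, hE0D, mul_smul_comm, smul_smul,
        mul_assoc, ← pow_succ]
  have hE02 : E0 * E0 = 1 := by
    apply bs.ext
    rintro ⟨i, m⟩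
    rw [hbs]
    simp only [fam, Module.End.mul_apply, Module.End.one_apply]
    rw [hE0, map_smul, hE0, smul_smul, hπ]
    have : η ^ (m : ℕ) * s i * (η ^ (m : ℕ) * s (π i)) = 1 := by
      calc _ = (η * η) ^ (m : ℕ) * (s i * s (π i)) := by rw [mul_pow]; ring
        _ = 1 := by rw [hη, hs]; simp
    rw [this, one_smul]
  have hmv : ∀ l (x y : V), f x ((D ^ l) y) = (δ⁻¹) ^ l * f ((D ^ l) x) y := by
    intro l x y
    have := aD.pow l x y
    rw [this, _root_.smul_pow, LinearMap.smul_apply, map_smul, smul_eq_mul, ← mul_assoc,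
      ← mul_pow, inv_mul_cancel₀ hδ, one_pow, one_mul]
  have hf : ∀ v w, f (E0 ((D ^ (k - 1)) v)) (E0 w) = f ((D ^ (k - 1)) v) w := by
    let F1 : LinearMap.BilinForm K V := f.compl₁₂ (E0 * D ^ (k - 1)) E0
    let F2 : LinearMap.BilinForm K V := f.compl₁₂ (D ^ (k - 1)) 1
    suffices F1 = F2 from fun v w => congrFun (congrArg DFunLike.coe (LinearMap.congr_fun this v)) w
    apply LinearMap.BilinForm.ext_basis bs
    rintro ⟨i, m⟩ ⟨j, l⟩
    rw [hbs, hbs]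
    simp only [fam, F1, F2, LinearMap.compl₁₂_apply, Module.End.mul_apply, Module.End.one_apply]
    rw [← Module.End.mul_apply (D ^ (k - 1)), ← pow_add, hE0, hE0]
    simp only [map_smul, LinearMap.smul_apply, smul_eq_mul]
    rw [hmv, hmv, ← Module.End.mul_apply, ← Module.End.mul_apply, ← pow_add]
    by_cases h : (m : ℕ) = 0 ∧ (l : ℕ) = 0
    · rw [h.1, h.2]
      simp only [pow_zero, one_mul, zero_add, add_zero]
      rw [← hGs i j]; ring
    · rw [pow_eq_zero_of_le (by omega) hD]; simp
  have hker : ∀ v, (D ^ (k - 1)) v = 0 → ∃ w, v = D w := by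
    intro v hv
    obtain ⟨a, ha⟩ := mem_famSpan (D := D) (k := k) (z := z) (v := v) (by rw [htop]; trivial)
    have h0 : ∀ i, a (i, ⟨0, by omega⟩) = 0 := by
      suffices (fun i => a (i, ⟨0, by omega⟩)) = 0 from fun i => congrFun this i
      apply hG
      intro j
      have h2 : f ((D ^ (k - 1)) v) (z j) = 0 := by rw [hv]; simp
      rw [ha, map_sum, map_sum, LinearMap.sum_apply, Fintype.sum_prod_type] at h2
      rw [← h2]
      refine Finset.sum_congr rfl fun i _ => ?_
      rw [Finset.sum_eq_single ⟨0, by omega⟩]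
      · simp [fam]
      · intro b _ hb
        have : (b : ℕ) ≠ 0 := fun h => hb (Fin.ext h)
        simp only [map_smul, LinearMap.smul_apply, smul_eq_mul, fam]
        rw [← Module.End.mul_apply, ← pow_add, pow_eq_zero_of_le (by omega) hD]
        simp
      · intro hh; exact absurd (Finset.mem_univ _) hh
    have : ∀ x : ι × Fin k, ∃ w, a x • fam D k z x = D w := by
      rintro ⟨i, m⟩
      by_cases hm : (m : ℕ) = 0
      · have : m = ⟨0, by omega⟩ := Fin.ext hm
        refine ⟨0, ?_⟩
        rw [this, h0]; simp
      · refine ⟨a (i, m) • (D ^ ((m : ℕ) - 1)) (z i), ?_⟩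
        rw [map_smul, ← Module.End.mul_apply, ← pow_succ']
        unfold fam
        congr 3; simp only; omega
    choose w hw using this
    refine ⟨∑ x, w x, ?_⟩
    rw [ha, map_sum]
    exact Finset.sum_congr rfl fun x _ => hw x
  obtain ⟨E, aE, hEE, hX⟩ := lemmaP p hp2 q hδ hη hD aD hE0D hE02 hf hker
  have hz : ∀ i, E0 (z i) = s i • z (π i) := fun i => by simpa using hE0 0 i
  refine ⟨E0, E, hz, hE0D, aE, hEE, hX D δ η hδ hη aD hE0D, ?_⟩
  intro X ξ ξ' η' hξ hη' aX hXD hXz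
  refine hX X ξ η' hξ hη' aX ?_
  have hXm : ∀ m, X * D ^ m = ξ' ^ m • (D ^ m * X) := by
    intro m
    induction m with
    | zero => simp
    | succ m ih =>
      rw [pow_succ, ← mul_assoc, ih, smul_mul_assoc, mul_assoc, hXD, mul_smul_comm, smul_smul,
        mul_assoc, ← pow_succ]
  apply bs.ext
  rintro ⟨i, m⟩
  rw [hbs]
  simp only [fam, Module.End.mul_apply, LinearMap.smul_apply]
  rw [hE0, map_smul, ← Module.End.mul_apply X, ← Module.End.mul_apply X, hXm]
  simp only [LinearMap.smul_apply, map_smul, Module.End.mul_apply]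
  rw [← Module.End.mul_apply E0, hDm]
  simp only [LinearMap.smul_apply, map_smul, Module.End.mul_apply]
  rw [hXz]
  simp only [map_smul, smul_smul]
  congr 1; ring
end free
end Biref
namespace Biref
universe u v
variable {K : Type u} [Field K] {V A B : Type v} [AddCommGroup V] [Module K V]

lemma two_ne (p : ℕ) [CharP K p] [hp : Fact p.Prime] (hp2 : p ≠ 2) : (2 : K) ≠ 0 := by
  intro h
  have : ((2 : ℕ) : K) = 0 := by exact_mod_cast h
  rw [CharP.cast_eq_zero_iff K p] at this
  exact hp2 ((Nat.prime_dvd_prime_iff_eq hp.out Nat.prime_two).mp this)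

theorem lemmaM [FiniteDimensional K V] [Nontrivial V] (c : Module.End K V)
    (hloc : ∀ g : K[X], IsNilpotent (aeval c g : Module.End K V) ∨ IsUnit (aeval c g : Module.End K V)) :
    ∃ Z : K[X], aeval c Z ≠ 0 ∧ ∀ g : K[X], aeval c g ≠ 0 → ∃ h : K[X], aeval c (h * g) = aeval c Z := by
  have hint : IsIntegral K c := Algebra.IsIntegral.isIntegral c
  have hdeg : ¬ IsUnit (minpoly K c) := minpoly.not_isUnit K c
  obtain ⟨P, hP, r, hr⟩ := WfDvdMonoid.exists_irreducible_factor hdeg (minpoly.ne_zero hint)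
  have hnil : IsNilpotent (aeval c P) := by
    refine (hloc P).resolve_right fun hu => ?_
    have h0 : aeval c P * aeval c r = 0 := by rw [← map_mul, ← hr, minpoly.aeval]
    have h1 : aeval c r = 0 := hu.mul_right_eq_zero.mp h0
    have h2 : minpoly K c ∣ r := minpoly.dvd K c h1
    have h3 : r ≠ 0 := by rintro rfl; rw [mul_zero] at hr; exact minpoly.ne_zero hint hr
    obtain ⟨t, ht⟩ := h2
    have h4 : r * (P * t - 1) = 0 := by
      calc r * (P * t - 1) = P * r * t - r := by ring
        _ = 0 := by rw [← hr, ← ht, sub_self]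
    have h5 : P * t = 1 := by
      have := (mul_eq_zero.mp h4).resolve_left h3
      linear_combination this
    exact hP.not_isUnit (IsUnit.of_mul_eq_one _ h5)
  classical
  obtain ⟨hk, hk'⟩ : aeval c P ^ nilpotencyClass (aeval c P) = 0 ∧
      aeval c P ^ (nilpotencyClass (aeval c P) - 1) ≠ 0 :=
    ⟨pow_nilpotencyClass hnil, pow_pred_nilpotencyClass hnil⟩
  set k := nilpotencyClass (aeval c P)
  refine ⟨P ^ (k - 1), by simpa using hk', fun g hg => ?_⟩
  have hg0 : g ≠ 0 := by rintro rfl; simp at hg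
  obtain ⟨j, g', hg', rfl⟩ := WfDvdMonoid.max_power_factor hg0 hP
  have hj : j < k := by
    by_contra h
    apply hg
    rw [map_mul, map_pow, pow_eq_zero_of_le (not_lt.mp h) hk, zero_mul]
  have hco : IsCoprime (P ^ k) g' := ((hP.coprime_iff_not_dvd).mpr hg').pow_left
  obtain ⟨a, b, hab⟩ := hco
  refine ⟨b * P ^ (k - 1 - j), ?_⟩
  have h1 : aeval c b * aeval c g' = 1 := by
    have := congrArg (aeval c) hab
    simpa [hk] using this
  have h2 : b * P ^ (k - 1 - j) * (P ^ j * g') = P ^ (k - 1) * (b * g') := by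
    have : P ^ (k - 1) = P ^ (k - 1 - j) * P ^ j := by rw [← pow_add]; congr 1; omega
    rw [this]; ring
  rw [h2, map_mul, map_mul, h1, mul_one]

structure Inv (f : LinearMap.BilinForm K V) (c N b : Module.End K V) : Prop where
  adj : Adj f b b
  sq : b * b = 1
  bc : b * c = c * b
  bN : b * N = -(N * b)

lemma polar (h2 : (2 : K) ≠ 0) {f : LinearMap.BilinForm K V} (q : QS f) {Z : Module.End K V}
    (a : Adj f Z Z) (hZ : Z ≠ 0) : ∃ x, f (Z x) x ≠ 0 := by
  by_contra h
  push Not at h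
  apply hZ
  ext x
  apply q.nd
  intro y
  have h1 := h (x + y)
  simp only [map_add, LinearMap.add_apply, h, zero_add, add_zero] at h1
  have h3 : f (Z y) x = f (Z x) y := by rw [a, q.symm]
  rw [h3, ← two_mul] at h1
  exact (mul_eq_zero.mp h1).resolve_left h2

lemma isoLift {M : Type*} [AddCommGroup M] [Module K M] {f : LinearMap.BilinForm K V} (q : QS f)
    (P Q : M →ₗ[K] V) (hP : Function.Surjective P) (hQ : Function.Surjective Q)
    (h : ∀ m m', f (Q m) (Q m') = f (P m) (P m')) :
    ∃ b : Module.End K V, (∀ m, b (P m) = Q m) ∧ ∀ x y, f (b x) (b y) = f x y := by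
  obtain ⟨g, hg⟩ := LinearMap.exists_rightInverse_of_surjective P (LinearMap.range_eq_top.mpr hP)
  have hb : ∀ m, (Q ∘ₗ g) (P m) = Q m := by
    intro m
    rw [LinearMap.comp_apply, ← sub_eq_zero, ← map_sub]
    apply q.nd
    intro y
    obtain ⟨m', rfl⟩ := hQ y
    rw [h, map_sub]
    have : P (g (P m)) = P m := LinearMap.congr_fun hg (P m)
    rw [this, sub_self]; simp
  refine ⟨Q ∘ₗ g, hb, fun x y => ?_⟩
  obtain ⟨m, rfl⟩ := hP x
  obtain ⟨m', rfl⟩ := hP y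
  rw [hb, hb, h]

/-- the evaluation map for the cyclic lemma -/
noncomputable def cycP (c N : Module.End K V) (x : V) : (K[X] × K[X]) →ₗ[K] V :=
  LinearMap.coprod ((LinearMap.applyₗ x) ∘ₗ (aeval c : K[X] →ₐ[K] Module.End K V).toLinearMap)
    ((LinearMap.applyₗ (N x)) ∘ₗ (aeval c : K[X] →ₐ[K] Module.End K V).toLinearMap)

lemma cycP_apply (c N : Module.End K V) (x : V) (a b : K[X]) :
    cycP c N x (a, b) = aeval c a x + aeval c b (N x) := by
  rfl

section cyc
variable {f : LinearMap.BilinForm K V} {c N : Module.End K V}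

lemma commN (hcn : c * N = N * c) (g : K[X]) : aeval c g * N = N * aeval c g := by
  induction g using Polynomial.induction_on' with
  | add p q hp hq => rw [map_add, add_mul, mul_add, hp, hq]
  | monomial n a =>
    have : Commute (c ^ n) N := Commute.pow_left hcn n
    simp only [aeval_monomial, ← Algebra.smul_def]
    rw [smul_mul_assoc, mul_smul_comm, this.eq]

lemma skew0 (h2 : (2 : K) ≠ 0) (q : QS f) (aN : Adj f N (-N)) (x : V) : f (N x) x = 0 := by
  have := aN x x
  rw [LinearMap.neg_apply, map_neg, q.symm x] at this
  have h : 2 * f (N x) x = 0 := by linear_combination this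
  exact (mul_eq_zero.mp h).resolve_left h2

lemma cyc_form (h2 : (2 : K) ≠ 0) (q : QS f) (ac : Adj f c c) (aN : Adj f N (-N))
    (hcn : c * N = N * c) (x : V) (a b a' b' : K[X]) :
    f (cycP c N x (a, b)) (cycP c N x (a', b')) =
      f (aeval c (a' * a) x) x - f (aeval c (b' * b) ((N * N) x)) x := by
  have sk : ∀ g : K[X], f (aeval c g (N x)) x = 0 := by
    intro g
    have : Adj f (aeval c g * N) (-(aeval c g * N)) := by
      have := (ac.aeval g).mul aN
      rwa [neg_mul, ← commN hcn] at this
    exact skew0 h2 q this x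
  simp only [cycP_apply, map_add, LinearMap.add_apply]
  have mv : ∀ (g : K[X]) (u w : V), f u (aeval c g w) = f (aeval c g u) w := fun g u w =>
    ((ac.aeval g) u w).symm
  have mvN : ∀ (u w : V), f u (N w) = - f (N u) w := fun u w => by
    rw [aN u w]; simp
  have mm : ∀ (g g' : K[X]) (w : V), aeval c g (aeval c g' w) = aeval c (g * g') w := by
    intro g g' w; rw [map_mul]; rfl
  have cm : ∀ (g : K[X]) (w : V), N (aeval c g w) = aeval c g (N w) := fun g w => by
    rw [← Module.End.mul_apply, ← commN hcn]; rfl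
  rw [mv, mv, mv, mv, mvN, mvN, mm, mm, mm, mm, cm, cm, sk, sk]
  simp only [Module.End.mul_apply]
  ring

theorem cyc_nd (h2 : (2 : K) ≠ 0) (q : QS f) (ac : Adj f c c) (aN : Adj f N (-N))
    (hcn : c * N = N * c) (n2 : N * N = c * c - (4 : K) • 1) (hN : IsUnit N)
    {s0 : Module.End K V} {x : V} (hx : f (s0 x) x ≠ 0)
    (hs0 : ∀ g : K[X], aeval c g ≠ 0 → ∃ h, aeval c (h * g) = s0) :
    NdOn f (LinearMap.range (cycP c N x)) := by
  rintro y ⟨⟨a, b⟩, rfl⟩ hy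
  have ha : aeval c a = 0 := by
    by_contra h
    obtain ⟨t, ht⟩ := hs0 a h
    have := hy _ ⟨(t, 0), rfl⟩
    rw [cyc_form h2 q ac aN hcn, ht] at this
    simp at this
    exact hx this
  have hN2 : N * N = aeval c (X * X - C 4 : K[X]) := by
    rw [n2]; simp [Algebra.smul_def]
  have hb' : aeval c (b * (X * X - C 4)) = 0 := by
    by_contra h
    obtain ⟨t, ht⟩ := hs0 _ h
    have := hy _ ⟨(0, t), rfl⟩
    rw [cyc_form h2 q ac aN hcn, ← Module.End.mul_apply, hN2, ← map_mul, mul_assoc, ht] at this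
    simp at this
    exact hx this
  have hb : aeval c b = 0 := by
    rw [map_mul, ← hN2] at hb'
    exact (hN.mul hN).mul_left_eq_zero.mp hb'
  rw [cycP_apply, ha, hb]; simp

lemma cyc_c (x : V) : ∀ v ∈ LinearMap.range (cycP c N x), c v ∈ LinearMap.range (cycP c N x) := by
  rintro y ⟨⟨a, b⟩, rfl⟩
  refine ⟨(X * a, X * b), ?_⟩
  simp [cycP_apply]

lemma cyc_N (hcn : c * N = N * c) (n2 : N * N = c * c - (4 : K) • 1) (x : V) (a b : K[X]) :
    N (cycP c N x (a, b)) = cycP c N x (b * (X * X - C 4), a) := by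
  have hN2 : N * N = aeval c (X * X - C 4 : K[X]) := by
    rw [n2]; simp [Algebra.smul_def]
  have cm : ∀ (g : K[X]) (w : V), N (aeval c g w) = aeval c g (N w) := fun g w => by
    rw [← Module.End.mul_apply, ← commN hcn]; rfl
  rw [cycP_apply, map_add, cm, cm, cycP_apply, map_mul, ← hN2, add_comm]; rfl

theorem cyc_flip [FiniteDimensional K V] (h2 : (2 : K) ≠ 0) (q : QS f) (ac : Adj f c c)
    (aN : Adj f N (-N)) (hcn : c * N = N * c) (n2 : N * N = c * c - (4 : K) • 1) {x : V}
    (htop : LinearMap.range (cycP c N x) = ⊤) :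
    ∃ b, Inv f c N b ∧ ∀ a a', b (cycP c N x (a, a')) = cycP c N x (a, -a') := by
  have hP : Function.Surjective (cycP c N x) := LinearMap.range_eq_top.mp htop
  let Q : (K[X] × K[X]) →ₗ[K] V := cycP c N x ∘ₗ LinearMap.prodMap LinearMap.id (-LinearMap.id)
  have hQa : ∀ a a', Q (a, a') = cycP c N x (a, -a') := fun a a' => rfl
  have hQ : Function.Surjective Q := by
    intro y
    obtain ⟨⟨a, b⟩, rfl⟩ := hP y
    exact ⟨(a, -b), by rw [hQa, neg_neg]⟩
  obtain ⟨b, hb, hiso⟩ := isoLift q (cycP c N x) Q hP hQ (by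
    rintro ⟨a, b⟩ ⟨a', b'⟩
    rw [hQa, hQa, cyc_form h2 q ac aN hcn, cyc_form h2 q ac aN hcn, neg_mul_neg])
  have hbb : b * b = 1 := by
    ext y
    obtain ⟨⟨a, a'⟩, rfl⟩ := hP y
    rw [Module.End.mul_apply, hb, hQa, hb, hQa, neg_neg]; rfl
  refine ⟨b, ⟨?_, hbb, ?_, ?_⟩, fun a a' => by rw [hb, hQa]⟩
  · intro u w
    rw [← hiso, ← Module.End.mul_apply, hbb]; rfl
  · ext y
    obtain ⟨⟨a, a'⟩, rfl⟩ := hP y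
    have hc : ∀ a a', c (cycP c N x (a, a')) = cycP c N x (X * a, X * a') := by
      intro a a'; simp [cycP_apply]
    rw [Module.End.mul_apply, Module.End.mul_apply, hc, hb, hb, hQa, hQa, hc, mul_neg]
  · ext y
    obtain ⟨⟨a, a'⟩, rfl⟩ := hP y
    rw [LinearMap.neg_apply, Module.End.mul_apply, Module.End.mul_apply, cyc_N hcn n2, hb, hb,
      hQa, hQa, cyc_N hcn n2, ← map_neg]
    simp
end cyc

lemma c_poly (p : ℕ) [CharP K p] [hp : Fact p.Prime] (hp2 : p ≠ 2) {c N : Module.End K V} {ε : K}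
    (hε : ε * ε = 1) (n2 : N * N = c * c - (4 : K) • 1)
    (hn : IsNilpotent (c - (2 * ε) • 1)) : ∃ g : K[X], c = aeval (N * N) g := by
  have h2 := two_ne (K := K) p hp2
  have h2e : 2 * ε ≠ 0 := mul_ne_zero h2 (by rintro rfl; simp at hε)
  set w := (2 * ε)⁻¹ • c with hw
  have hc : c = (2 * ε) • w := by rw [hw, smul_smul, mul_inv_cancel₀ h2e, one_smul]
  have hw1 : IsNilpotent (w - 1) := by
    have : w - 1 = (2 * ε)⁻¹ • (c - (2 * ε) • 1) := by
      rw [smul_sub, smul_smul, inv_mul_cancel₀ h2e, one_smul]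
    rw [this]; exact hn.smul _
  obtain ⟨a, ha⟩ := unip' (K := K) p hw1
  have ha := ha a le_rfl
  obtain ⟨m, hm⟩ := (hp.out.odd_of_ne_two hp2).pow (n := a)
  have hww : w * w = (4 : K)⁻¹ • (N * N) + 1 := by
    have h4 : (4 : K) = (2 * ε) * (2 * ε) := by linear_combination (-4 : K) * hε
    have h40 : (4 : K) ≠ 0 := by rw [h4]; exact mul_ne_zero h2e h2e
    rw [n2, smul_sub, smul_smul, inv_mul_cancel₀ h40, one_smul, sub_add_cancel, hw,
      smul_mul_smul_comm, h4, mul_inv (2 * ε) (2 * ε)]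
  have hw' : w = (w * w) ^ (m + 1) := by
    calc w = w ^ (p ^ a) * w := by rw [ha, one_mul]
      _ = _ := by rw [hm, ← pow_two, ← pow_mul, ← pow_succ]; congr 1
  refine ⟨C (2 * ε) * (C (4 : K)⁻¹ * X + 1) ^ (m + 1), ?_⟩
  rw [hc]
  conv_lhs => rw [hw', hww]
  simp only [map_mul, map_pow, map_add, aeval_C, aeval_X, map_one, Algebra.smul_def]

lemma commute_aeval {c E : Module.End K V} (h : E * c = c * E) (g : K[X]) :
    E * aeval c g = aeval c g * E := by
  exact (commN h.symm g).symm

lemma inv_aeval {c : Module.End K V} {U : Submodule K V} (h : ∀ x ∈ U, c x ∈ U) (g : K[X]) :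
    ∀ x ∈ U, aeval c g x ∈ U := by
  have hp : ∀ n : ℕ, ∀ x ∈ U, (c ^ n) x ∈ U := by
    intro n
    induction n with
    | zero => intro x hx; simpa using hx
    | succ n ih => intro x hx; rw [pow_succ', Module.End.mul_apply]; exact h _ (ih x hx)
  intro x hx
  induction g using Polynomial.induction_on' with
  | add p q hp hq => rw [map_add]; exact add_mem hp hq
  | monomial n a =>
    simp only [aeval_monomial, ← Algebra.smul_def]
    exact U.smul_mem _ (hp n x hx)

lemma semi_sq {E N : Module.End K V} {η : K} (hη : η * η = 1) (h : E * N = η • (N * E)) :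
    E * (N * N) = (N * N) * E := by
  rw [← mul_assoc, h, smul_mul_assoc, mul_assoc, h, mul_smul_comm, smul_smul, hη, one_smul,
    mul_assoc]

lemma nilp_index {N : Module.End K V} [Nontrivial V] (h : IsNilpotent N) :
    ∃ k, k ≠ 0 ∧ N ^ k = 0 ∧ N ^ (k - 1) ≠ 0 := by
  refine ⟨nilpotencyClass N, ?_, pow_nilpotencyClass h, pow_pred_nilpotencyClass h⟩
  intro h0
  have := pow_nilpotencyClass h
  rw [h0, pow_zero] at this
  exact one_ne_zero this

lemma n_cases [FiniteDimensional K V] [Nontrivial V] {f : LinearMap.BilinForm K V}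
    {c N s : Module.End K V} {e1 e2 e3 : K}
    (S : Sys f c N s e1 e2 e3) (he1 : e1 = 1) (he2 : e2 * e2 = 1) (hI : Indec f c N s) :
    IsUnit N ∨ (IsNilpotent N ∧ ∃ ε : K, ε * ε = 1 ∧ IsNilpotent (c - (2 * ε) • 1)) := by
  have aNN : Adj f (N * N) ((1 : K) • (N * N)) := by
    have := S.nn.mul S.nn; rw [one_smul]; rwa [neg_mul_neg] at this
  have hsNN : s * (N * N) = (N * N) * s := semi_sq he2 S.sn
  rcases fit (a1 := 1) (a2 := 1) (a3 := 1) S.q hI aNN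
    (by rw [one_smul, ← mul_assoc c, S.cn, mul_assoc N c, S.cn, mul_assoc]) (by simp [mul_assoc])
    (by rw [one_smul, hsNN]) with h | h
  · right
    have hN : IsNilpotent N := by
      obtain ⟨k, hk⟩ := h; exact ⟨2 * k, by rw [pow_mul, pow_two, hk]⟩
    refine ⟨hN, ?_⟩
    have hm : (c - (2 : K) • 1) * (c + (2 : K) • 1) = N * N := by
      rw [S.n2]; simp only [sub_mul, mul_add, smul_mul_assoc, one_mul, mul_smul_comm, mul_one, smul_smul]
      module
    have hsc : s * c = c * s := by rw [S.sc, he1, one_smul]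
    rcases fit (t := c - (2 : K) • 1) (a1 := 1) (a2 := 1) (a3 := 1) (δ := 1) S.q hI
      (by rw [one_smul]; exact S.cc.sub (Adj.one.smul _))
      (by simp [sub_mul, mul_sub]) (by simp [sub_mul, mul_sub, S.cn])
      (by simp [sub_mul, mul_sub, hsc]) with h' | h'
    · exact ⟨1, by ring, by simpa using h'⟩
    · refine ⟨-1, by ring, ?_⟩
      have hc : Commute (c - (2 : K) • (1 : Module.End K V)) (c + (2 : K) • 1) := by
        simp only [Commute, SemiconjBy, sub_mul, mul_sub, add_mul, mul_add, smul_mul_assoc, one_mul, mul_smul_comm, mul_one]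
        module
      rw [← hm] at h
      have : c - (2 * (-1 : K)) • (1 : Module.End K V) = c + (2 : K) • 1 := by
        rw [mul_neg, mul_one, neg_smul, sub_neg_eq_add]
      rw [this]
      obtain ⟨k, hk⟩ := h
      rw [hc.mul_pow] at hk
      exact ⟨k, (h'.pow k).mul_right_eq_zero.mp hk⟩
  · left
    have hinj : LinearMap.ker N = ⊥ := by
      rw [LinearMap.isUnit_iff_ker_eq_bot] at h
      rw [eq_bot_iff]
      intro x hx
      rw [← h, LinearMap.mem_ker, Module.End.mul_apply, LinearMap.mem_ker.mp hx, map_zero]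
    exact (LinearMap.isUnit_iff_ker_eq_bot _).mpr hinj

lemma loc_of_indec [FiniteDimensional K V] {f : LinearMap.BilinForm K V}
    {c N s : Module.End K V} {e1 e2 e3 : K}
    (S : Sys f c N s e1 e2 e3) (he1 : e1 = 1) (hI : Indec f c N s) (g : K[X]) :
    IsNilpotent (aeval c g) ∨ IsUnit (aeval c g) := by
  have hsc : s * c = c * s := by rw [S.sc, he1, one_smul]
  exact fit (a1 := 1) (a2 := 1) (a3 := 1) (δ := 1) S.q hI
    (by rw [one_smul]; exact S.cc.aeval g)
    (by rw [one_smul]; exact (commute_aeval rfl g).symm) (by rw [one_smul]; exact commN S.cn g)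
    (by rw [one_smul]; exact (commute_aeval hsc g).symm)

theorem lemmaW (p : ℕ) [CharP K p] [hp : Fact p.Prime] (hp2 : p ≠ 2) [FiniteDimensional K V]
    {f : LinearMap.BilinForm K V} {c N : Module.End K V} (S : Sys f c N 1 1 1 1) :
    ∃ b, Inv f c N b := by
  have h2 := two_ne (K := K) p hp2
  refine ind (e1 := 1) (e2 := 1) (e3 := 1) (fun V _ _ f c N s => s = 1 → ∃ b, Inv f c N b)
    ?_ ?_ ?_ _ V f c N 1 rfl S rfl
  · intro V A B _ _ _ _ _ _ _ _ _ f fA fB D cA NA sA cB NB sB _ SA SB hA hB hs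
    rw [← D.glue_one] at hs
    obtain ⟨h1, h2⟩ := D.glue_inj hs
    obtain ⟨b, hb⟩ := hA h1
    obtain ⟨b', hb'⟩ := hB h2
    refine ⟨D.glue b b', D.glue_adj hb.adj hb'.adj, ?_, ?_, ?_⟩
    · rw [D.glue_mul, hb.sq, hb'.sq, D.glue_one]
    · rw [D.glue_mul, hb.bc, hb'.bc, D.glue_mul]
    · rw [D.glue_mul, hb.bN, hb'.bN, D.glue_mul, D.glue_neg]
  · intro V _ _ f c N s hV S hs
    exact ⟨1, Adj.one, one_mul 1, by simp, by ext x; exact Subsingleton.elim _ _⟩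
  · intro V _ _ _ _ f c N s S hI hs
    subst hs
    rcases n_cases S rfl (by ring) hI with hN | ⟨hN, ε, hε, hcε⟩
    · obtain ⟨Z, hZ, hZ'⟩ := lemmaM c (loc_of_indec S rfl hI)
      obtain ⟨x, hx⟩ := polar h2 S.q (S.cc.aeval Z) hZ
      have hnd := cyc_nd h2 S.q S.cc S.nn S.cn S.n2 hN hx hZ'
      rcases hI _ (cyc_c x) (by
        rintro v ⟨⟨a, b⟩, rfl⟩
        exact ⟨_, (cyc_N S.cn S.n2 x a b).symm⟩) (fun x hx => hx) hnd with h | h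
      · exfalso
        have h1 : cycP c N x (1, 0) ∈ LinearMap.range (cycP c N x) := ⟨_, rfl⟩
        rw [h, Submodule.mem_bot, cycP_apply] at h1
        simp at h1
        rw [h1] at hx
        simp at hx
      · obtain ⟨b, hb, -⟩ := cyc_flip h2 S.q S.cc S.nn S.cn S.n2 h
        exact ⟨b, hb⟩
    · obtain ⟨k, hk0, hk, hk'⟩ := nilp_index hN
      obtain ⟨g, hg⟩ := c_poly p hp2 hε S.n2 hcε
      have aN : Adj f N ((-1 : K) • N) := by simpa using S.nn
      have fin : ∀ (ι : Type) [Fintype ι] [DecidableEq ι] (z : ι → V) (s : ι → K),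
          (∀ a : ι → K, (∀ j, ∑ i, a i * f ((N ^ (k - 1)) (z i)) (z j) = 0) → a = 0) →
          (∃ i, z i ≠ 0) → (∀ i, s i * s i = 1) →
          (∀ i j, (-1) ^ (k - 1) * s i * s j * f ((N ^ (k - 1)) (z i)) (z j) =
            f ((N ^ (k - 1)) (z i)) (z j)) → ∃ b, Inv f c N b := by
        intro ι _ _ z s hG hz hs hGs
        have hnd := free_nd (neg_ne_zero.mpr one_ne_zero) hk aN hG
        have hinvN := famSpan_inv (z := z) hk (X := N) (a := 1) (by simp) fun i => by
          simpa using fam_mem (z := z) hk 1 i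
        have hinvc : ∀ x ∈ famSpan N k z, c x ∈ famSpan N k z := by
          rw [hg]; exact inv_aeval (fun x hx => hinvN (N x) (hinvN x hx)) g
        rcases hI _ hinvc hinvN (fun x hx => hx) hnd with h | h
        · obtain ⟨i, hi⟩ := hz
          have := fam_mem (z := z) hk 0 i
          rw [h, Submodule.mem_bot] at this
          exact absurd this hi
        · obtain ⟨E0, E, _, _, aE, hEE, hEN, -⟩ := freeP p hp2 S.q hk0 (neg_ne_zero.mpr one_ne_zero) hk
            aN hG h id (fun _ => rfl) s hs (-1) (by ring) hGs
          refine ⟨E, aE, hEE, ?_, by simpa using hEN⟩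
          rw [hg]
          exact commute_aeval (semi_sq (by ring) hEN) g
      rcases Nat.even_or_odd (k - 1) with he | ho
      · have aP : Adj f (N ^ (k - 1)) (N ^ (k - 1)) := by
          have := S.nn.pow (k - 1); rwa [he.neg_pow] at this
        obtain ⟨x, hx⟩ := polar h2 S.q aP hk'
        refine fin (Fin 1) (fun _ => x) (fun _ => 1) ?_ ⟨0, ?_⟩ (fun _ => by ring) ?_
        · intro a ha
          have := ha 0
          simp at this
          ext i
          have hi : i = 0 := Subsingleton.elim _ _
          rw [hi]
          exact this.resolve_right hx
        · rintro h
          rw [h] at hx; simp at hx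
        · intro i j; rw [he.neg_one_pow]; ring
      · have aP : Adj f (N ^ (k - 1)) (-(N ^ (k - 1))) := by
          have := S.nn.pow (k - 1); rwa [ho.neg_pow] at this
        obtain ⟨x, hx⟩ : ∃ x, (N ^ (k - 1)) x ≠ 0 := by
          by_contra h; push Not at h; exact hk' (LinearMap.ext h)
        obtain ⟨y, hy⟩ : ∃ y, f ((N ^ (k - 1)) x) y ≠ 0 := by
          by_contra h; push Not at h; exact hx (S.q.nd _ h)
        have hxx := skew0 h2 S.q aP x
        have hyy := skew0 h2 S.q aP y
        have hyx : f ((N ^ (k - 1)) y) x = - f ((N ^ (k - 1)) x) y := by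
          rw [aP, S.q.symm]; simp
        refine fin (Fin 2) ![x, y] ![1, -1] ?_ ⟨0, ?_⟩ ?_ ?_
        · intro a ha
          have h0 := ha 0
          have h1 := ha 1
          simp [Fin.sum_univ_two, hxx, hyy, hyx, hy] at h0 h1
          ext i
          fin_cases i
          · exact h1
          · exact h0
        · rintro h
          simp at h
          rw [h] at hx; simp at hx
        · intro i; fin_cases i <;> simp
        · intro i j; rw [ho.neg_one_pow]
          fin_cases i <;> fin_cases j <;> simp [hxx, hyy]
end Biref
namespace Biref
universe u v
variable {K : Type u} [Field K] {V A B : Type v} [AddCommGroup V] [Module K V]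

section
variable {f : LinearMap.BilinForm K V} {c N s e : Module.End K V}

lemma isCompl_inv (h2 : (2 : K) ≠ 0) (he : e * e = 1) :
    IsCompl (LinearMap.ker (e - 1)) (LinearMap.ker (e + 1)) := by
  rw [isCompl_iff, disjoint_iff, codisjoint_iff]
  have hee : ∀ x, e (e x) = x := fun x => by rw [← Module.End.mul_apply, he]; rfl
  constructor
  · rw [eq_bot_iff]
    rintro x ⟨h1, h3⟩
    simp only [SetLike.mem_coe, LinearMap.mem_ker, LinearMap.sub_apply, LinearMap.add_apply,
      Module.End.one_apply] at h1 h3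
    have : (2 : K) • x = 0 := by
      have : (2 : K) • x = (e x + x) - (e x - x) := by module
      rw [this, h1, h3, sub_zero]
    exact (smul_eq_zero.mp this).resolve_left h2
  · rw [eq_top_iff]
    intro x _
    rw [Submodule.mem_sup]
    refine ⟨(2 : K)⁻¹ • (x + e x), ?_, (2 : K)⁻¹ • (x - e x), ?_, ?_⟩
    · simp only [LinearMap.mem_ker, LinearMap.sub_apply, Module.End.one_apply, map_smul, map_add, hee]
      module
    · simp only [LinearMap.mem_ker, LinearMap.add_apply, Module.End.one_apply, map_smul, map_sub, hee]
      module
    · have : (2 : K)⁻¹ • (x + e x) + (2 : K)⁻¹ • (x - e x) = ((2 : K)⁻¹ * 2) • x := by module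
      rw [this, inv_mul_cancel₀ h2, one_smul]

noncomputable def decInv (h2 : (2 : K) ≠ 0) (q : QS f) (ae : Adj f e e) (he : e * e = 1) :
    Dec f (f.restrict (LinearMap.ker (e - 1))) (f.restrict (LinearMap.ker (e + 1))) :=
  decCompl q _ _ (isCompl_inv h2 he) (by
    intro u hu w hw
    have h1 : e u = u := by simpa [sub_eq_zero] using hu
    have h3 : e w = -w := by
      have : e w + w = 0 := by simpa using hw
      exact eq_neg_of_add_eq_zero_left this
    have := ae u w
    rw [h1, h3, map_neg] at this
    have h : 2 * f u w = 0 := by linear_combination this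
    exact (mul_eq_zero.mp h).resolve_left h2)

lemma decInv_e (h2 : (2 : K) ≠ 0) (q : QS f) (ae : Adj f e e) (he : e * e = 1) :
    e = (decInv h2 q ae he).glue 1 (-1) := by
  set D := decInv h2 q ae he
  ext v
  rw [D.glue_apply]
  have h1 : ∀ a, e (D.i a) = D.i a := fun a => by
    have : e (D.i a) - D.i a = 0 := LinearMap.mem_ker.mp a.2
    exact sub_eq_zero.mp this
  have h3 : ∀ a, e (D.j a) = - D.j a := fun a => by
    have : e (D.j a) + D.j a = 0 := LinearMap.mem_ker.mp a.2
    exact eq_neg_of_add_eq_zero_left this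
  conv_lhs => rw [← D.sum v]
  rw [map_add, h1, h3]; simp

lemma decInv_stab (h2 : (2 : K) ≠ 0) (q : QS f) (ae : Adj f e e) (he : e * e = 1)
    {X : Module.End K V} (hX : X * e = e * X) : (decInv h2 q ae he).Stab X := by
  apply decCompl_stab
  · intro x hx
    rw [LinearMap.mem_ker, ← Module.End.mul_apply, sub_mul, ← hX, one_mul] at *
    have : (X * e - X) x = X ((e - 1) x) := by simp
    rw [this, hx, map_zero]
  · intro x hx
    rw [LinearMap.mem_ker, ← Module.End.mul_apply, add_mul, ← hX, one_mul] at *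
    have : (X * e + X) x = X ((e + 1) x) := by simp
    rw [this, hx, map_zero]

lemma Sys.one {e1 e2 e3 : K} (S : Sys f c N s e1 e2 e3) : Sys f c N 1 1 1 1 :=
  ⟨S.q, S.cc, S.nn, by rw [one_smul]; exact Adj.one, S.cn, S.n2, by simp, by simp, by simp⟩

section gen
variable [AddCommGroup A] [Module K A] [AddCommGroup B] [Module K B]
  {fA : LinearMap.BilinForm K A} {fB : LinearMap.BilinForm K B}

lemma Dec.Stab.ex {D : Dec f fA fB} {X : Module.End K V} (h : D.Stab X) :
    ∃ (gA : Module.End K A) (gB : Module.End K B), X = D.glue gA gB := ⟨_, _, h⟩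

lemma Dec.flip_sq (D : Dec f fA fB) : D.glue 1 (-1) * D.glue 1 (-1) = 1 := by
  rw [D.glue_mul, neg_mul_neg, one_mul, one_mul, D.glue_one]

lemma Dec.flip_comm (D : Dec f fA fB) {X : Module.End K V} (h : D.Stab X) :
    X * D.glue 1 (-1) = D.glue 1 (-1) * X := by
  obtain ⟨a, b, rfl⟩ := h.ex
  rw [D.glue_mul, D.glue_mul, mul_neg, neg_mul, mul_one, mul_one, one_mul, one_mul]

lemma relW_gen (p : ℕ) [CharP K p] [hp : Fact p.Prime] (hp2 : p ≠ 2) [FiniteDimensional K A]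
    (D : Dec f fA fB) (S : Sys f c N 1 1 1 1) (sc : D.Stab c) (sN : D.Stab N)
    (hD : e = D.glue 1 (-1)) : ∃ r, Adj f r r ∧ r * r = 1 ∧ r * e = e * r ∧ r * c = c * r ∧
      r * N = -(e * N * r) ∧ e * r = r + e - 1 := by
  obtain ⟨cA, cB, sc⟩ := sc.ex
  obtain ⟨NA, NB, sN⟩ := sN.ex
  rw [sc, sN, ← D.glue_one] at S
  obtain ⟨SA, SB⟩ := Sys.left D S
  obtain ⟨b, hb⟩ := lemmaW p hp2 SA
  refine ⟨D.glue b 1, D.glue_adj hb.adj Adj.one, ?_, ?_, ?_, ?_, ?_⟩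
  · rw [D.glue_mul, hb.sq, one_mul, D.glue_one]
  · rw [hD, D.glue_mul, D.glue_mul]; simp
  · rw [sc, D.glue_mul, D.glue_mul, hb.bc]; simp
  · rw [sN, hD]
    simp only [D.glue_mul, D.glue_neg]
    congr 1
    · simp [hb.bN]
    · simp
  · rw [sub_eq_add_neg, ← D.glue_one, D.glue_neg, hD, D.glue_mul, D.glue_add, D.glue_add]
    congr 1 <;> simp

lemma lemmaC_gen (p : ℕ) [CharP K p] [hp : Fact p.Prime] (hp2 : p ≠ 2) [FiniteDimensional K B]
    (q : QS f) (D : Dec f fA fB) {b J : Module.End K V} (hD : b = D.glue 1 (-1))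
    (sJ : D.Stab J) (aJ : Adj f J (-J)) (hJ : J * J = -1) : Om f b := by
  have h2 := two_ne (K := K) p hp2
  obtain ⟨JA, JB, sJ⟩ := sJ.ex
  have aJB : Adj fB JB (-JB) := by
    rw [sJ, D.glue_neg] at aJ
    exact D.adjB aJ
  have hJB : JB * JB = -1 := by
    rw [sJ, D.glue_mul, ← D.glue_one, D.glue_neg] at hJ
    exact (D.glue_inj hJ).2
  have S : Sys fB 0 ((2 : K) • JB) 1 1 1 1 := by
    refine ⟨D.qsB q, Adj.zero, ?_, by rw [one_smul]; exact Adj.one, by simp, ?_, by simp, by simp,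
      by simp⟩
    · have := aJB.smul (2 : K); rwa [smul_neg] at this
    · rw [smul_mul_smul_comm, hJB]
      simp only [mul_zero, zero_sub, smul_neg]; norm_num
  obtain ⟨r, hr⟩ := lemmaW p hp2 S
  have hrJ : r * JB = -(JB * r) := by
    have := hr.bN
    rw [mul_smul_comm, smul_mul_assoc, ← smul_neg] at this
    exact smul_right_injective _ h2 this
  have : Om fB (-1) := by
    have h := Om.comm (IsoP.invol hr.adj hr.sq)
      (⟨aJB, by rw [mul_neg, hJB, neg_neg], by rw [neg_mul, hJB, neg_neg]⟩ : IsoP _ JB (-JB))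
    rwa [hrJ, neg_mul, mul_assoc JB, hr.sq, mul_one, neg_mul_neg, hJB] at h
  rw [hD]
  exact D.om_glue Om.one this
end gen

lemma relW (p : ℕ) [CharP K p] [hp : Fact p.Prime] (hp2 : p ≠ 2) [FiniteDimensional K V]
    (S : Sys f c N 1 1 1 1) (ae : Adj f e e) (he : e * e = 1) (hc : c * e = e * c)
    (hN : N * e = e * N) : ∃ r, Adj f r r ∧ r * r = 1 ∧ r * e = e * r ∧ r * c = c * r ∧
      r * N = -(e * N * r) ∧ e * r = r + e - 1 := by
  have h2 := two_ne (K := K) p hp2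
  exact relW_gen p hp2 (decInv h2 S.q ae he) S (decInv_stab h2 S.q ae he hc)
    (decInv_stab h2 S.q ae he hN) (decInv_e h2 S.q ae he)

theorem lemmaE (p : ℕ) [CharP K p] [hp : Fact p.Prime] (hp2 : p ≠ 2) [FiniteDimensional K V]
    {e1 e2 e3 : K} (S : Sys f c N s e1 e2 e3) (he1 : e1 * e1 = 1) (he2 : e2 * e2 = 1)
    (he3 : e3 * e3 = 1) (ae : Adj f e e)
    (he : e * e = 1) (hc : c * e = e * c) (hN : N * e = e * N) (hse : s * e = -(e * s)) :
    ∃ b, Inv f c N b ∧ Om f b := by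
  have h2 := two_ne (K := K) p hp2
  obtain ⟨r, ar, rr, re, rc, rN, hr⟩ := relW p hp2 S.one ae he hc hN
  set t := e3 • s with ht
  have st : s * t = 1 := by rw [ht, mul_smul_comm, S.s2, smul_smul, he3, one_smul]
  have ts : t * s = 1 := by rw [ht, smul_mul_assoc, S.s2, smul_smul, he3, one_smul]
  have iso_s : IsoP f s t := ⟨S.ss, st, ts⟩
  have iso_t : IsoP f t s := iso_s.inv S.q
  have te : t * e = -(e * t) := by rw [ht, smul_mul_assoc, hse, mul_smul_comm, smul_neg]
  have tc : t * c = e1 • (c * t) := by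
    rw [ht, smul_mul_assoc, S.sc, mul_smul_comm, smul_comm]
  have tN : t * N = e2 • (N * t) := by
    rw [ht, smul_mul_assoc, S.sn, mul_smul_comm, smul_comm]
  set r' := s * r * t with hr'
  have r're : r' * e = e * r' := by
    calc r' * e = s * r * (t * e) := by rw [hr', mul_assoc]
      _ = -(s * (r * e) * t) := by rw [te]; simp only [mul_neg, mul_assoc]
      _ = -((s * e) * r * t) := by rw [re]; simp only [mul_assoc]
      _ = e * r' := by rw [hse, hr']; simp only [neg_mul, neg_neg, mul_assoc]
  have r'c : r' * c = c * r' := by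
    calc r' * c = s * r * (t * c) := by rw [hr', mul_assoc]
      _ = e1 • (s * (r * c) * t) := by rw [tc]; simp only [mul_smul_comm, mul_assoc]
      _ = e1 • ((s * c) * r * t) := by rw [rc]; simp only [mul_assoc]
      _ = c * r' := by
        rw [S.sc, hr']; simp only [smul_mul_assoc, smul_smul, he1, one_smul, mul_assoc]
  have r'N : r' * N = e * N * r' := by
    calc r' * N = s * r * (t * N) := by rw [hr', mul_assoc]
      _ = e2 • (s * (r * N) * t) := by rw [tN]; simp only [mul_smul_comm, mul_assoc]
      _ = -(e2 • ((s * e) * N * r * t)) := by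
        rw [rN]; simp only [mul_neg, neg_mul, smul_neg, mul_assoc]
      _ = e2 • (e * (s * N) * r * t) := by rw [hse]; simp only [neg_mul, smul_neg, neg_neg, mul_assoc]
      _ = _ := by
        rw [S.sn, hr']
        simp only [smul_mul_assoc, mul_smul_comm, smul_smul, he2, one_smul, mul_assoc]
  have r'r' : r' * r' = 1 := by
    calc r' * r' = s * r * (t * s) * r * t := by rw [hr']; simp only [mul_assoc]
      _ = s * (r * r) * t := by rw [ts, mul_one, mul_assoc s r r]
      _ = 1 := by rw [rr, mul_one, st]
  have hr1 : e * r' = -r' + e + 1 := by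
    have h1 : s * (e * r) * t = s * (r + e - 1) * t := by rw [hr]
    have h3 : s * (e * r) * t = -(e * r') := by
      rw [← mul_assoc, hse, hr']; simp only [neg_mul, mul_assoc]
    have h4 : s * (r + e - 1) * t = r' - e - 1 := by
      rw [mul_sub, mul_add, sub_mul, add_mul, hse, mul_one, st, ← hr', neg_mul, mul_assoc e, st,
        mul_one]; abel
    rw [h3, h4] at h1
    rw [← neg_neg (e * r'), h1]; abel
  have ar' : Adj f r' r' := by
    have := (S.ss.mul ar).mul iso_t.adj
    rwa [← mul_assoc] at this
  have com : r * r' = r' * r := by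
    have k1 : ∀ x y : Module.End K V, e * x = x → e * y = -y → x * e = e * x → y * e = e * y →
        x * y = 0 ∧ y * x = 0 := by
      intro x y hx hy hxe hye
      constructor
      · have : x * y = -(x * y) := by
          calc x * y = (e * x) * y := by rw [hx]
            _ = x * (e * y) := by rw [← hxe, mul_assoc]
            _ = _ := by rw [hy, mul_neg]
        have h0 : (2 : K) • (x * y) = 0 := by
          rw [two_smul]; nth_rw 1 [this]; simp
        exact (smul_eq_zero.mp h0).resolve_left h2
      · have : y * x = -(y * x) := by
          calc y * x = y * (e * x) := by rw [hx]
            _ = (e * y) * x := by rw [← hye, mul_assoc]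
            _ = _ := by rw [hy, neg_mul]
        have h0 : (2 : K) • (y * x) = 0 := by
          rw [two_smul]; nth_rw 1 [this]; simp
        exact (smul_eq_zero.mp h0).resolve_left h2
    obtain ⟨a1, a2⟩ := k1 (r - 1) (r' - 1) (by rw [mul_sub, hr, mul_one]; abel)
      (by rw [mul_sub, hr1, mul_one]; abel) (by rw [sub_mul, mul_sub, re]; simp)
      (by rw [sub_mul, mul_sub, r're]; simp)
    have a3 : (r - 1) * (r' - 1) = r * r' - r - r' + 1 := by
      simp only [sub_mul, mul_sub, one_mul, mul_one]; abel
    have a4 : (r' - 1) * (r - 1) = r' * r - r - r' + 1 := by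
      simp only [sub_mul, mul_sub, one_mul, mul_one]; abel
    have : r * r' - r' * r = (r - 1) * (r' - 1) - (r' - 1) * (r - 1) := by rw [a3, a4]; abel
    rw [a1, a2, sub_zero] at this
    exact sub_eq_zero.mp this
  refine ⟨r * r', ⟨?_, ?_, ?_, ?_⟩, ?_⟩
  · have := ar.mul ar'; rwa [← com] at this
  · calc r * r' * (r * r') = r * (r' * r) * r' := by simp only [mul_assoc]
      _ = (r * r) * (r' * r') := by rw [← com]; simp only [mul_assoc]
      _ = 1 := by rw [rr, r'r', one_mul]
  · rw [mul_assoc, r'c, ← mul_assoc, rc, mul_assoc]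
  · calc r * r' * N = r * (e * N * r') := by rw [mul_assoc, r'N]
      _ = (r * e) * N * r' := by simp only [mul_assoc]
      _ = e * (r * N) * r' := by rw [re]; simp only [mul_assoc]
      _ = -((e * e) * N * r * r') := by rw [rN]; simp only [mul_neg, neg_mul, mul_assoc]
      _ = _ := by rw [he, one_mul, mul_assoc]
  · have := Om.comm (IsoP.invol ar rr) iso_s
    have e : r * r' = r * s * r * t := by rw [hr']; simp only [mul_assoc]
    rw [e]; exact this

theorem lemmaC (p : ℕ) [CharP K p] [hp : Fact p.Prime] (hp2 : p ≠ 2) [FiniteDimensional K V]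
    (q : QS f) {b J : Module.End K V} (ab : Adj f b b) (hb : b * b = 1) (aJ : Adj f J (-J))
    (hJ : J * J = -1) (hbJ : J * b = b * J) : Om f b := by
  have h2 := two_ne (K := K) p hp2
  exact lemmaC_gen p hp2 q (decInv h2 q ab hb) (decInv_e h2 q ab hb) (decInv_stab h2 q ab hb hbJ)
    aJ hJ

theorem caseA_base (p : ℕ) [CharP K p] [hp : Fact p.Prime] (hp2 : p ≠ 2)
    (hm1 : ∀ a b : K, a * a + b * b = 0 → a = 0) [FiniteDimensional K V] [Nontrivial V]
    (S : Sys f c N s 1 (-1) (-1)) (hI : Indec f c N s) : ∃ b, Inv f c N b ∧ Om f b := by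
  have h2 := two_ne (K := K) p hp2
  have ass : Adj f s (-s) := by simpa using S.ss
  have s2 : s * s = -1 := by simpa using S.s2
  have hsc : s * c = c * s := by simpa using S.sc
  have hsn : s * N = -(N * s) := by simpa using S.sn
  have siso : ∀ x y, f (s x) (s y) = f x y := fun x y => by
    rw [ass, LinearMap.neg_apply, ← Module.End.mul_apply, s2]; simp
  have sss : ∀ x, s (s x) = -x := fun x => by rw [← Module.End.mul_apply, s2]; rfl
  rcases n_cases S rfl (by ring) hI with hN | ⟨hN, ε, hε, hcε⟩
  · obtain ⟨Z, hZ, hZ'⟩ := lemmaM c (loc_of_indec S rfl hI)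
    obtain ⟨x, hx⟩ := polar h2 S.q (S.cc.aeval Z) hZ
    have hnd := cyc_nd h2 S.q S.cc S.nn S.cn S.n2 hN hx hZ'
    set U := LinearMap.range (cycP c N x) with hU
    have Uc : ∀ v ∈ U, c v ∈ U := cyc_c x
    have UN : ∀ v ∈ U, N v ∈ U := by
      rintro v ⟨⟨a, b⟩, rfl⟩
      exact ⟨_, (cyc_N S.cn S.n2 x a b).symm⟩
    have sg : ∀ g : K[X], s * aeval c g = aeval c g * s := commute_aeval hsc
    have z1 : ∀ g : K[X], f (s (aeval c g x)) x = 0 := by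
      intro g
      have : Adj f (s * aeval c g) (-(s * aeval c g)) := by
        have := ass.mul (S.cc.aeval g); rwa [mul_neg, ← sg] at this
      exact skew0 h2 S.q this x
    have z2 : ∀ g : K[X], f (s (aeval c g (N x))) x = 0 := by
      intro g
      have : Adj f (s * (aeval c g * N)) (-(s * (aeval c g * N))) := by
        have h := ass.mul ((S.cc.aeval g).mul S.nn)
        have e : -N * aeval c g * -s = -(s * (aeval c g * N)) := by
          calc -N * aeval c g * -s = N * (aeval c g * s) := by simp only [neg_mul, mul_neg, neg_neg, mul_assoc]
            _ = N * s * aeval c g := by rw [← sg, mul_assoc]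
            _ = -(s * N) * aeval c g := by rw [hsn, neg_neg]
            _ = _ := by rw [neg_mul, mul_assoc, commN S.cn]
        rwa [e] at h
      exact skew0 h2 S.q this x
    have z3 : ∀ a b, f (s (cycP c N x (a, b))) x = 0 := by
      intro a b; rw [cycP_apply, map_add, map_add, LinearMap.add_apply, z1, z2, add_zero]
    have hperp : ∀ u ∈ U, ∀ w ∈ U, f (s u) w = 0 := by
      rintro _ ⟨⟨a, b⟩, rfl⟩ w ⟨⟨a', b'⟩, rfl⟩
      have k1 : ∀ (g : K[X]) (u : V), u ∈ U → f (s u) (aeval c g x) = 0 := by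
        rintro g u hu
        rw [← (S.cc.aeval g) (s u) x, ← Module.End.mul_apply, ← sg]
        have hu' : aeval c g u ∈ U := inv_aeval Uc g u hu
        obtain ⟨⟨a, b⟩, hab⟩ := hu'
        rw [Module.End.mul_apply, ← hab]
        exact z3 a b
      rw [cycP_apply c N x a' b', map_add, k1 a' _ ⟨_, rfl⟩, zero_add]
      have e1 : aeval c b' (N x) = N (aeval c b' x) := by
        rw [← Module.End.mul_apply, commN S.cn]; rfl
      have e2 : ∀ u w, f (s u) (N w) = f (s (N u)) w := by
        intro u w
        rw [← Module.End.mul_apply s, hsn, LinearMap.neg_apply, map_neg, LinearMap.neg_apply,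
          Module.End.mul_apply, S.nn]; simp
      rw [e1, e2]
      exact k1 b' _ (UN _ ⟨_, rfl⟩)
    set W := U.map s with hW
    have hUW : ∀ u ∈ U, ∀ w ∈ W, f u w = 0 := by
      rintro u hu _ ⟨w, hw, rfl⟩
      rw [S.q.symm]; exact hperp w hw u hu
    have ndW : NdOn f (U ⊔ W) := by
      intro y hy h
      obtain ⟨u, hu, w, ⟨u', hu', rfl⟩, rfl⟩ := Submodule.mem_sup.mp hy
      have h1 : u = 0 := by
        refine hnd u hu fun t ht => ?_
        have := h t (Submodule.mem_sup_left ht)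
        rwa [map_add, LinearMap.add_apply, hperp u' hu' t ht, add_zero] at this
      have h3 : u' = 0 := by
        refine hnd u' hu' fun t ht => ?_
        have := h (s t) (Submodule.mem_sup_right ⟨t, ht, rfl⟩)
        rwa [h1, zero_add, siso] at this
      rw [h1, h3]; simp
    have dis : ∀ y ∈ U, y ∈ W → y = 0 := by
      intro y h1 h3
      refine hnd y h1 fun t ht => ?_
      rw [S.q.symm]; exact hUW t ht y h3
    have Wc : ∀ v ∈ W, c v ∈ W := by
      rintro _ ⟨u, hu, rfl⟩
      exact ⟨c u, Uc u hu, by rw [← Module.End.mul_apply, hsc]; rfl⟩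
    have WN : ∀ v ∈ W, N v ∈ W := by
      rintro _ ⟨u, hu, rfl⟩
      exact ⟨-N u, neg_mem (UN u hu), by rw [map_neg, ← Module.End.mul_apply, hsn]; simp⟩
    have Ws : ∀ v ∈ W, s v ∈ U := by
      rintro _ ⟨u, hu, rfl⟩
      rw [sss]; exact neg_mem hu
    have sup_inv : ∀ X : Module.End K V, (∀ v ∈ U, X v ∈ U ⊔ W) → (∀ v ∈ W, X v ∈ U ⊔ W) →
        ∀ v ∈ U ⊔ W, X v ∈ U ⊔ W := by
      intro X h1 h3 v hv
      obtain ⟨u, hu, w, hw, rfl⟩ := Submodule.mem_sup.mp hv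
      rw [map_add]; exact add_mem (h1 u hu) (h3 w hw)
    have htop : U ⊔ W = ⊤ := by
      refine (hI (U ⊔ W) (sup_inv c (fun v hv => Submodule.mem_sup_left (Uc v hv))
        (fun v hv => Submodule.mem_sup_right (Wc v hv)))
        (sup_inv N (fun v hv => Submodule.mem_sup_left (UN v hv))
        (fun v hv => Submodule.mem_sup_right (WN v hv)))
        (sup_inv s (fun v hv => Submodule.mem_sup_right ⟨v, hv, rfl⟩)
        (fun v hv => Submodule.mem_sup_left (Ws v hv))) ndW).resolve_left fun h => ?_
      have h1 : cycP c N x (1, 0) ∈ U ⊔ W := Submodule.mem_sup_left ⟨_, rfl⟩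
      rw [h, Submodule.mem_bot, cycP_apply] at h1
      simp at h1
      rw [h1] at hx
      simp at hx
    have hcompl : IsCompl U W := by
      rw [isCompl_iff, disjoint_iff, codisjoint_iff]
      exact ⟨by rw [eq_bot_iff]; rintro y ⟨h1, h3⟩; exact dis y h1 h3, htop⟩
    set D := decCompl S.q U W hcompl hUW
    have sc : D.Stab c := decCompl_stab _ _ _ _ _ _ Uc Wc
    have sN : D.Stab N := decCompl_stab _ _ _ _ _ _ UN WN
    have eU : ∀ u ∈ U, D.glue 1 (-1) u = u := by
      intro u hu
      have : u = D.i ⟨u, hu⟩ := rfl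
      rw [this, D.glue_apply, D.pi, D.ri]; simp
    have eW : ∀ u ∈ W, D.glue 1 (-1) u = -u := by
      intro u hu
      have : u = D.j ⟨u, hu⟩ := rfl
      rw [this, D.glue_apply, D.pj, D.rj]; simp
    refine lemmaE p hp2 S (by ring) (by ring) (by ring) (e := D.glue 1 (-1))
      (D.glue_adj Adj.one Adj.one.neg) ?_ ?_ ?_ ?_
    · exact D.flip_sq
    · exact D.flip_comm sc
    · exact D.flip_comm sN
    · ext v
      obtain ⟨u, hu, w, hw, rfl⟩ := Submodule.mem_sup.mp (by rw [htop]; trivial : v ∈ U ⊔ W)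
      simp only [map_add, LinearMap.neg_apply, Module.End.mul_apply, eU u hu, eW w hw,
        eW (s u) ⟨u, hu, rfl⟩, eU (s w) (Ws w hw), map_neg]
      simp
  · obtain ⟨k, hk0, hk, hk'⟩ := nilp_index hN
    obtain ⟨g, hg⟩ := c_poly p hp2 hε S.n2 hcε
    have aN : Adj f N ((-1 : K) • N) := by simpa using S.nn
    have sNm : ∀ x, s ((N ^ (k - 1)) x) = ((-1 : ℤ) ^ (k - 1)) • (N ^ (k - 1)) (s x) := by
      intro x
      have : ∀ m, s * N ^ m = (-1 : ℤ) ^ m • (N ^ m * s) := by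
        intro m
        induction m with
        | zero => simp
        | succ m ih =>
          rw [pow_succ, ← mul_assoc, ih, smul_mul_assoc, mul_assoc, hsn, pow_succ]
          simp [mul_assoc]
      rw [← Module.End.mul_apply, this]; rfl
    have fin : ∀ (ι : Type) [Fintype ι] [DecidableEq ι] (z : ι → V) (d : ι → K),
        (∀ a : ι → K, (∀ j, ∑ i, a i * f ((N ^ (k - 1)) (z i)) (z j) = 0) → a = 0) →
        (∃ i, z i ≠ 0) → (∀ i, d i * d i = 1) →
        (∀ i j, d i * d j * f ((N ^ (k - 1)) (z i)) (z j) = f ((N ^ (k - 1)) (z i)) (z j)) →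
        (∀ i, ∃ j, (s (z i) = z j ∨ s (z i) = -z j) ∧ d j = -d i) →
        ∃ b, Inv f c N b ∧ Om f b := by
      intro ι _ _ z d hG hz hd hGs hsz
      have hnd := free_nd (neg_ne_zero.mpr one_ne_zero) hk aN hG
      have hinvN := famSpan_inv (z := z) hk (X := N) (a := 1) (by simp) fun i => by
        simpa using fam_mem (z := z) hk 1 i
      have hinvc : ∀ x ∈ famSpan N k z, c x ∈ famSpan N k z := by
        rw [hg]; exact inv_aeval (fun x hx => hinvN (N x) (hinvN x hx)) g
      have hinvs := famSpan_inv (z := z) hk (X := s) (a := -1) (by simpa using hsn) fun i => by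
        obtain ⟨j, h | h, -⟩ := hsz i
        · rw [h]; simpa using fam_mem (z := z) hk 0 j
        · rw [h]; exact neg_mem (by simpa using fam_mem (z := z) hk 0 j)
      rcases hI _ hinvc hinvN hinvs hnd with h | h
      · obtain ⟨i, hi⟩ := hz
        have := fam_mem (z := z) hk 0 i
        rw [h, Submodule.mem_bot] at this
        exact absurd this hi
      · obtain ⟨E0, E, hE0, _, aE, hEE, hEN, hX⟩ := freeP p hp2 S.q hk0 (neg_ne_zero.mpr one_ne_zero) hk
          aN hG h id (fun _ => rfl) d hd 1 (by ring) (by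
            intro i j; rw [one_pow, one_mul]; exact hGs i j)
        have hEs := hX s (-1) (-1) (-1) (neg_ne_zero.mpr one_ne_zero) (by ring) (by simpa using ass)
          (by simpa using hsn) (by
            intro i
            obtain ⟨j, h | h, hj⟩ := hsz i
            · simp only [id, h, hE0, hj, neg_mul, one_mul]
            · simp [id, h, hE0, hj])
        refine lemmaE p hp2 S (by ring) (by ring) (by ring) (e := E) aE hEE ?_ ?_ ?_
        · rw [hg]
          exact (commute_aeval (semi_sq (by ring) hEN) g).symm
        · simpa using hEN.symm
        · have : E * s = -(s * E) := by simpa using hEs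
          rw [this, neg_neg]
    rcases Nat.even_or_odd (k - 1) with he | ho
    · have aP : Adj f (N ^ (k - 1)) (N ^ (k - 1)) := by
        have := S.nn.pow (k - 1); rwa [he.neg_pow] at this
      have sN' : ∀ x, (N ^ (k - 1)) (s x) = s ((N ^ (k - 1)) x) := fun x => by
        rw [sNm, he.neg_one_pow, one_smul]
      obtain ⟨x, hx⟩ := polar h2 S.q aP hk'
      have hxs : f ((N ^ (k - 1)) x) (s x) = 0 := by
        have e1 : f ((N ^ (k - 1)) x) (s x) = f (s ((N ^ (k - 1)) x)) x := by
          rw [aP, sN', S.q.symm]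
        have e2 : f (s ((N ^ (k - 1)) x)) x = - f ((N ^ (k - 1)) x) (s x) := by
          rw [ass]; simp
        have : 2 * f ((N ^ (k - 1)) x) (s x) = 0 := by linear_combination e1 + e2
        exact (mul_eq_zero.mp this).resolve_left h2
      have hsx : f ((N ^ (k - 1)) (s x)) x = 0 := by
        rw [aP, S.q.symm, hxs]
      have hss : f ((N ^ (k - 1)) (s x)) (s x) = f ((N ^ (k - 1)) x) x := by
        rw [sN', siso]
      refine fin (Fin 2) ![x, s x] ![1, -1] ?_ ⟨0, ?_⟩ ?_ ?_ ?_
      · intro a ha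
        have h0 := ha 0
        have h1 := ha 1
        simp [Fin.sum_univ_two, hsx, hxs, hss, hx] at h0 h1
        ext i
        fin_cases i
        · exact h0
        · exact h1
      · rintro h
        simp at h
        rw [h] at hx; simp at hx
      · intro i; fin_cases i <;> simp
      · intro i j
        fin_cases i <;> fin_cases j <;> simp [hxs, hsx]
      · intro i
        fin_cases i
        · exact ⟨1, by simp⟩
        · exact ⟨0, by simp [sss]⟩
    · have aP : Adj f (N ^ (k - 1)) (-(N ^ (k - 1))) := by
        have := S.nn.pow (k - 1); rwa [ho.neg_pow] at this
      have sN' : ∀ x, (N ^ (k - 1)) (s x) = -s ((N ^ (k - 1)) x) := fun x => by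
        rw [sNm, ho.neg_one_pow]; simp
      set M := N ^ (k - 1)
      have alt : ∀ x, f (M x) x = 0 := skew0 h2 S.q aP
      have asw : ∀ x y, f (M y) x = - f (M x) y := fun x y => by
        rw [aP, S.q.symm]; simp
      have as1 : ∀ x y, f (M (s x)) y = f (M x) (s y) := fun x y => by
        rw [sN', map_neg, LinearMap.neg_apply, ass]; simp
      have as0 : ∀ x, f (M x) (s x) = 0 := fun x => by
        have e1 := as1 x x
        have e2 := asw x (s x)
        have : 2 * f (M x) (s x) = 0 := by linear_combination e2 - e1
        exact (mul_eq_zero.mp this).resolve_left h2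
      obtain ⟨x, hx⟩ : ∃ x, M x ≠ 0 := by
        by_contra h; push Not at h; exact hk' (LinearMap.ext h)
      obtain ⟨y0, hy0⟩ : ∃ y, f (M x) y ≠ 0 := by
        by_contra h; push Not at h; exact hx (S.q.nd _ h)
      obtain ⟨y, hxsy, hxy⟩ : ∃ y, f (M x) (s y) = 0 ∧ f (M x) y ≠ 0 := by
        refine ⟨f (M x) y0 • y0 + f (M x) (s y0) • s y0, ?_, ?_⟩
        · simp only [map_add, map_smul, smul_eq_mul, sss, map_neg]; ring
        · simp only [map_add, map_smul, smul_eq_mul]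
          intro h; exact hy0 (hm1 _ _ h)
      have t1 : f (M y) x = -f (M x) y := asw x y
      have t2 : f (M (s x)) y = 0 := by rw [as1, hxsy]
      have t3 : f (M y) (s x) = 0 := by rw [asw, t2, neg_zero]
      have t4 : f (M (s y)) x = 0 := by rw [asw, hxsy, neg_zero]
      have t5 : f (M (s x)) (s y) = -f (M x) y := by rw [as1, sss, map_neg]
      have t6 : f (M (s y)) (s x) = f (M x) y := by rw [asw, t5, neg_neg]
      have t7 : f (M (s x)) x = 0 := by rw [as1, as0]
      have t8 : f (M (s y)) y = 0 := by rw [as1, as0]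
      refine fin (Fin 4) ![x, y, s x, s y] ![1, 1, -1, -1] ?_ ⟨0, ?_⟩ ?_ ?_ ?_
      · intro a ha
        have h0 := ha 0
        have h1 := ha 1
        have h3 := ha 2
        have h4 := ha 3
        simp [Fin.sum_univ_four, alt, as0, t1, t2, t3, t4, t5, t6, t7, t8, hxy, hxsy] at h0 h1 h3 h4
        ext i
        fin_cases i
        · exact h1
        · exact h0
        · exact h4
        · exact h3
      · rintro h
        simp at h
        rw [h] at hx; simp at hx
      · intro i; fin_cases i <;> simp
      · intro i j
        fin_cases i <;> fin_cases j <;> simp [t2, t3, t4, t7, t8, as0, hxsy]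
      · intro i
        fin_cases i
        · exact ⟨2, by simp⟩
        · exact ⟨3, by simp⟩
        · exact ⟨0, by simp [sss]⟩
        · exact ⟨1, by simp [sss]⟩
end

theorem caseA (p : ℕ) [CharP K p] [hp : Fact p.Prime] (hp2 : p ≠ 2)
    (hm1 : ∀ a b : K, a * a + b * b = 0 → a = 0) [FiniteDimensional K V]
    {f : LinearMap.BilinForm K V} {c N s : Module.End K V}
    (S : Sys f c N s 1 (-1) (-1)) : ∃ b, Inv f c N b ∧ Om f b := by
  refine ind (e1 := 1) (e2 := -1) (e3 := -1) (fun V _ _ f c N s => ∃ b, Inv f c N b ∧ Om f b)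
    ?_ ?_ ?_ _ V f c N s rfl S
  · intro V A B _ _ _ _ _ _ _ _ _ f fA fB D cA NA sA cB NB sB _ SA SB hA hB
    obtain ⟨b, hb, ob⟩ := hA
    obtain ⟨b', hb', ob'⟩ := hB
    refine ⟨D.glue b b', ⟨D.glue_adj hb.adj hb'.adj, ?_, ?_, ?_⟩, D.om_glue ob ob'⟩
    · rw [D.glue_mul, hb.sq, hb'.sq, D.glue_one]
    · rw [D.glue_mul, hb.bc, hb'.bc, D.glue_mul]
    · rw [D.glue_mul, hb.bN, hb'.bN, D.glue_mul, D.glue_neg]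
  · intro V _ _ f c N s hV S
    exact ⟨1, ⟨Adj.one, one_mul 1, by simp, by ext x; exact Subsingleton.elim _ _⟩, Om.one⟩
  · intro V _ _ _ _ f c N s S hI
    exact caseA_base p hp2 hm1 S hI
end Biref
namespace Biref
universe u v
variable {K : Type u} [Field K] {V A B : Type v} [AddCommGroup V] [Module K V]
  [AddCommGroup A] [Module K A] [AddCommGroup B] [Module K B]

section
variable {f : LinearMap.BilinForm K V} {fA : LinearMap.BilinForm K A}
  {fB : LinearMap.BilinForm K B}

noncomputable def rho (f : LinearMap.BilinForm K V) (x : V) : Module.End K V :=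
  LinearMap.transvection ((-(2 / f x x)) • f x) x

lemma rho_apply (x v : V) : rho f x v = v - (2 / f x x * f x v) • x := by
  unfold rho
  rw [LinearMap.transvection.apply, LinearMap.smul_apply, smul_eq_mul, neg_mul, neg_smul,
    sub_eq_add_neg]

lemma rho_det [FiniteDimensional K V] {x : V} (hx : f x x ≠ 0) :
    LinearMap.det (rho f x) = -1 := by
  unfold rho
  rw [LinearMap.transvection.det, LinearMap.smul_apply, smul_eq_mul]
  field_simp; ring

lemma rho_adj (q : QS f) (x : V) : Adj f (rho f x) (rho f x) := fun v w => by
  simp only [rho_apply, map_sub, map_smul, LinearMap.sub_apply, LinearMap.smul_apply, smul_eq_mul]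
  rw [q.symm v x]; ring

lemma rho_sq {x : V} (hx : f x x ≠ 0) : rho f x * rho f x = 1 := by
  ext v
  simp only [Module.End.mul_apply, rho_apply, map_sub, map_smul, smul_eq_mul, Module.End.one_apply]
  have : 2 / f x x * f x x = 2 := by field_simp
  rw [this]; module

lemma rho_iso (q : QS f) {x : V} (hx : f x x ≠ 0) : IsoP f (rho f x) (rho f x) :=
  IsoP.invol (rho_adj q x) (rho_sq hx)

lemma rho_conj {g g' : Module.End K V} (q : QS f) (h : IsoP f g g') (x : V) :
    g * rho f x * g' = rho f (g x) := by
  ext v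
  simp only [Module.End.mul_apply, rho_apply, map_sub, map_smul]
  rw [h.map, ← Module.End.mul_apply g g', h.rinv, h.adj x v]; rfl

lemma rho_smul {a : K} (ha : a ≠ 0) (x : V) : rho f (a • x) = rho f x := by
  ext v
  simp only [rho_apply, map_smul, LinearMap.smul_apply, smul_eq_mul, smul_smul]
  congr 2
  by_cases hx : f x x = 0
  · simp [hx]
  · field_simp

lemma rho_neg (x : V) : rho f (-x) = rho f x := by
  rw [← rho_smul (f := f) (neg_ne_zero.mpr one_ne_zero : (-1 : K) ≠ 0) x]; simp

lemma rho_rho (h2 : (2 : K) ≠ 0) (q : QS f) {x y : V} (hx : f x x ≠ 0) (hxy : f x x = f y y) :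
    Om f (rho f x * rho f y) := by
  have hy : f y y ≠ 0 := hxy ▸ hx
  obtain ⟨g, hg, h⟩ : ∃ g, IsoP f g g ∧ g * rho f y * g = rho f x := by
    by_cases hw : f (x - y) (x - y) = 0
    · have hw' : f (x + y) (x + y) ≠ 0 := by
        intro h
        simp only [map_add, map_sub, LinearMap.add_apply, LinearMap.sub_apply] at h hw
        have : (2 * 2) * f x x = 0 := by linear_combination h + hw + 2 * hxy
        exact hx ((mul_eq_zero.mp this).resolve_left (mul_ne_zero h2 h2))
      refine ⟨rho f (x + y), rho_iso q hw', ?_⟩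
      rw [rho_conj q (rho_iso q hw'), rho_apply]
      have e : 2 / f (x + y) (x + y) * f (x + y) y = 1 := by
        rw [div_mul_eq_mul_div, div_eq_one_iff_eq hw']
        simp only [map_add, LinearMap.add_apply]
        rw [q.symm y x]; linear_combination -hxy
      rw [e, one_smul, ← rho_neg x]; congr 1; abel
    · refine ⟨rho f (x - y), rho_iso q hw, ?_⟩
      rw [rho_conj q (rho_iso q hw), rho_apply]
      have e : 2 / f (x - y) (x - y) * f (x - y) y = -1 := by
        rw [div_mul_eq_mul_div, div_eq_iff hw]
        simp only [map_sub, LinearMap.sub_apply]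
        rw [q.symm y x]; linear_combination hxy
      rw [e]; congr 1; module
  rw [← h]
  exact Om.comm hg (rho_iso q hy)

def Cl (f : LinearMap.BilinForm K V) (d : K) (g : Module.End K V) : Prop :=
  ∃ x, f x x = d ∧ Om f (rho f x * g)

lemma Cl.mul (h2 : (2 : K) ≠ 0) (q : QS f) {d : K} (hd : d ≠ 0) {g h : Module.End K V}
    (a : Cl f d g) (b : Cl f d h) : Om f (g * h) := by
  obtain ⟨x, hx, ox⟩ := a
  obtain ⟨y, hy, oy⟩ := b
  have hx0 : f x x ≠ 0 := by rw [hx]; exact hd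
  have hy0 : f y y ≠ 0 := by rw [hy]; exact hd
  have h1 := Om.conj (rho_iso q hx0) ox
  have h3 := rho_rho h2 q hx0 (hx.trans hy.symm)
  have := (h1.mul h3).mul oy
  have e : rho f x * (rho f x * g) * rho f x * (rho f x * rho f y) * (rho f y * h) = g * h := by
    calc _ = (rho f x * rho f x) * g * (rho f x * rho f x) * (rho f y * rho f y) * h := by
          simp only [mul_assoc]
      _ = _ := by rw [rho_sq hx0, rho_sq hy0]; simp
  rwa [e] at this

lemma Cl.scale {d a : K} (ha : a ≠ 0) {g : Module.End K V} (h : Cl f d g) :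
    Cl f (a * a * d) g := by
  obtain ⟨x, hx, ox⟩ := h
  exact ⟨a • x, by simp [hx]; ring, by rwa [rho_smul ha]⟩

lemma Cl.mulR {d : K} {g h : Module.End K V} (a : Cl f d g) (b : Om f h) : Cl f d (g * h) := by
  obtain ⟨x, hx, ox⟩ := a
  exact ⟨x, hx, by rw [← mul_assoc]; exact ox.mul b⟩

lemma Cl.mulL (q : QS f) {d : K} (hd : d ≠ 0) {g h : Module.End K V} (a : Cl f d g) (b : Om f h) :
    Cl f d (h * g) := by
  obtain ⟨x, hx, ox⟩ := a
  have hx0 : f x x ≠ 0 := by rw [hx]; exact hd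
  refine ⟨x, hx, ?_⟩
  have := (Om.conj (rho_iso q hx0) b).mul ox
  have e : rho f x * h * rho f x * (rho f x * g) = rho f x * (h * g) := by
    calc _ = rho f x * h * (rho f x * rho f x) * g := by simp only [mul_assoc]
      _ = _ := by rw [rho_sq hx0]; simp [mul_assoc]
  rwa [e] at this

lemma Dec.rho (D : Dec f fA fB) (x : A) : rho f (D.i x) = D.glue (rho fA x) 1 := by
  ext v
  rw [D.glue_apply, rho_apply, rho_apply, D.fi, D.fi, D.pi]
  conv_lhs => rw [← D.sum v]
  simp [D.pi, D.pj]; abel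

lemma Cl.glue (D : Dec f fA fB) {d : K} {g : Module.End K A} {h : Module.End K B}
    (a : Cl fA d g) (b : Om fB h) : Cl f d (D.glue g h) := by
  obtain ⟨x, hx, ox⟩ := a
  refine ⟨D.i x, by rw [D.fi, D.pi, hx], ?_⟩
  rw [D.rho, D.glue_mul, one_mul]
  exact D.om_glue ox b

lemma Cl.glue' (D : Dec f fA fB) {d : K} {g : Module.End K A} {h : Module.End K B}
    (a : Om fA g) (b : Cl fB d h) : Cl f d (D.glue g h) := by
  rw [← D.swap_glue]; exact b.glue D.swap a

lemma Cl.glue2 (h2 : (2 : K) ≠ 0) (q : QS f) (D : Dec f fA fB) {d : K} (hd : d ≠ 0)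
    {g : Module.End K A} {h : Module.End K B}
    (a : Cl fA d g) (b : Cl fB d h) : Om f (D.glue g h) := by
  have := Cl.mul h2 q hd (a.glue D Om.one) (b.glue' D Om.one)
  rwa [D.glue_mul, mul_one, one_mul] at this

lemma norm_pm (hsq : ∀ d : K, ∃ a, d = a * a ∨ d = -(a * a)) {x : V} (hx : f x x ≠ 0) :
    ∃ y, (f y y = 1 ∨ f y y = -1) ∧ rho f y = rho f x := by
  obtain ⟨a, ha⟩ := hsq (f x x)
  have ha0 : a ≠ 0 := by rintro rfl; simp at ha; exact hx ha
  refine ⟨a⁻¹ • x, ?_, rho_smul (inv_ne_zero ha0) x⟩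
  simp only [map_smul, LinearMap.smul_apply, smul_eq_mul]
  rcases ha with ha | ha
  · left; rw [ha]; field_simp
  · right; rw [ha]; field_simp

theorem invol_cases [FiniteDimensional K V] (h2 : (2 : K) ≠ 0)
    (hsq : ∀ d : K, ∃ a, d = a * a ∨ d = -(a * a)) (q : QS f) :
    ∀ (n : ℕ) (b : Module.End K V), Adj f b b → b * b = 1 →
      finrank K (LinearMap.ker (b + 1)) = n →
      Om f b ∨ Cl f 1 b ∨ Cl f (-1) b ∨
        ∃ x y, f x x ≠ 0 ∧ f y y ≠ 0 ∧ Om f (rho f x * (rho f y * b)) := by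
  intro n
  induction n using Nat.strong_induction_on with
  | _ n ih =>
  intro b ab hb hn
  have key : ∀ x, f x x ≠ 0 → Om f (rho f x * b) → Cl f 1 b ∨ Cl f (-1) b := by
    intro x hx ox
    obtain ⟨y, hy, h⟩ := norm_pm hsq hx
    rcases hy with hy | hy
    · left; exact ⟨y, hy, by rwa [h]⟩
    · right; exact ⟨y, hy, by rwa [h]⟩
  by_cases h0 : LinearMap.ker (b + 1) = ⊥
  · left
    have : b = 1 := by
      ext x
      have : (b + 1) ((b - 1) x) = 0 := by
        rw [← Module.End.mul_apply]
        have : (b + 1) * (b - 1) = 0 := by rw [add_mul, mul_sub, hb]; simp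
        rw [this]; rfl
      have := (LinearMap.ker_eq_bot'.mp h0) _ this
      exact sub_eq_zero.mp this
    rw [this]; exact Om.one
  · have D := decInv h2 q ab hb
    have qB := D.qsB q
    obtain ⟨x, hbx, hx⟩ : ∃ x, b x = -x ∧ f x x ≠ 0 := by
      have : Nontrivial (LinearMap.ker (b + 1)) := Submodule.nontrivial_iff_ne_bot.mpr h0
      obtain ⟨⟨x, hx⟩, h⟩ := polar h2 qB Adj.one one_ne_zero
      refine ⟨x, ?_, h⟩
      exact eq_neg_of_add_eq_zero_left hx
    set b' := rho f x * b with hb'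
    have hcomm : b * rho f x = rho f x * b := by
      have := rho_conj q (IsoP.invol ab hb) x
      rw [hbx, rho_neg] at this
      calc b * rho f x = b * rho f x * (b * b) := by rw [hb, mul_one]
        _ = (b * rho f x * b) * b := by simp only [mul_assoc]
        _ = _ := by rw [this]
    have ab' : Adj f b' b' := by
      have := (rho_adj q x).mul ab; rwa [hcomm] at this
    have hbb' : b' * b' = 1 := by
      calc b' * b' = rho f x * (b * rho f x) * b := by rw [hb']; simp only [mul_assoc]
        _ = (rho f x * rho f x) * (b * b) := by rw [hcomm]; simp only [mul_assoc]
        _ = 1 := by rw [rho_sq hx, hb, one_mul]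
    have hlt : LinearMap.ker (b' + 1) < LinearMap.ker (b + 1) := by
      refine lt_of_le_of_ne ?_ ?_
      · intro v hv
        have hv1 : b' v = -v := eq_neg_of_add_eq_zero_left hv
        have e1 : b v = -rho f x v := by
          have : rho f x (b' v) = b v := by
            rw [hb', ← Module.End.mul_apply, ← mul_assoc, rho_sq hx, one_mul]
          rw [← this, hv1, map_neg]
        have e2 : f x v = 0 := by
          have h1 : f (b x) v = f x (b v) := ab x v
          rw [hbx, e1, map_neg, map_neg, LinearMap.neg_apply, rho_apply, map_sub, map_smul,
            smul_eq_mul] at h1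
          have h3 : 2 / f x x * f x v * f x x = 2 * f x v := by field_simp
          rw [h3] at h1
          have : 2 * f x v = 0 := by linear_combination -h1
          exact (mul_eq_zero.mp this).resolve_left h2
        rw [LinearMap.mem_ker, LinearMap.add_apply, e1, rho_apply, e2]
        simp
      · intro h
        have : x ∈ LinearMap.ker (b' + 1) := by
          rw [h, LinearMap.mem_ker, LinearMap.add_apply, hbx]; simp
        have hv1 : b' x = -x := eq_neg_of_add_eq_zero_left this
        rw [hb', Module.End.mul_apply, hbx, map_neg, rho_apply] at hv1
        have h3 : 2 / f x x * f x x = 2 := by field_simp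
        rw [h3] at hv1
        have h4 : (2 : K) • x = 0 := by
          have : (2 : K) • x = -(x - (2 : K) • x) - -x := by module
          rw [this, hv1, sub_self]
        have : x = 0 := (smul_eq_zero.mp h4).resolve_left h2
        rw [this] at hx; simp at hx
    have hcase := ih _ (hn ▸ Submodule.finrank_lt_finrank_of_lt hlt) b' ab' hbb' rfl
    rcases hcase with h | ⟨y, hy, oy⟩ | ⟨y, hy, oy⟩ | ⟨y, z, hy, hz, o⟩
    · right
      rcases key x hx h with h | h
      · exact Or.inl h
      · exact Or.inr (Or.inl h)
    · right; right; right
      exact ⟨y, x, by rw [hy]; exact one_ne_zero, hx, oy⟩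
    · right; right; right
      exact ⟨y, x, by rw [hy]; exact neg_ne_zero.mpr one_ne_zero, hx, oy⟩
    · have fin : ∀ w, f w w ≠ 0 → Om f (rho f w * b) → Om f b ∨ Cl f 1 b ∨ Cl f (-1) b ∨
        ∃ x y, f x x ≠ 0 ∧ f y y ≠ 0 ∧ Om f (rho f x * (rho f y * b)) := by
        intro w hw ow
        rcases key w hw ow with h | h
        · exact Or.inr (Or.inl h)
        · exact Or.inr (Or.inr (Or.inl h))
      obtain ⟨x1, hx1, ex⟩ := norm_pm hsq hx
      obtain ⟨y1, hy1, ey⟩ := norm_pm hsq hy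
      obtain ⟨z1, hz1, ez⟩ := norm_pm hsq hz
      rw [hb', ← ex, ← ey, ← ez] at o
      have n1 : f x1 x1 ≠ 0 := by rcases hx1 with h | h <;> rw [h] <;> simp
      have n2 : f y1 y1 ≠ 0 := by rcases hy1 with h | h <;> rw [h] <;> simp
      have n3 : f z1 z1 ≠ 0 := by rcases hz1 with h | h <;> rw [h] <;> simp
      have tri : f z1 z1 = f y1 y1 ∨ f x1 x1 = f z1 z1 ∨ f x1 x1 = f y1 y1 := by
        rcases hx1 with h | h <;> rcases hy1 with h' | h' <;> rcases hz1 with h'' | h'' <;>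
          simp [h, h', h'']
      rcases tri with t | t | t
      · refine fin x1 n1 ?_
        have := (rho_rho h2 q n3 t).mul o
        have e : rho f z1 * rho f y1 * (rho f y1 * (rho f z1 * (rho f x1 * b))) = rho f x1 * b := by
          calc _ = rho f z1 * (rho f y1 * rho f y1) * rho f z1 * (rho f x1 * b) := by
                simp only [mul_assoc]
            _ = _ := by rw [rho_sq n2, mul_one, rho_sq n3, one_mul]
        rwa [e] at this
      · refine fin y1 n2 ?_
        have := o.mul (Om.conj (IsoP.invol ab hb) (rho_rho h2 q n1 t))
        have e : rho f y1 * (rho f z1 * (rho f x1 * b)) * (b * (rho f x1 * rho f z1) * b)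
            = rho f y1 * b := by
          calc _ = rho f y1 * (rho f z1 * (rho f x1 * (b * b) * rho f x1) * rho f z1) * b := by
                simp only [mul_assoc]
            _ = _ := by rw [hb, mul_one, rho_sq n1, mul_one, rho_sq n3, mul_one]
        rwa [e] at this
      · set w := rho f y1 z1 with hw
        have nw : f w w ≠ 0 := by rw [hw, (rho_iso q n2).map]; exact n3
        refine fin w nw ?_
        have ew := rho_conj q (rho_iso q n2) z1
        have := (Om.conj (rho_iso q nw) (rho_rho h2 q n1 t)).mul o
        have e : rho f w * (rho f x1 * rho f y1) * rho f w * (rho f y1 * (rho f z1 * (rho f x1 * b)))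
            = rho f w * b := by
          rw [← hw] at ew
          have h5 : rho f w * rho f y1 = rho f y1 * rho f z1 := by
            rw [← ew, mul_assoc, rho_sq n2, mul_one]
          calc _ = rho f w * (rho f x1 * rho f y1) * (rho f w * rho f y1) * (rho f z1 * (rho f x1 * b)) := by
                simp only [mul_assoc]
            _ = rho f w * (rho f x1 * (rho f y1 * rho f y1) * (rho f z1 * rho f z1) * rho f x1) * b := by
                rw [h5]; simp only [mul_assoc]
            _ = _ := by rw [rho_sq n2, mul_one, rho_sq n3, mul_one, rho_sq n1, mul_one]
        rwa [e] at this

theorem invol_odd [FiniteDimensional K V] (h2 : (2 : K) ≠ 0)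
    (hsq : ∀ d : K, ∃ a, d = a * a ∨ d = -(a * a)) (q : QS f) {b : Module.End K V}
    (ab : Adj f b b) (hb : b * b = 1) (hdet : LinearMap.det b = -1) : Cl f 1 b ∨ Cl f (-1) b := by
  have h11 : (1 : K) ≠ -1 := by
    intro h; apply h2; linear_combination h
  rcases invol_cases h2 hsq q _ b ab hb rfl with h | h | h | ⟨x, y, hx, hy, h⟩
  · have := h.det; rw [hdet] at this; exact absurd this.symm h11
  · exact Or.inl h
  · exact Or.inr h
  · have := h.det
    rw [map_mul, map_mul, rho_det hx, rho_det hy, hdet] at this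
    exact absurd this (by intro h; apply h11; linear_combination -h)

lemma Cl.det [FiniteDimensional K V] {d : K} (hd : d ≠ 0) {g : Module.End K V} (h : Cl f d g) :
    LinearMap.det g = -1 := by
  obtain ⟨x, hx, ox⟩ := h
  have := ox.det
  rw [map_mul, rho_det (by rw [hx]; exact hd)] at this
  linear_combination -this
end
end Biref
namespace Biref
universe u v
variable {K : Type u} [Field K] {V : Type v} [AddCommGroup V] [Module K V]

lemma end_finite [Finite K] [FiniteDimensional K V] : Finite (Module.End K V) := by
  have : Finite V := Module.finite_of_finite K
  exact DFunLike.finite _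

lemma unit_pow_one [Finite K] [FiniteDimensional K V] {x : Module.End K V} (h : IsUnit x) :
    ∃ r, x ^ (r + 1) = 1 := by
  have := end_finite (K := K) (V := V)
  obtain ⟨w, rfl⟩ := h
  have := isOfFinOrder_of_finite w
  obtain ⟨n, hn, h⟩ := isOfFinOrder_iff_pow_eq_one.mp this
  refine ⟨n - 1, ?_⟩
  rw [Nat.sub_add_cancel hn, ← Units.val_pow_eq_pow_val, h]; rfl

lemma unit_inv_poly [Finite K] [FiniteDimensional K V] {c : Module.End K V} {g : K[X]}
    (h : IsUnit (aeval c g)) : ∃ g' : K[X], aeval c g * aeval c g' = 1 := by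
  obtain ⟨r, hr⟩ := unit_pow_one h
  exact ⟨g ^ r, by rw [map_pow, ← pow_succ', hr]⟩

lemma lemmaH_res (p : ℕ) [CharP K p] [hp : Fact p.Prime] (hp2 : p ≠ 2) [Finite K]
    [FiniteDimensional K V] [Nontrivial V] (c : Module.End K V)
    (hloc : ∀ g : K[X], IsNilpotent (aeval c g : Module.End K V) ∨
      IsUnit (aeval c g : Module.End K V)) (d g : K[X]) (hd : IsUnit (aeval c d)) :
    ∃ a b : K[X], IsNilpotent (aeval c (a * a - d * (b * b) - g)) := by
  have h2 := two_ne (K := K) p hp2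
  have := end_finite (K := K) (V := V)
  set I : Ideal K[X] := (RingHom.ker (aeval c : K[X] →ₐ[K] Module.End K V)).radical with hI
  have mem : ∀ x, x ∈ I ↔ IsNilpotent (aeval c x) := by
    intro x
    rw [hI, Ideal.mem_radical_iff]
    constructor
    · rintro ⟨n, hn⟩; exact ⟨n, by rw [← map_pow]; exact hn⟩
    · rintro ⟨n, hn⟩; exact ⟨n, by rw [← map_pow] at hn; exact hn⟩
  have unit_not : ∀ x : Module.End K V, IsUnit x → ¬ IsNilpotent x := fun x h h' =>
    h'.not_isUnit h
  have hmax : I.IsMaximal := by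
    rw [Ideal.isMaximal_iff]
    refine ⟨fun h => unit_not _ (by rw [map_one]; exact isUnit_one) ((mem 1).mp h), ?_⟩
    intro J x hIJ hx hxJ
    have hu := (hloc x).resolve_left fun h => hx ((mem x).mpr h)
    obtain ⟨r, hr⟩ := unit_pow_one hu
    have h1 : x ^ (r + 1) - 1 ∈ J := hIJ ((mem _).mpr (by
      rw [map_sub, map_pow, hr, map_one, sub_self]; exact IsNilpotent.zero))
    have h3 : x ^ (r + 1) ∈ J := J.pow_mem_of_mem hxJ _ (Nat.succ_pos _)
    have := J.sub_mem h3 h1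
    simpa using this
  letI : Field (K[X] ⧸ I) := Ideal.Quotient.field I
  have hfin : Finite (K[X] ⧸ I) := by
    refine Finite.of_injective (fun x : K[X] ⧸ I => aeval c (Quotient.out x)) ?_
    intro x y hxy
    have : Ideal.Quotient.mk I (Quotient.out x) = Ideal.Quotient.mk I (Quotient.out y) := by
      rw [Ideal.Quotient.eq, mem, map_sub]
      simp only at hxy
      rw [hxy, sub_self]; exact IsNilpotent.zero
    have e : ∀ z : K[X] ⧸ I, Ideal.Quotient.mk I (Quotient.out z) = z := fun z => Quotient.out_eq z
    rwa [e, e] at this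
  letI : Fintype (K[X] ⧸ I) := Fintype.ofFinite _
  set π := Ideal.Quotient.mk I
  have hcard : Fintype.card (K[X] ⧸ I) % 2 = 1 := by
    apply FiniteField.odd_card_of_char_ne_two
    intro h
    have h3 : ((2 : ℕ) : K[X] ⧸ I) = 0 := by rw [← h]; exact CharP.cast_eq_zero _ _
    have h4 : π (C (2 : K)) = 0 := by
      have : (C (2 : K) : K[X]) = 2 := map_ofNat C 2
      rw [this, map_ofNat]; exact_mod_cast h3
    rw [Ideal.Quotient.eq_zero_iff_mem, mem] at h4
    refine unit_not _ ?_ h4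
    rw [aeval_C]
    exact (IsUnit.mk0 _ h2).map (algebraMap K _)
  have hd' : π d ≠ 0 := by
    rw [Ne, Ideal.Quotient.eq_zero_iff_mem, mem]; exact unit_not _ hd
  obtain ⟨a, b, hab⟩ := FiniteField.exists_root_sum_quadratic
    (f := (X ^ 2 - C (π g) : (K[X] ⧸ I)[X])) (g := C (-π d) * X ^ 2)
    (degree_X_pow_sub_C (by decide) _) (degree_C_mul_X_pow 2 (neg_ne_zero.mpr hd')) hcard
  obtain ⟨a, rfl⟩ := Ideal.Quotient.mk_surjective a
  obtain ⟨b, rfl⟩ := Ideal.Quotient.mk_surjective b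
  refine ⟨a, b, (mem _).mp ?_⟩
  rw [← Ideal.Quotient.eq_zero_iff_mem]
  simp only [eval_sub, eval_pow, eval_X, eval_C, eval_mul] at hab
  simp only [map_sub, map_mul]
  rw [← hab]; ring

theorem lemmaH (p : ℕ) [CharP K p] [hp : Fact p.Prime] (hp2 : p ≠ 2) [Finite K]
    [FiniteDimensional K V] [Nontrivial V] (c : Module.End K V)
    (hloc : ∀ g : K[X], IsNilpotent (aeval c g : Module.End K V) ∨
      IsUnit (aeval c g : Module.End K V)) (d g : K[X]) (hd : IsUnit (aeval c d))
    (hg : IsUnit (aeval c g)) :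
    ∃ a b : K[X], aeval c (a * a - d * (b * b)) = aeval c g := by
  obtain ⟨a, b, hab⟩ := lemmaH_res p hp2 c hloc d g hd
  obtain ⟨g', hg'⟩ := unit_inv_poly hg
  set m := g' * (a * a - d * (b * b)) with hm
  have hgg : aeval c (g * g') = 1 := by rw [map_mul, hg']
  have hn : IsNilpotent (aeval c m - 1) := by
    have e : aeval c m - 1 = aeval c g' * aeval c (a * a - d * (b * b) - g) := by
      rw [← map_mul, ← hgg, ← map_sub]; congr 1; rw [hm]; ring
    rw [e]
    refine Commute.isNilpotent_mul_left ?_ hab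
    exact (Commute.all _ _).map (aeval c)
  obtain ⟨k, hk⟩ := unip' (K := K) p hn
  have h1 := hk k le_rfl
  obtain ⟨l, hl⟩ : Odd (p ^ k) := (hp.out.odd_of_ne_two hp2).pow
  refine ⟨a * m ^ l, b * m ^ l, ?_⟩
  have e : a * m ^ l * (a * m ^ l) - d * (b * m ^ l * (b * m ^ l))
      = g * m ^ (p ^ k) - (g * g' - 1) * ((a * a - d * (b * b)) * m ^ (2 * l)) := by
    rw [hl, pow_succ, hm]; ring
  rw [e, map_sub, map_mul, map_pow, h1, mul_one, map_mul _ (g * g' - 1), map_sub, hgg, map_one,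
    sub_self, zero_mul, sub_zero]
end Biref
namespace Biref
universe u v
variable {K : Type u} [Field K] {V : Type v} [AddCommGroup V] [Module K V]
  {f : LinearMap.BilinForm K V} {c N s : Module.End K V}

lemma semi_aeval {c' : Module.End K V} (h : s * c = c' * s) (g : K[X]) :
    s * aeval c g = aeval c' g * s := by
  induction g using Polynomial.induction_on' with
  | add a b ha hb => rw [map_add, mul_add, ha, hb, map_add, add_mul]
  | monomial n a =>
    have : ∀ n, s * c ^ n = c' ^ n * s := by
      intro n
      induction n with
      | zero => simp
      | succ n ih => rw [pow_succ, ← mul_assoc, ih, mul_assoc, h, pow_succ, mul_assoc]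
    rw [aeval_monomial, aeval_monomial, ← Algebra.smul_def, ← Algebra.smul_def, mul_smul_comm, this,
      smul_mul_assoc]

lemma s_aeval (h : s * c = -(c * s)) (g : K[X]) :
    s * aeval c g = aeval c (g.comp (-X)) * s := by
  rw [semi_aeval (c' := -c) (by rw [h, neg_mul]), aeval_comp]; simp

lemma aeval_comm (a b : K[X]) : aeval c a * aeval c b = aeval c b * aeval c a := by
  rw [← map_mul, mul_comm, map_mul]

lemma loc_or_e (p : ℕ) [CharP K p] [hp : Fact p.Prime] (hp2 : p ≠ 2) [Finite K]
    [FiniteDimensional K V] (S : Sys f c N s (-1) 1 1) (hI : Indec f c N s) :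
    (∃ e, Adj f e e ∧ e * e = 1 ∧ c * e = e * c ∧ N * e = e * N ∧ s * e = -(e * s)) ∨
    ∀ g : K[X], IsNilpotent (aeval c g) ∨ IsUnit (aeval c g) := by
  have hsc : s * c = -(c * s) := by simpa using S.sc
  have hfit : ∀ g : K[X], s * aeval c g = aeval c g * s → IsNilpotent (aeval c g) ∨ IsUnit (aeval c g) := by
    intro g hg
    refine fit (a1 := 1) (a2 := 1) (a3 := 1) (δ := 1) S.q hI (by rw [one_smul]; exact S.cc.aeval g) ?_ ?_ ?_
    · rw [one_smul]; exact (commute_aeval rfl g).symm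
    · rw [one_smul]; exact commN S.cn g
    · rw [one_smul]; exact hg.symm
  by_cases hbad : ∃ g : K[X], IsNilpotent (aeval c (g * g.comp (-X))) ∧ IsUnit (aeval c (g + g.comp (-X)))
  · left
    obtain ⟨g, hn, hu⟩ := hbad
    obtain ⟨h', hh'⟩ := unit_inv_poly hu
    set h := g + g.comp (-X) with hh
    have hcc : (g.comp (-X)).comp (-X) = g := by rw [comp_assoc]; simp
    have hhs : s * aeval c h = aeval c h * s := by
      rw [s_aeval hsc, hh, add_comp, hcc, add_comm]
    have hh's : s * aeval c h' = aeval c h' * s := by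
      have h1 : aeval c h' * aeval c h = 1 := by rw [aeval_comm, hh']
      calc s * aeval c h' = (aeval c h' * aeval c h) * s * aeval c h' := by rw [h1, one_mul]
        _ = aeval c h' * (s * aeval c h) * aeval c h' := by rw [hhs]; simp only [mul_assoc]
        _ = aeval c h' * s * (aeval c h * aeval c h') := by simp only [mul_assoc]
        _ = _ := by rw [hh', mul_one]
    set e1 := (g - g.comp (-X)) * h' with he1
    have he1s : s * aeval c e1 = -(aeval c e1 * s) := by
      rw [he1, map_mul, ← mul_assoc, s_aeval hsc, sub_comp, hcc, mul_assoc, hh's, ← mul_assoc,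
        ← map_mul, ← map_mul, ← neg_mul, ← map_neg]
      congr 2; ring
    have hnil : IsNilpotent (aeval c (e1 * e1) - 1) := by
      have e : aeval c (e1 * e1) - 1 = aeval c (-(4 * h' * h')) * aeval c (g * g.comp (-X)) := by
        have h1 : aeval c (h * h' * (h * h')) = 1 := by rw [map_mul, map_mul, hh', one_mul]
        rw [← map_mul, ← h1, ← map_sub]; congr 1; rw [he1, hh]; ring
      rw [e]
      exact Commute.isNilpotent_mul_left ((Commute.all _ _).map (aeval c)) hn
    obtain ⟨k, hk⟩ := unip' (K := K) p hnil
    have h1 := hk k le_rfl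
    have hodd : Odd (p ^ k) := (hp.out.odd_of_ne_two hp2).pow
    refine ⟨aeval c (e1 ^ (p ^ k)), S.cc.aeval _, ?_, commute_aeval rfl _, (commN S.cn _).symm, ?_⟩
    · rw [← map_mul, ← mul_pow, map_pow, h1]
    · have : ∀ m, s * (aeval c e1) ^ m = ((-1 : ℤ) ^ m) • ((aeval c e1) ^ m * s) := by
        intro m
        induction m with
        | zero => simp
        | succ m ih =>
          rw [pow_succ, ← mul_assoc, ih, smul_mul_assoc, mul_assoc, he1s, pow_succ]
          simp [mul_assoc]
      rw [map_pow, this, hodd.neg_one_pow]; simp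
  · right
    push Not at hbad
    intro g
    have hcc : (g.comp (-X)).comp (-X) = g := by rw [comp_assoc]; simp
    rcases hfit (g * g.comp (-X)) (by rw [s_aeval hsc, mul_comp, hcc, mul_comm]) with h | h
    · rcases hfit (g + g.comp (-X)) (by rw [s_aeval hsc, add_comp, hcc, add_comm]) with h' | h'
      · left
        have : IsNilpotent (aeval c g ^ 2) := by
          have e : aeval c g ^ 2 = aeval c g * aeval c (g + g.comp (-X)) - aeval c (g * g.comp (-X)) := by
            rw [← map_mul, ← map_sub, ← map_pow]; congr 1; ring
          rw [e]
          refine Commute.isNilpotent_sub ?_ (Commute.isNilpotent_mul_left ((Commute.all _ _).map (aeval c)) h') h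
          rw [← map_mul]
          exact (Commute.all _ _).map (aeval c)
        obtain ⟨n, hn⟩ := this
        exact ⟨2 * n, by rw [pow_mul, hn]⟩
      · exact absurd h' (hbad g h)
    · right
      rw [map_mul] at h
      have hc : Commute (aeval c g) (aeval c (g.comp (-X))) := aeval_comm _ _
      exact (hc.isUnit_mul_iff.mp h).1

lemma eigen_polar (h2 : (2 : K) ≠ 0) (q : QS f) (as : Adj f s s) (ss : s * s = 1)
    {Z : Module.End K V} (aZ : Adj f Z Z) (hZ : Z ≠ 0) (hZs : Z * s = s * Z) :
    ∃ (x : V) (ε : K), ε * ε = 1 ∧ s x = ε • x ∧ f (Z x) x ≠ 0 := by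
  have key : ∀ ε : K, ε * ε = 1 → Z * (1 + ε • s) ≠ 0 →
      ∃ (x : V) (ε : K), ε * ε = 1 ∧ s x = ε • x ∧ f (Z x) x ≠ 0 := by
    intro ε hε h
    have a1 : Adj f (1 + ε • s) (1 + ε • s) := Adj.one.add (as.smul ε)
    have c1 : Z * (1 + ε • s) = (1 + ε • s) * Z := by
      rw [mul_add, add_mul, mul_smul_comm, hZs]; simp
    have a2 : Adj f (Z * (1 + ε • s)) (Z * (1 + ε • s)) := by
      have := aZ.mul a1; rwa [← c1] at this
    obtain ⟨y, hy⟩ := polar h2 q a2 h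
    have sq : (1 + ε • s) * (1 + ε • s) = (2 : K) • (1 + ε • s) := by
      rw [add_mul, mul_add, mul_add, smul_mul_smul_comm, hε, ss]
      simp only [one_mul, mul_one]; module
    refine ⟨(1 + ε • s) y, ε, hε, ?_, ?_⟩
    · have : s * (1 + ε • s) = ε • (1 + ε • s) := by
        rw [mul_add, mul_smul_comm, ss, smul_add, smul_smul, hε]; simp [add_comm]
      rw [← Module.End.mul_apply, this]; rfl
    · rw [← a1, ← Module.End.mul_apply, ← Module.End.mul_apply, ← c1, mul_assoc, sq,
        mul_smul_comm, LinearMap.smul_apply, map_smul, LinearMap.smul_apply, smul_eq_mul]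
      exact mul_ne_zero h2 hy
  by_cases h1 : Z * (1 + (1 : K) • s) = 0
  · by_cases h3 : Z * (1 + (-1 : K) • s) = 0
    · exfalso; apply hZ
      have : (2 : K) • Z = Z * (1 + (1 : K) • s) + Z * (1 + (-1 : K) • s) := by
        rw [mul_add, mul_add, mul_smul_comm, mul_smul_comm, mul_one]; module
      rw [h1, h3, add_zero] at this
      exact (smul_eq_zero.mp this).resolve_left h2
    · exact key (-1) (by ring) h3
  · exact key 1 (by ring) h1

lemma tw {u u' G X : Module.End K V} (huu' : u * u' = 1)
    (hG : ∀ x y, f (u x) (u y) = f (G x) y) (hX : ∀ x y, f (G (X x)) (X y) = f (G x) y) (x y : V) :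
    f ((u * X * u') x) ((u * X * u') y) = f x y := by
  simp only [Module.End.mul_apply]
  rw [hG, hX, ← hG, ← Module.End.mul_apply, ← Module.End.mul_apply, huu']; rfl

end Biref
namespace Biref
universe u v
variable {K : Type u} [Field K] {V : Type v} [AddCommGroup V] [Module K V]
  {f : LinearMap.BilinForm K V} {c N s : Module.End K V}

structure UC (f : LinearMap.BilinForm K V) (c N G G' u u' : Module.End K V) : Prop where
  r : u * u' = 1
  l : u' * u = 1
  uc : u * c = c * u
  uN : u * N = N * u
  u'c : u' * c = c * u'
  u'N : u' * N = N * u'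
  adj : ∀ (X Y : Module.End K V) (δ : K), Adj f X Y → Y * G = δ • (G * X) →
    Adj f (u * X * u') (δ • (u * X * u'))
  fG : ∀ x y, f (u x) (u y) = f (G x) y

lemma uc_exists (q : QS f) (ac : Adj f c c) (aN : Adj f N (-N)) (hcn : c * N = N * c)
    (n2 : N * N = c * c - (4 : K) • 1) {P Q g g' : K[X]}
    (h : aeval c (P * P - (X * X - C 4) * (Q * Q)) = aeval c g)
    (hg : aeval c g * aeval c g' = 1) : ∃ u u', UC f c N (aeval c g) (aeval c g') u u' := by
  set G := aeval c g with hG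
  set G' := aeval c g' with hG'
  have hg' : G' * G = 1 := by rw [aeval_comm]; exact hg
  have cN := commN hcn
  have nn : aeval c (X * X - C 4 : K[X]) = N * N := by
    rw [n2]; simp [Algebra.algebraMap_eq_smul_one]
  have e : aeval c P * aeval c P - N * N * (aeval c Q * aeval c Q) = G := by
    rw [← h, map_sub, map_mul, map_mul, nn, map_mul]
  set u := aeval c P + aeval c Q * N with hu
  set w := aeval c P - aeval c Q * N with hw
  have qn : aeval c Q * N * (aeval c Q * N) = N * N * (aeval c Q * aeval c Q) := by
    calc _ = aeval c Q * (N * aeval c Q) * N := by simp only [mul_assoc]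
      _ = (aeval c Q * aeval c Q) * (N * N) := by rw [← cN]; simp only [mul_assoc]
      _ = _ := by rw [← map_mul, ← mul_assoc, cN, mul_assoc, cN, mul_assoc]
  have pq : aeval c P * (aeval c Q * N) = aeval c Q * N * aeval c P := by
    rw [← mul_assoc, aeval_comm, mul_assoc, cN, mul_assoc]
  have uw : u * w = G := by
    rw [hu, hw, add_mul, mul_sub, mul_sub, qn, pq, ← e]; abel
  have wu : w * u = G := by
    rw [hu, hw, sub_mul, mul_add, mul_add, qn, pq, ← e]; abel
  have com : ∀ Y : Module.End K V, Y * c = c * Y → Y * N = N * Y →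
      u * Y = Y * u ∧ w * Y = Y * w := by
    intro Y h1 h3
    have hp := commute_aeval h1 P
    have hq : Y * (aeval c Q * N) = aeval c Q * N * Y := by
      rw [← mul_assoc, commute_aeval h1, mul_assoc, h3, mul_assoc]
    constructor
    · rw [hu, add_mul, mul_add, hp, hq]
    · rw [hw, sub_mul, mul_sub, hp, hq]
  have G'c : G' * c = c * G' := (commute_aeval rfl g').symm
  have G'N : G' * N = N * G' := cN g'
  have uG' : u * G' = G' * u := (com G' G'c G'N).1
  have wG' : w * G' = G' * w := (com G' G'c G'N).2
  have cc := com c rfl hcn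
  have cn := com N hcn.symm rfl
  have au : Adj f u w := by
    have := (ac.aeval P).add ((ac.aeval Q).mul aN)
    rw [neg_mul, ← sub_eq_add_neg, ← cN] at this
    exact this
  have aw := au.swap q
  have uGw : ∀ Y, u * Y * (w * G') = u * Y * w * G' := fun Y => by simp only [mul_assoc]
  refine ⟨u, w * G', ?_, ?_, cc.1, cn.1, ?_, ?_, ?_, ?_⟩
  · rw [← mul_assoc, uw, hg]
  · rw [mul_assoc, ← uG', ← mul_assoc, wu, hg]
  · rw [mul_assoc, G'c, ← mul_assoc, cc.2, mul_assoc]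
  · rw [mul_assoc, G'N, ← mul_assoc, cn.2, mul_assoc]
  · intro Y Z δ hY hZ
    have h1 := (au.mul hY).mul (aw.mul (ac.aeval g'))
    have h3 : G' * Z = δ • (Y * G') := by
      calc G' * Z = G' * (Z * G) * G' := by simp only [mul_assoc, hg, mul_one]
        _ = δ • ((G' * G) * Y * G') := by
          rw [hZ]; simp only [mul_smul_comm, smul_mul_assoc, mul_assoc]
        _ = _ := by rw [hg', one_mul]
    have e : G' * u * (Z * w) = δ • (u * Y * (w * G')) := by
      calc G' * u * (Z * w) = u * (G' * Z) * w := by rw [← uG']; simp only [mul_assoc]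
        _ = δ • (u * Y * (G' * w)) := by
          rw [h3]; simp only [mul_smul_comm, smul_mul_assoc, mul_assoc]
        _ = _ := by rw [wG']
    rwa [e] at h1
  · intro x y
    rw [q.symm, au y (u x), q.symm]
    rw [← Module.End.mul_apply, wu]

lemma UC.mul {G G' u u' X Y : Module.End K V} (h : UC f c N G G' u u') :
    u * X * u' * (u * Y * u') = u * (X * Y) * u' := by
  calc _ = u * X * (u' * u) * Y * u' := by simp only [mul_assoc]
    _ = _ := by rw [h.l]; simp only [mul_assoc, one_mul]

lemma UC.inv {g : K[X]} {G' u u' b : Module.End K V} (h : UC f c N (aeval c g) G' u u')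
    (hb : Inv f c N b) : Inv f c N (u * b * u') := by
  refine ⟨?_, ?_, ?_, ?_⟩
  · have := h.adj b b 1 hb.adj (by rw [one_smul]; exact commute_aeval hb.bc g)
    rwa [one_smul] at this
  · rw [h.mul, hb.sq, mul_one, h.r]
  · rw [mul_assoc, h.u'c, ← mul_assoc, mul_assoc u, hb.bc, ← mul_assoc, h.uc]; simp only [mul_assoc]
  · rw [mul_assoc, h.u'N, ← mul_assoc, mul_assoc u, hb.bN, mul_neg, ← mul_assoc, h.uN]
    simp only [mul_assoc, neg_mul]

lemma caseB_cu1 (p : ℕ) [CharP K p] [hp : Fact p.Prime] (hp2 : p ≠ 2)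
    [FiniteDimensional K V] [Nontrivial V] (S : Sys f c N s (-1) 1 1) (hI : Indec f c N s)
    (hloc : ∀ g : K[X], IsNilpotent (aeval c g) ∨ IsUnit (aeval c g)) (hN : IsUnit N)
    (hc : IsUnit c) : ∃ b, Inv f c N b ∧ s * b = b * s := by
  have h2 := two_ne (K := K) p hp2
  have hsc : s * c = -(c * s) := by simpa using S.sc
  have hsn : s * N = N * s := by simpa using S.sn
  have ass : Adj f s s := by simpa using S.ss
  have s2 : s * s = 1 := by simpa using S.s2
  obtain ⟨Z, hZ, hZ'⟩ := lemmaM c hloc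
  have hcc : ∀ g : K[X], (g.comp (-X)).comp (-X) = g := fun g => by rw [comp_assoc]; simp
  have sig : ∀ g : K[X], aeval c (g.comp (-X)) = s * aeval c g * s := fun g => by
    rw [s_aeval hsc, mul_assoc, s2, mul_one]
  obtain ⟨S0, h0, hs0, hS0⟩ : ∃ S0 : K[X], aeval c S0 ≠ 0 ∧ aeval c S0 * s = s * aeval c S0 ∧
      ∀ g : K[X], aeval c g ≠ 0 → ∃ h, aeval c (h * g) = aeval c S0 := by
    by_cases hz : aeval c (Z + Z.comp (-X)) = 0
    · refine ⟨X * Z, ?_, ?_, ?_⟩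
      · rw [map_mul, aeval_X]
        intro h; exact hZ ((hc.mul_right_eq_zero).mp h)
      · have h1 : aeval c (Z.comp (-X)) = - aeval c Z := by
          rw [map_add] at hz; exact eq_neg_of_add_eq_zero_right hz
        rw [map_mul, aeval_X, ← mul_assoc, hsc, neg_mul, mul_assoc c s, s_aeval hsc, h1]
        simp [mul_assoc]
      · intro g hg
        obtain ⟨h, hh⟩ := hZ' g hg
        exact ⟨X * h, by rw [mul_assoc, map_mul, hh, map_mul]⟩
    · refine ⟨_, hz, ?_, ?_⟩
      · rw [s_aeval hsc, add_comp, hcc, add_comm]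
      · obtain ⟨h1, hh1⟩ := hZ' (Z.comp (-X)) (by
          rw [sig]; intro h
          apply hZ
          calc aeval c Z = s * s * aeval c Z * (s * s) := by rw [s2, one_mul, mul_one]
            _ = s * (s * aeval c Z * s) * s := by simp only [mul_assoc]
            _ = 0 := by rw [h]; simp)
        have : aeval c (h1.comp (-X) * Z) = aeval c (Z.comp (-X)) := by
          rw [sig Z, ← hh1, ← sig, mul_comp, hcc]
        intro g hg
        obtain ⟨h, hh⟩ := hZ' g hg
        refine ⟨(1 + h1.comp (-X)) * h, ?_⟩
        rw [mul_assoc, map_mul, hh, map_add, map_add, ← this, add_mul, ← map_mul]; simp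
  obtain ⟨x, ε, hε, hsx, hx⟩ := eigen_polar h2 S.q ass s2 (S.cc.aeval S0) h0 hs0
  have hnd := cyc_nd h2 S.q S.cc S.nn S.cn S.n2 hN hx hS0
  have scyc : ∀ a b, s (cycP c N x (a, b)) = ε • cycP c N x (a.comp (-X), b.comp (-X)) := by
    intro a b
    rw [cycP_apply, cycP_apply, map_add, ← Module.End.mul_apply, ← Module.End.mul_apply,
      s_aeval hsc, s_aeval hsc, Module.End.mul_apply, Module.End.mul_apply,
      ← Module.End.mul_apply s N, hsn, Module.End.mul_apply, hsx]
    simp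
  have htop : LinearMap.range (cycP c N x) = ⊤ := by
    refine (hI _ (cyc_c x) ?_ ?_ hnd).resolve_left fun h => ?_
    · rintro v ⟨⟨a, b⟩, rfl⟩
      exact ⟨_, (cyc_N S.cn S.n2 x a b).symm⟩
    · rintro v ⟨⟨a, b⟩, rfl⟩
      rw [scyc]; exact Submodule.smul_mem _ _ ⟨_, rfl⟩
    · have h1 : cycP c N x (1, 0) ∈ LinearMap.range (cycP c N x) := ⟨_, rfl⟩
      rw [h, Submodule.mem_bot, cycP_apply] at h1
      simp at h1
      rw [h1] at hx
      simp at hx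
  obtain ⟨b, hb, hb'⟩ := cyc_flip h2 S.q S.cc S.nn S.cn S.n2 htop
  refine ⟨b, hb, ?_⟩
  ext v
  obtain ⟨⟨a, a'⟩, rfl⟩ : v ∈ LinearMap.range (cycP c N x) := by rw [htop]; trivial
  rw [Module.End.mul_apply, Module.End.mul_apply, hb', scyc, scyc, map_smul, hb', neg_comp]

lemma caseB_cu (p : ℕ) [CharP K p] [hp : Fact p.Prime] (hp2 : p ≠ 2) [Finite K]
    [FiniteDimensional K V] [Nontrivial V] (S : Sys f c N s (-1) 1 1) (hI : Indec f c N s)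
    (hloc : ∀ g : K[X], IsNilpotent (aeval c g) ∨ IsUnit (aeval c g)) (hN : IsUnit N)
    (hc : IsUnit c) : ∃ b, Inv f c N b ∧ Om f b := by
  obtain ⟨b, hb, hsb⟩ := caseB_cu1 p hp2 S hI hloc hN hc
  have hsc : s * c = -(c * s) := by simpa using S.sc
  have ass : Adj f s s := by simpa using S.ss
  have s2 : s * s = 1 := by simpa using S.s2
  have csq : ∀ g : K[X], aeval (c * c) g = aeval c (g.comp (X * X)) := fun g => by
    rw [aeval_comp]; simp
  obtain ⟨a, b', hab⟩ := lemmaH p hp2 (c * c) (fun g => by rw [csq]; exact hloc _) X (-1)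
    (by rw [aeval_X]; exact hc.mul hc) (by rw [map_neg, map_one]; exact isUnit_one.neg)
  set A : K[X] := a.comp (X * X) with hA
  set B : K[X] := b'.comp (X * X) with hB
  have hA' : A.comp (-X) = A := by rw [hA, comp_assoc]; simp
  have hB' : B.comp (-X) = B := by rw [hB, comp_assoc]; simp
  have hh : aeval c ((A + B * X) * (A - B * X)) = -1 := by
    rw [csq, csq] at hab
    rw [sub_comp, mul_comp, mul_comp, mul_comp, X_comp, ← hA, ← hB] at hab
    have e : (A + B * X) * (A - B * X) = A * A - X * X * (B * B) := by ring
    rw [e, hab]; simp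
  set h := A + B * X with hh1
  set h' := A - B * X with hh2
  have hσ : h.comp (-X) = h' := by rw [hh1, hh2, add_comp, mul_comp, hA', hB', X_comp]; ring
  have h'σ : h'.comp (-X) = h := by rw [hh1, hh2, sub_comp, mul_comp, hA', hB', X_comp]; ring
  have sh : s * aeval c h = aeval c h' * s := by rw [s_aeval hsc, hσ]
  have sh' : s * aeval c h' = aeval c h * s := by rw [s_aeval hsc, h'σ]
  rw [map_mul] at hh
  have hh' : aeval c h' * aeval c h = -1 := by rw [aeval_comm, hh]
  have uh' : IsUnit (aeval c h') := by
    refine ⟨⟨aeval c h', -aeval c h, ?_, ?_⟩, rfl⟩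
    · rw [mul_neg, hh', neg_neg]
    · rw [neg_mul, hh, neg_neg]
  have uG : IsUnit (aeval c (X * h')) := by rw [map_mul, aeval_X]; exact hc.mul uh'
  have nn : aeval c (X * X - C 4 : K[X]) = N * N := by
    rw [S.n2]; simp [Algebra.algebraMap_eq_smul_one]
  obtain ⟨P, Q, hPQ⟩ := lemmaH p hp2 c hloc (X * X - C 4) (X * h') (by rw [nn]; exact hN.mul hN) uG
  obtain ⟨g', hg'⟩ := unit_inv_poly uG
  obtain ⟨u, u', U⟩ := uc_exists S.q S.cc S.nn S.cn S.n2 hPQ hg'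
  refine ⟨u * b * u', U.inv hb, ?_⟩
  have hbi := U.inv hb
  have bh : b * aeval c h = aeval c h * b := commute_aeval hb.bc h
  refine lemmaC p hp2 S.q hbi.adj hbi.sq (J := u * (aeval c h * s) * u') ?_ ?_ ?_
  · have := U.adj (aeval c h * s) (s * aeval c h) (-1) ((S.cc.aeval h).mul ass) ?_
    · simpa using this
    · rw [map_mul, aeval_X, neg_one_smul]
      calc s * aeval c h * (c * aeval c h') = aeval c h' * (s * c) * aeval c h' := by
            rw [sh]; simp only [mul_assoc]
        _ = -(aeval c h' * c * (s * aeval c h')) := by rw [hsc]; simp only [mul_neg, neg_mul, mul_assoc]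
        _ = -(c * aeval c h' * (aeval c h * s)) := by
            rw [sh', (commute_aeval rfl h' : c * aeval c h' = aeval c h' * c)]
  · have e : aeval c h * s * (aeval c h * s) = -1 := by
      calc _ = aeval c h * (s * aeval c h) * s := by simp only [mul_assoc]
        _ = aeval c h * aeval c h' * (s * s) := by rw [sh]; simp only [mul_assoc]
        _ = _ := by rw [hh, s2, mul_one]
    rw [U.mul, e, mul_neg, neg_mul, mul_one, U.r]
  · rw [U.mul, U.mul, mul_assoc (aeval c h), hsb, ← mul_assoc b, bh, mul_assoc (aeval c h)]
end Biref
namespace Biref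
universe u v
variable {K : Type u} [Field K] {V : Type v} [AddCommGroup V] [Module K V]
  {f : LinearMap.BilinForm K V} {c N s : Module.End K V}

lemma Cl.conjSim {d : K} {u u' g : Module.End K V} (r : u * u' = 1) (l : u' * u = 1)
    (hs : ∀ x y, f (u x) (u y) = -f x y) (h : Cl f d g) : Cl f (-d) (u * g * u') := by
  obtain ⟨x, hx, ho⟩ := h
  have ruu : ∀ x, u (u' x) = x := fun x => by rw [← Module.End.mul_apply, r]; rfl
  have hL : ∀ a b, f (u a) b = - f a (u' b) := fun a b => by
    conv_lhs => rw [← ruu b]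
    exact hs _ _
  have hR : ∀ a b, f a (u b) = - f (u' a) b := fun a b => by
    conv_lhs => rw [← ruu a]
    exact hs _ _
  refine ⟨u x, by rw [hs, hx], ?_⟩
  have h1 := Om.map (f' := f) (conjHom u u' l r) ?_ ho
  · have e : conjHom u u' l r (rho f x * g) = rho f (u x) * (u * g * u') := by
      rw [map_mul]
      change (u * rho f x * u') * (u * g * u') = _
      congr 1
      ext v
      simp only [Module.End.mul_apply, rho_apply, map_sub, map_smul, ruu, hs]
      rw [hL]; congr 2; rw [div_neg]; ring
    rwa [e] at h1
  · intro k k' hk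
    refine ⟨?_, ?_, ?_⟩
    · intro a b
      change f (u (k (u' a))) b = f a (u (k' (u' b)))
      rw [hL, hR, hk.adj]
    · rw [← map_mul, hk.rinv, map_one]
    · rw [← map_mul, hk.linv, map_one]

lemma inv_det (h2 : (2 : K) ≠ 0) (q : QS f) [FiniteDimensional K V] {b : Module.End K V}
    (hb : Inv f c N b) (hN : IsUnit N) {k : ℕ} (hk : finrank K V = 2 * k) :
    LinearMap.det b = (-1) ^ k := by
  have hinj : Function.Injective N := by
    rw [← LinearMap.ker_eq_bot]; exact (LinearMap.isUnit_iff_ker_eq_bot _).mp hN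
  have m1 : ∀ x ∈ LinearMap.ker (b - 1), N x ∈ LinearMap.ker (b + 1) := by
    intro x hx
    have hx' : b x = x := sub_eq_zero.mp hx
    change b (N x) + N x = 0
    rw [← Module.End.mul_apply, hb.bN, LinearMap.neg_apply, Module.End.mul_apply, hx']; simp
  have m2 : ∀ x ∈ LinearMap.ker (b + 1), N x ∈ LinearMap.ker (b - 1) := by
    intro x hx
    have hx' : b x = -x := eq_neg_of_add_eq_zero_left hx
    change b (N x) - N x = 0
    rw [← Module.End.mul_apply, hb.bN, LinearMap.neg_apply, Module.End.mul_apply, hx']; simp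
  have l1 : finrank K (LinearMap.ker (b - 1)) ≤ finrank K (LinearMap.ker (b + 1)) :=
    LinearMap.finrank_le_finrank_of_injective (f := N.restrict m1)
      (fun x y h => Subtype.ext (hinj (congrArg Subtype.val h)))
  have l2 : finrank K (LinearMap.ker (b + 1)) ≤ finrank K (LinearMap.ker (b - 1)) :=
    LinearMap.finrank_le_finrank_of_injective (f := N.restrict m2)
      (fun x y h => Subtype.ext (hinj (congrArg Subtype.val h)))
  have l3 := (decInv h2 q hb.adj hb.sq).finrank_add
  have l4 : finrank K (LinearMap.ker (b + 1)) = k := by omega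
  conv_lhs => rw [decInv_e h2 q hb.adj hb.sq]
  rw [Dec.det_glue, ← neg_one_smul K (1 : Module.End K (LinearMap.ker (b + 1))), LinearMap.det_smul, l4]
  simp

section nil
variable {k : ℕ}

lemma caseB_facts (S : Sys f c N s (-1) 1 1) (hk : c ^ k = 0) (hk0 : k ≠ 0) :
    (∀ x, c ((c ^ (k - 1)) x) = 0) ∧ Adj f (c ^ (k - 1)) (c ^ (k - 1)) ∧
    (∀ x, (c ^ (k - 1)) (N x) = N ((c ^ (k - 1)) x)) ∧
    (∀ x y, f ((c ^ (k - 1)) (N x)) (N y) = 4 * f ((c ^ (k - 1)) x) y) ∧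
    (∀ x y, f ((c ^ (k - 1)) x) (N y) = - f ((c ^ (k - 1)) (N x)) y) ∧
    s * c ^ (k - 1) = ((-1 : K) ^ (k - 1)) • (c ^ (k - 1) * s) := by
  have h0 : ∀ x, c ((c ^ (k - 1)) x) = 0 := fun x => by
    rw [← Module.End.mul_apply, ← pow_succ', Nat.sub_add_cancel (Nat.one_le_iff_ne_zero.mpr hk0), hk]
    rfl
  have aM : Adj f (c ^ (k - 1)) (c ^ (k - 1)) := S.cc.pow (k - 1)
  have hM : ∀ x, (c ^ (k - 1)) (N x) = N ((c ^ (k - 1)) x) := fun x => by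
    have : c ^ (k - 1) * N = N * c ^ (k - 1) := Commute.pow_left (S.cn : Commute c N) (k - 1)
    rw [← Module.End.mul_apply, this]; rfl
  have h3 : ∀ x y, f ((c ^ (k - 1)) x) (N y) = - f ((c ^ (k - 1)) (N x)) y := fun x y => by
    rw [hM, S.nn]; simp
  refine ⟨h0, aM, hM, ?_, h3, ?_⟩
  · intro x y
    rw [h3, hM, hM, ← Module.End.mul_apply N N, S.n2]
    simp [h0]
  · have := S.sc
    exact (pow_semi (t := c) (s := s) (a := -1) (by rw [S.sc]; simp) (k - 1)) |> fun h => by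
      rw [h, smul_smul, ← mul_pow]; simp

lemma sys_inv (S : Sys f c N s (-1) 1 1) (hI : Indec f c N s) (hk : c ^ k = 0)
    {ι : Type} [Fintype ι] [DecidableEq ι] (z : ι → V)
    (hG : ∀ a : ι → K, (∀ j, ∑ i, a i * f ((c ^ (k - 1)) (z i)) (z j) = 0) → a = 0)
    (hz : ∃ i, z i ≠ 0) (hs : ∀ i, ∃ ε : K, s (z i) = ε • z i)
    (hNz : ∀ i, N (z i) ∈ famSpan c k z) : famSpan c k z = ⊤ := by
  have ac : Adj f c ((1 : K) • c) := by rw [one_smul]; exact S.cc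
  have hnd := free_nd one_ne_zero hk ac hG
  refine (hI _ ?_ ?_ ?_ hnd).resolve_left fun h => ?_
  · exact famSpan_inv (z := z) hk (X := c) (a := 1) (by simp) fun i => by
      simpa using fam_mem (z := z) hk 1 i
  · exact famSpan_inv (z := z) hk (X := N) (a := 1) (by rw [one_smul]; exact S.cn.symm) hNz
  · exact famSpan_inv (z := z) hk (X := s) (a := -1) S.sc fun i => by
      obtain ⟨ε, h⟩ := hs i
      rw [h]; exact Submodule.smul_mem _ _ (by simpa using fam_mem (z := z) hk 0 i)
  · obtain ⟨i, hi⟩ := hz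
    have := fam_mem (z := z) hk 0 i
    rw [h, Submodule.mem_bot] at this
    exact absurd this hi
end nil
end Biref
namespace Biref
universe u v
variable {K : Type u} [Field K] {V : Type v} [AddCommGroup V] [Module K V]
  {f : LinearMap.BilinForm K V} {c N s : Module.End K V}

lemma NN_mem (S : Sys f c N s (-1) 1 1) {k : ℕ} (hk : c ^ k = 0)
    {ι : Type} [Fintype ι] [DecidableEq ι] (z : ι → V) (i : ι) : N (N (z i)) ∈ famSpan c k z := by
  rw [← Module.End.mul_apply, S.n2]
  have h1 := fam_mem (z := z) hk 2 i
  have h0 := fam_mem (z := z) hk 0 i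
  rw [pow_two] at h1
  exact sub_mem h1 (Submodule.smul_mem _ _ h0)

lemma caseB_odd (p : ℕ) [CharP K p] [hp : Fact p.Prime] (hp2 : p ≠ 2) [Finite K]
    (hsq : ∀ d : K, ∃ a, d = a * a ∨ d = -(a * a))
    [FiniteDimensional K V] [Nontrivial V] (S : Sys f c N s (-1) 1 1) (hI : Indec f c N s)
    (hloc : ∀ g : K[X], IsNilpotent (aeval c g) ∨ IsUnit (aeval c g)) (hN : IsUnit N)
    {k : ℕ} (hk : c ^ k = 0) (hk0 : k ≠ 0) (hk' : c ^ (k - 1) ≠ 0) (ho : Even (k - 1)) :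
    ∀ ε : K, ε = 1 ∨ ε = -1 → ∃ b, Inv f c N b ∧ Cl f ε b := by
  have h2 := two_ne (K := K) p hp2
  have ass : Adj f s s := by simpa using S.ss
  have s2 : s * s = 1 := by simpa using S.s2
  obtain ⟨h0, aM, MN, NN, sw, sM⟩ := caseB_facts S hk hk0
  rw [ho.neg_one_pow, one_smul] at sM
  obtain ⟨x, ε, hε, hsx, hx⟩ := eigen_polar h2 S.q ass s2 aM hk' sM.symm
  have t1 : f ((c ^ (k - 1)) (N x)) x = 0 := by
    have e1 := sw x x
    have e2 : f ((c ^ (k - 1)) (N x)) x = f ((c ^ (k - 1)) x) (N x) := by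
      rw [aM, S.q.symm]
    have : 2 * f ((c ^ (k - 1)) (N x)) x = 0 := by linear_combination e2 + e1
    exact (mul_eq_zero.mp this).resolve_left h2
  have t2 : f ((c ^ (k - 1)) x) (N x) = 0 := by rw [sw, t1, neg_zero]
  have h4 : (4 : K) ≠ 0 := by
    have : (4 : K) = 2 * 2 := by norm_num
    rw [this]; exact mul_ne_zero h2 h2
  have hG : ∀ a : Fin 2 → K, (∀ j, ∑ i, a i * f ((c ^ (k - 1)) (![x, N x] i)) (![x, N x] j) = 0) → a = 0 := by
    intro a ha
    have h0 := ha 0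
    have h1 := ha 1
    simp [Fin.sum_univ_two, t1, t2, NN, hx, h4] at h0 h1
    ext i
    fin_cases i
    · exact h0
    · exact h1
  have htop := sys_inv S hI hk ![x, N x] hG ⟨0, by
      intro h; simp at h; rw [h] at hx; simp at hx⟩ (by
      have hsn : s (N x) = N (s x) := by
        rw [← Module.End.mul_apply, S.sn]; simp
      intro i
      refine ⟨ε, ?_⟩
      fin_cases i
      · exact hsx
      · change s (N x) = ε • N x
        rw [hsn, hsx, map_smul]) (by
      intro i
      fin_cases i
      · simpa using fam_mem (z := ![x, N x]) hk 0 1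
      · exact NN_mem S hk ![x, N x] 0)
  have hdim : finrank K V = 2 * k := by
    have hli := free_li (z := ![x, N x]) one_ne_zero hk (by rw [one_smul]; exact S.cc) hG
    have := finrank_eq_card_basis (Basis.mk hli (by rw [← htop]; rfl))
    rw [this]; simp
  have oddk : Odd k := by
    obtain ⟨m, hm⟩ := ho; exact ⟨m, by omega⟩
  obtain ⟨b, hb⟩ := lemmaW p hp2 S.one
  have hdet : LinearMap.det b = -1 := by
    rw [inv_det h2 S.q hb hN hdim, oddk.neg_one_pow]
  have nn : aeval c (X * X - C 4 : K[X]) = N * N := by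
    rw [S.n2]; simp [Algebra.algebraMap_eq_smul_one]
  obtain ⟨P, Q, hPQ⟩ := lemmaH p hp2 c hloc (X * X - C 4) (-1) (by rw [nn]; exact hN.mul hN)
    (by rw [map_neg, map_one]; exact isUnit_one.neg)
  obtain ⟨u, u', U⟩ := uc_exists S.q S.cc S.nn S.cn S.n2 hPQ (g' := -1) (by simp)
  have key : ∀ d, Cl f d b → ∃ b, Inv f c N b ∧ Cl f (-d) b := fun d hd =>
    ⟨u * b * u', U.inv hb, hd.conjSim U.r U.l (fun x y => by rw [U.fG]; simp)⟩
  rcases invol_odd h2 hsq S.q hb.adj hb.sq hdet with h | h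
  · rintro ε (rfl | rfl)
    · exact ⟨b, hb, h⟩
    · exact key 1 h
  · rintro ε (rfl | rfl)
    · simpa using key (-1) h
    · exact ⟨b, hb, h⟩

lemma caseB_even (p : ℕ) [CharP K p] [hp : Fact p.Prime] (hp2 : p ≠ 2)
    (hm1 : ∀ a b : K, a * a + b * b = 0 → a = 0)
    [FiniteDimensional K V] [Nontrivial V] (S : Sys f c N s (-1) 1 1) (hI : Indec f c N s)
    {k : ℕ} (hk : c ^ k = 0) (hk0 : k ≠ 0) (hk' : c ^ (k - 1) ≠ 0) (ho : Odd (k - 1)) :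
    ∃ b, Inv f c N b ∧ Om f b := by
  have h2 := two_ne (K := K) p hp2
  have h4 : (4 : K) ≠ 0 := by
    have : (4 : K) = 2 * 2 := by norm_num
    rw [this]; exact mul_ne_zero h2 h2
  have ass : Adj f s s := by simpa using S.ss
  have s2 : s * s = 1 := by simpa using S.s2
  have ss : ∀ x, s (s x) = x := fun x => by rw [← Module.End.mul_apply, s2]; rfl
  have sN : ∀ x, s (N x) = N (s x) := fun x => by rw [← Module.End.mul_apply, S.sn]; simp
  obtain ⟨h0, aM, MN, NN, sw, sM⟩ := caseB_facts S hk hk0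
  rw [ho.neg_one_pow, neg_one_smul] at sM
  have sM' : ∀ x, s ((c ^ (k - 1)) x) = - (c ^ (k - 1)) (s x) := fun x => by
    rw [← Module.End.mul_apply, sM]; rfl
  set M := c ^ (k - 1) with hM
  have sym : ∀ x y, f (M y) x = f (M x) y := fun x y => by rw [aM, S.q.symm]
  have ms : ∀ x y, f (M (s x)) y = -f (M x) (s y) := fun x y => by
    rw [← ass, sM', map_neg, LinearMap.neg_apply, neg_neg]
  obtain ⟨x, y0, hsx, hsy0, hα⟩ : ∃ x y, s x = x ∧ s y = -y ∧ f (M x) y ≠ 0 := by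
    by_contra hcon
    push Not at hcon
    have h1 : ∀ v w, f (M (v + s v)) (w - s w) = 0 := fun v w =>
      hcon _ _ (by rw [map_add, ss, add_comm]) (by rw [map_sub, ss, neg_sub])
    apply hk'
    ext v
    refine S.q.nd _ fun w => ?_
    have e1 := h1 v w
    have e2 := h1 w v
    simp only [map_add, map_sub, LinearMap.add_apply, LinearMap.sub_apply, ms, ss] at e1 e2
    have e3 := sym v w
    have e4 : f (M w) (s v) = - f (M v) (s w) := by rw [← neg_eq_iff_eq_neg, ← ms, sym]
    have : 4 * f (M v) w = 0 := by linear_combination e1 + e2 + 2 * e4 - 2 * e3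
    exact (mul_eq_zero.mp this).resolve_left h4
  obtain ⟨y, hsy, hNxy, hxy⟩ : ∃ y, s y = -y ∧ f (M (N x)) y = 0 ∧ f (M x) y ≠ 0 := by
    refine ⟨(4 * f (M x) y0) • y0 - (f (M (N x)) y0) • N y0, ?_, ?_, ?_⟩
    · simp only [map_sub, map_smul, sN, hsy0, map_neg]; module
    · simp only [map_sub, map_smul, smul_eq_mul, NN]; ring
    · simp only [map_sub, map_smul, smul_eq_mul, sw]
      intro h
      have := hm1 (2 * f (M x) y0) (f (M (N x)) y0) (by linear_combination h)
      exact hα ((mul_eq_zero.mp this).resolve_left h2)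
  have zz : ∀ ε : K, ∀ v w, s v = ε • v → s w = ε • w → ε * ε = 1 → f (M v) w = 0 := by
    intro ε v w hv hw hε
    have h := ms v (s w)
    rw [ss, hv, hw] at h
    simp only [map_smul, LinearMap.smul_apply, smul_eq_mul] at h
    have : 2 * f (M v) w = 0 := by linear_combination h - (f (M v) w) * hε
    exact (mul_eq_zero.mp this).resolve_left h2
  have hNx : s (N x) = N x := by rw [sN, hsx]
  have hNy : s (N y) = -N y := by rw [sN, hsy, map_neg]
  have p1 : ∀ v w, s v = v → s w = w → f (M v) w = 0 := fun v w hv hw =>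
    zz 1 v w (by rw [one_smul, hv]) (by rw [one_smul, hw]) (by ring)
  have p2 : ∀ v w, s v = -v → s w = -w → f (M v) w = 0 := fun v w hv hw =>
    zz (-1) v w (by rw [neg_one_smul, hv]) (by rw [neg_one_smul, hw]) (by ring)
  have q1 := p1 x x hsx hsx
  have q2 := p1 x (N x) hsx hNx
  have q3 := p1 (N x) x hNx hsx
  have q4 := p1 (N x) (N x) hNx hNx
  have r1 := p2 y y hsy hsy
  have r2 := p2 y (N y) hsy hNy
  have r3 := p2 (N y) y hNy hsy
  have r4 := p2 (N y) (N y) hNy hNy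
  have w1 : f (M y) x = f (M x) y := sym x y
  have w2 : f (M x) (N y) = 0 := by rw [sw, hNxy, neg_zero]
  have w3 : f (M (N y)) x = 0 := by rw [sym, w2]
  have w4 : f (M y) (N x) = 0 := by rw [sym, hNxy]
  have w5 : f (M (N x)) (N y) = 4 * f (M x) y := NN x y
  have w6 : f (M (N y)) (N x) = 4 * f (M x) y := by rw [NN, w1]
  have hG : ∀ a : Fin 4 → K, (∀ j, ∑ i, a i * f (M (![x, N x, y, N y] i)) (![x, N x, y, N y] j) = 0) → a = 0 := by
    intro a ha
    have h0 := ha 0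
    have h1 := ha 1
    have h3 := ha 2
    have h5 := ha 3
    simp [Fin.sum_univ_four, q1, q2, q3, r1, r2, r3, w1, w2, w3, w4, w5, w6, hNxy, hxy, h4, q4, r4] at h0 h1 h3 h5
    ext i
    fin_cases i
    · exact h3
    · exact h5
    · exact h0
    · exact h1
  have htop := sys_inv S hI hk ![x, N x, y, N y] hG ⟨0, by
      intro h; simp at h; rw [h] at hxy; simp at hxy⟩ (by
      intro i
      fin_cases i
      · exact ⟨1, by simpa using hsx⟩
      · exact ⟨1, by simpa using hNx⟩
      · exact ⟨-1, by simpa using hsy⟩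
      · exact ⟨-1, by simpa using hNy⟩) (by
      intro i
      fin_cases i
      · simpa using fam_mem (z := ![x, N x, y, N y]) hk 0 1
      · exact NN_mem S hk ![x, N x, y, N y] 0
      · simpa using fam_mem (z := ![x, N x, y, N y]) hk 0 3
      · exact NN_mem S hk ![x, N x, y, N y] 2)
  obtain ⟨E0, E, hE0, hE0D, aE, hEE, hED, hX⟩ := freeP p hp2 S.q hk0 one_ne_zero hk
    (by rw [one_smul]; exact S.cc) hG htop ![2, 3, 0, 1] (by decide) (fun _ => 1) (by simp) 1 (by ring) (by
      intro i j
      rw [← hM]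
      fin_cases i <;> fin_cases j <;>
        simp [q1, q2, q3, r1, r2, r3, w1, w2, w3, w4, w5, w6, hNxy, q4, r4])
  have e0 : E0 x = y := by simpa using hE0 0
  have e1 : E0 (N x) = N y := by simpa using hE0 1
  have e2 : E0 y = x := by simpa using hE0 2
  have e3 : E0 (N y) = N x := by simpa using hE0 3
  have ec : ∀ v, E0 (c v) = c (E0 v) := fun v => by
    rw [← Module.End.mul_apply, hE0D]; simp
  have n2 : ∀ v, N (N v) = c (c v) - (4 : K) • v := fun v => by
    rw [← Module.End.mul_apply, S.n2]; rfl
  have hEN := hX N (-1) 1 1 (neg_ne_zero.mpr one_ne_zero) (by ring) (by simpa using S.nn)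
    (by rw [one_smul]; exact S.cn.symm) (by
      intro i
      fin_cases i
      · simp [e1]
      · simp [n2, ec, e0, map_sub]
      · simp [e3]
      · simp [n2, ec, e2, map_sub])
  have hEs := hX s 1 (-1) (-1) one_ne_zero (by ring) (by simpa using S.ss)
    (by exact S.sc) (by
      intro i
      fin_cases i
      · simp [hsx, hsy, e0]
      · simp [hNx, hNy, e1]
      · simp [hsx, hsy, e2]
      · simp [hNx, hNy, e3])
  refine lemmaE p hp2 S (by ring) (by ring) (by ring) (e := E) aE hEE ?_ ?_ ?_
  · simpa using hED.symm
  · simpa using hEN.symm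
  · have : E * s = -(s * E) := by simpa using hEs
    rw [this, neg_neg]

def QB (f : LinearMap.BilinForm K V) (c N : Module.End K V) : Prop :=
  (∃ b, Inv f c N b ∧ Om f b) ∨ ∀ ε : K, ε = 1 ∨ ε = -1 → ∃ b, Inv f c N b ∧ Cl f ε b

lemma caseB_base (p : ℕ) [CharP K p] [hp : Fact p.Prime] (hp2 : p ≠ 2) [Finite K]
    (hm1 : ∀ a b : K, a * a + b * b = 0 → a = 0)
    (hsq : ∀ d : K, ∃ a, d = a * a ∨ d = -(a * a))
    [FiniteDimensional K V] [Nontrivial V] (S : Sys f c N s (-1) 1 1) (hI : Indec f c N s)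
    (hN : IsUnit N) : QB f c N := by
  rcases loc_or_e p hp2 S hI with ⟨e, ae, he, hc, hN', hse⟩ | hloc
  · exact Or.inl (lemmaE p hp2 S (by ring) (by ring) (by ring) ae he hc hN' hse)
  · have h := hloc X
    rw [aeval_X] at h
    rcases h with h | h
    · obtain ⟨k, hk0, hk, hk'⟩ := nilp_index h
      rcases Nat.even_or_odd (k - 1) with ho | ho
      · exact Or.inr (caseB_odd p hp2 hsq S hI hloc hN hk hk0 hk' ho)
      · exact Or.inl (caseB_even p hp2 hm1 S hI hk hk0 hk' ho)
    · exact Or.inl (caseB_cu p hp2 S hI hloc hN h)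
end Biref
namespace Biref
universe u v
variable {K : Type u} [Field K] {V A B : Type v} [AddCommGroup V] [Module K V]
  [AddCommGroup A] [Module K A] [AddCommGroup B] [Module K B]
  {f : LinearMap.BilinForm K V} {fA : LinearMap.BilinForm K A} {fB : LinearMap.BilinForm K B}
  {c N s : Module.End K V}

lemma Dec.inv_glue (D : Dec f fA fB) {cA NA b : Module.End K A} {cB NB b' : Module.End K B}
    (hb : Inv fA cA NA b) (hb' : Inv fB cB NB b') :
    Inv f (D.glue cA cB) (D.glue NA NB) (D.glue b b') := by
  refine ⟨D.glue_adj hb.adj hb'.adj, ?_, ?_, ?_⟩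
  · rw [D.glue_mul, hb.sq, hb'.sq, D.glue_one]
  · rw [D.glue_mul, hb.bc, hb'.bc, D.glue_mul]
  · rw [D.glue_mul, hb.bN, hb'.bN, D.glue_mul, D.glue_neg]

lemma Dec.iso_split (D : Dec f fA fB) {g g' : Module.End K A} {h h' : Module.End K B}
    (H : IsoP f (D.glue g h) (D.glue g' h')) : IsoP fA g g' ∧ IsoP fB h h' := by
  have h1 := H.rinv
  have h2 := H.linv
  rw [D.glue_mul, ← D.glue_one] at h1 h2
  exact ⟨⟨D.adjA H.adj, (D.glue_inj h1).1, (D.glue_inj h2).1⟩,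
    ⟨D.adjB H.adj, (D.glue_inj h1).2, (D.glue_inj h2).2⟩⟩

lemma Adj.det [FiniteDimensional K V] (q : QS f) {s t : Module.End K V} (h : Adj f s t) :
    LinearMap.det s = LinearMap.det t := by
  have hinj : Function.Injective (f : V →ₗ[K] Dual K V) := by
    rw [injective_iff_map_eq_zero]
    intro x hx
    exact q.nd x fun y => by rw [hx]; rfl
  let φ : V ≃ₗ[K] Dual K V := LinearEquiv.ofInjectiveOfFinrankEq (f : V →ₗ[K] Dual K V) hinj
    (Subspace.dual_finrank_eq).symm
  have hφ : ∀ x y, φ x y = f x y := fun x y => rfl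
  rw [← LinearMap.det_dualMap t, ← LinearMap.det_conj s φ]
  congr 1
  ext d y
  obtain ⟨x, rfl⟩ := φ.surjective d
  simp only [LinearMap.comp_apply, LinearEquiv.coe_coe, LinearEquiv.symm_apply_apply, LinearMap.dualMap_apply, hφ]
  exact h x y

lemma skew_even [FiniteDimensional K V] (h2 : (2 : K) ≠ 0) (q : QS f) (aN : Adj f N (-N))
    (hN : Function.Injective N) : ¬ Odd (finrank K V) := by
  intro ho
  have h := aN.det q
  rw [← neg_one_smul K N, LinearMap.det_smul, ho.neg_one_pow] at h
  have h3 : LinearMap.det N = 0 := by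
    have : 2 * LinearMap.det N = 0 := by linear_combination h
    exact (mul_eq_zero.mp this).resolve_left h2
  have := LinearMap.bot_lt_ker_of_det_eq_zero h3
  rw [LinearMap.ker_eq_bot.mpr hN] at this
  exact lt_irrefl _ this

lemma tlemma (p : ℕ) [CharP K p] [hp : Fact p.Prime] (hp2 : p ≠ 2) [FiniteDimensional K V]
    (q : QS f) {δ δ' : Module.End K V} (I : IsoP f δ δ') (hc : δ * c = c * δ) (hN : δ * N = N * δ) :
    LinearMap.det δ = 1 ∨ ∃ T : Submodule K V, NdOn f T ∧ (∀ x ∈ T, c x ∈ T) ∧ (∀ x ∈ T, N x ∈ T) ∧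
      Odd (finrank K T) := by
  have I' := I.inv q
  have comm' : ∀ X, δ * X = X * δ → δ' * X = X * δ' := by
    intro X h
    calc δ' * X = δ' * X * (δ * δ') := by rw [I.rinv, mul_one]
      _ = δ' * (X * δ) * δ' := by simp only [mul_assoc]
      _ = (δ' * δ) * X * δ' := by rw [← h]; simp only [mul_assoc]
      _ = _ := by rw [I.linv, one_mul]
  set t := δ + δ' + (2 : K) • 1 with ht
  have at' : Adj f t ((1 : K) • t) := by
    have := (I.adj.add I'.adj).add (Adj.one.smul (2 : K))
    rw [one_smul, ht, add_comm δ δ']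
    rwa [add_comm δ δ'] at this
  have tX : ∀ X, δ * X = X * δ → t * X = X * t := by
    intro X h
    rw [ht]; simp only [add_mul, mul_add, h, comm' X h, smul_mul_assoc, mul_smul_comm, one_mul, mul_one]
  obtain ⟨n, hn0, hnd, hcompl⟩ := fitting_nd q at'
  have inv : ∀ X, δ * X = X * δ → ∀ x ∈ LinearMap.ker (t ^ n), X x ∈ LinearMap.ker (t ^ n) := by
    intro X h x hx
    have h1 : t ^ n * X = X * t ^ n := Commute.pow_left (tX X h) n
    rw [LinearMap.mem_ker, ← Module.End.mul_apply, h1, Module.End.mul_apply, LinearMap.mem_ker.mp hx,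
      map_zero]
  set T := LinearMap.ker (t ^ n) with hT
  by_cases ho : Odd (finrank K T)
  · exact Or.inr ⟨T, hnd, inv c hc, inv N hN, ho⟩
  left
  have he : Even (finrank K T) := Nat.not_odd_iff_even.mp ho
  set D := decNd q T hnd with hD
  have dd : δ * δ' = δ' * δ := by rw [I.rinv, I.linv]
  obtain ⟨gA, gB, hg⟩ := (decNd_stab q T hnd δ δ' I.adj (inv δ rfl) (inv δ' dd)).ex
  obtain ⟨gA', gB', hg'⟩ := (decNd_stab q T hnd δ' δ I'.adj (inv δ' dd) (inv δ rfl)).ex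
  rw [← hD] at hg hg'
  have I2 := I
  rw [hg, hg'] at I2
  obtain ⟨IA, IB⟩ := D.iso_split I2
  have htg : t = D.glue (gA + gA' + (2 : K) • 1) (gB + gB' + (2 : K) • 1) := by
    rw [ht, hg, hg', ← D.glue_one, D.glue_add, D.glue_smul, D.glue_add]
  have fac : ∀ {W : Type v} [AddCommGroup W] [Module K W] (g g' : Module.End K W), g' * g = 1 →
      g + g' + (2 : K) • 1 = g' * ((g + 1) * (g + 1)) ∧ g' + 1 = g' * (g + 1) := by
    intro W _ _ g g' h
    constructor
    · rw [← mul_assoc, mul_add g', h, mul_add, add_mul, mul_one, mul_one, one_mul, h, two_smul]; abel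
    · rw [mul_add, h, mul_one, add_comm]
  have nsq : ∀ {W : Type v} [AddCommGroup W] [Module K W] (g : Module.End K W),
      (-g - 1) * (-g - 1) = (g + 1) * (g + 1) := by
    intro W _ _ g
    noncomm_ring
  rw [hg, D.det_glue]
  have dA : LinearMap.det gA = 1 := by
    have hnil : (gA + gA' + (2 : K) • 1) ^ n = 0 := by
      ext a
      have h1 : (t ^ n) (D.i a) = 0 := a.2
      have h3 : ∀ m, (t ^ m) (D.i a) = D.i (((gA + gA' + (2 : K) • 1) ^ m) a) := by
        intro m
        induction m with
        | zero => simp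
        | succ m ih =>
          rw [pow_succ', pow_succ', Module.End.mul_apply, ih, Module.End.mul_apply]
          conv_lhs => rw [htg]
          rw [D.glue_apply, D.pi, D.ri, map_zero, map_zero, add_zero]
      rw [h3] at h1
      have h4 := congrArg D.p h1
      rw [D.pi, map_zero] at h4
      rw [h4]; rfl
    have hu : IsNilpotent ((-gA) - 1) := by
      have h1 : (gA + 1) * (gA + 1) = gA * (gA + gA' + (2 : K) • 1) := by
        rw [(fac gA gA' IA.linv).1, ← mul_assoc, IA.rinv, one_mul]
      have cm : Commute gA (gA + gA' + (2 : K) • 1) := by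
        have : gA * gA' = gA' * gA := by rw [IA.rinv, IA.linv]
        change _ * _ = _ * _
        simp only [mul_add, add_mul, this, mul_smul_comm, smul_mul_assoc, one_mul, mul_one]
      have h3 : IsNilpotent ((gA + 1) * (gA + 1)) := by
        rw [h1]; exact cm.isNilpotent_mul_left ⟨n, hnil⟩
      obtain ⟨m, hm⟩ := h3
      refine ⟨2 * m, ?_⟩
      rw [pow_mul, pow_two]
      have : (-gA - 1) * (-gA - 1) = (gA + 1) * (gA + 1) := by
        exact nsq gA
      rw [this, hm]
    obtain ⟨a, ha⟩ := unip' (K := K) p hu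
    have h1 := congrArg LinearMap.det (ha a le_rfl)
    rw [map_pow, ← neg_one_smul K gA, LinearMap.det_smul, he.neg_one_pow, one_mul, map_one] at h1
    have h3 : (LinearMap.det gA - 1) ^ (p ^ a) = 0 := by
      rw [sub_pow_char_pow, h1, one_pow, sub_self]
    exact sub_eq_zero.mp (pow_eq_zero_iff (pow_ne_zero _ hp.out.ne_zero) |>.mp h3)
  have dB : LinearMap.det gB = 1 := by
    have hdisj : ∀ x ∈ T, x ∈ f.orthogonal T → x = 0 := by
      intro x hx hx'
      refine hnd x hx fun y hy => ?_
      rw [q.symm]; exact hx' y hy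
    have hker : LinearMap.ker (gB + 1) = ⊥ := by
      rw [LinearMap.ker_eq_bot']
      intro b hb
      have h1 : t (D.j b) = 0 := by
        rw [htg, D.glue_apply, D.rj, D.pj, map_zero, map_zero, zero_add, (fac gB gB' IB.linv).1]
        simp only [Module.End.mul_apply, hb, map_zero]
      have h3 : D.j b ∈ T := by
        obtain ⟨m, hm⟩ := Nat.exists_eq_succ_of_ne_zero hn0
        have h6 : (t ^ n) (D.j b) = 0 := by
          rw [hm, pow_succ, Module.End.mul_apply, h1, map_zero]
        exact h6
      have h4 : D.j b = 0 := hdisj _ h3 b.2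
      rw [← D.rj b, h4, map_zero]
    have hd : LinearMap.det (gB + 1) ≠ 0 := by
      intro h
      have := LinearMap.bot_lt_ker_of_det_eq_zero h
      rw [hker] at this
      exact lt_irrefl _ this
    have h1 := (IB.adj.add Adj.one).det (D.qsB q)
    rw [(fac gB gB' IB.linv).2, map_mul] at h1
    have h3 : LinearMap.det gB' = 1 := by
      have : (LinearMap.det gB' - 1) * LinearMap.det (gB + 1) = 0 := by linear_combination -h1
      exact sub_eq_zero.mp ((mul_eq_zero.mp this).resolve_right hd)
    have h4 := congrArg LinearMap.det IB.rinv
    rw [map_mul, h3, mul_one, map_one] at h4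
    exact h4
  rw [dA, dB, one_mul]
end Biref
namespace Biref
universe u v
variable {K : Type u} [Field K] {V A B : Type v} [AddCommGroup V] [Module K V]
  [AddCommGroup A] [Module K A] [AddCommGroup B] [Module K B]
  {f : LinearMap.BilinForm K V} {fA : LinearMap.BilinForm K A} {fB : LinearMap.BilinForm K B}
  {c N s : Module.End K V}

lemma fitSplit [FiniteDimensional K V] (q : QS f) {t : Module.End K V} {δ : K}
    (ht : Adj f t (δ • t)) :
    ∃ (A B : Submodule K V) (D : Dec f (f.restrict A) (f.restrict B)),
      (∀ (X X' : Module.End K V) (a a' : K), Adj f X X' → t * X = a • (X * t) →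
        t * X' = a' • (X' * t) → D.Stab X) ∧
      ∀ tA tB, t = D.glue tA tB → IsNilpotent tA ∧ Function.Injective tB := by
  obtain ⟨n, hn, hnd, -⟩ := fitting_nd q ht
  obtain ⟨T, hT⟩ : ∃ T : Submodule K V, T = LinearMap.ker (t ^ n) := ⟨_, rfl⟩
  have mT : ∀ x, x ∈ T ↔ (t ^ n) x = 0 := by intro x; rw [hT]; exact Iff.rfl
  rw [← hT] at hnd
  have key : ∀ (X : Module.End K V) (a : K), t * X = a • (X * t) → ∀ x ∈ T, X x ∈ T := by
    intro X a h x hx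
    rw [mT] at hx ⊢
    rw [← Module.End.mul_apply, pow_semi h]
    simp [hx]
  refine ⟨T, _, decNd q _ hnd, ?_, ?_⟩
  · intro X X' a a' h h1 h2
    exact decNd_stab q _ hnd X X' h (key X a h1) (key X' a' h2)
  · set D := decNd q _ hnd with hD
    intro tA tB h
    constructor
    · refine ⟨n, ?_⟩
      ext a
      have h1 : (t ^ n) (D.i a) = 0 := (mT _).mp a.2
      have h3 : ∀ m, (t ^ m) (D.i a) = D.i ((tA ^ m) a) := by
        intro m
        induction m with
        | zero => simp
        | succ m ih =>
          rw [pow_succ', pow_succ', Module.End.mul_apply, ih, Module.End.mul_apply]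
          conv_lhs => rw [h]
          rw [D.glue_apply, D.pi, D.ri, map_zero, map_zero, add_zero]
      rw [h3] at h1
      have h4 := congrArg D.p h1
      rw [D.pi, map_zero] at h4
      rw [h4]; rfl
    · rw [injective_iff_map_eq_zero]
      intro b hb
      have h1 : t (D.j b) = 0 := by
        rw [h, D.glue_apply, D.rj, D.pj, map_zero, map_zero, zero_add, hb, map_zero]
      have h3 : D.j b ∈ T := by
        obtain ⟨m, hm⟩ := Nat.exists_eq_succ_of_ne_zero hn
        have h6 : (t ^ n) (D.j b) = 0 := by
          rw [hm, pow_succ, Module.End.mul_apply, h1, map_zero]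
        exact (mT _).mpr h6
      have h4 : D.j b = 0 := by
        refine hnd _ h3 fun y hy => ?_
        rw [q.symm]; exact b.2 y hy
      rw [← D.rj b, h4, map_zero]

theorem caseB_unit (p : ℕ) [CharP K p] [hp : Fact p.Prime] (hp2 : p ≠ 2) [Finite K]
    (hm1 : ∀ a b : K, a * a + b * b = 0 → a = 0)
    (hsq : ∀ d : K, ∃ a, d = a * a ∨ d = -(a * a)) [FiniteDimensional K V]
    {f : LinearMap.BilinForm K V} {c N s : Module.End K V}
    (S : Sys f c N s (-1) 1 1) (hN : Function.Injective N) : QB f c N := by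
  have h2 : (2 : K) ≠ 0 := two_ne p hp2
  refine ind (e1 := -1) (e2 := 1) (e3 := 1)
    (fun V _ _ f c N s => Function.Injective N → QB f c N) ?_ ?_ ?_ _ V f c N s rfl S hN
  · intro V A B _ _ _ _ _ _ _ _ _ f fA fB D cA NA sA cB NB sB S SA SB hA hB hinj
    have hA := hA (by
      rw [injective_iff_map_eq_zero] at hinj ⊢
      intro a ha
      have := hinj (D.i a) (by rw [D.glue_apply, D.pi, D.ri, ha]; simp)
      rw [← D.pi a, this, map_zero])
    have hB := hB (by
      rw [injective_iff_map_eq_zero] at hinj ⊢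
      intro a ha
      have := hinj (D.j a) (by rw [D.glue_apply, D.pj, D.rj, ha]; simp)
      rw [← D.rj a, this, map_zero])
    rcases hA with ⟨b, hb, ob⟩ | hA <;> rcases hB with ⟨b', hb', ob'⟩ | hB
    · exact Or.inl ⟨_, D.inv_glue hb hb', D.om_glue ob ob'⟩
    · refine Or.inr fun ε hε => ?_
      obtain ⟨b', hb', ob'⟩ := hB ε hε
      exact ⟨_, D.inv_glue hb hb', Cl.glue' D ob ob'⟩
    · refine Or.inr fun ε hε => ?_
      obtain ⟨b, hb, ob⟩ := hA ε hε
      exact ⟨_, D.inv_glue hb hb', Cl.glue D ob ob'⟩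
    · obtain ⟨b, hb, ob⟩ := hA 1 (Or.inl rfl)
      obtain ⟨b', hb', ob'⟩ := hB 1 (Or.inl rfl)
      exact Or.inl ⟨_, D.inv_glue hb hb', Cl.glue2 h2 S.q D one_ne_zero ob ob'⟩
  · intro V _ _ f c N s hV S _
    exact Or.inl ⟨1, ⟨Adj.one, one_mul 1, by simp, by ext x; exact Subsingleton.elim _ _⟩, Om.one⟩
  · intro V _ _ _ _ f c N s S hI hinj
    exact caseB_base p hp2 hm1 hsq S hI
      ((LinearMap.isUnit_iff_ker_eq_bot _).mpr (LinearMap.ker_eq_bot.mpr hinj))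

lemma caseB_nil (p : ℕ) [CharP K p] [hp : Fact p.Prime] (hp2 : p ≠ 2) [FiniteDimensional K V]
    (S : Sys f c N s (-1) 1 1) (hN : IsNilpotent N) : ∃ b, Inv f c N b ∧ Om f b := by
  have h2 : (2 : K) ≠ 0 := two_ne p hp2
  set x : Module.End K V := (2 : K)⁻¹ • c with hx
  have hxx : x ^ 2 - 1 = (4 : K)⁻¹ • (N * N) := by
    have h4 : (4 : K) ≠ 0 := by
      have : (4 : K) = 2 * 2 := by norm_num
      rw [this]; exact mul_ne_zero h2 h2
    rw [S.n2, smul_sub, smul_smul, inv_mul_cancel₀ h4, one_smul, pow_two, hx, smul_mul_smul_comm]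
    congr 2
    rw [← mul_inv]; norm_num
  have hnil : IsNilpotent (x ^ 2 - 1) := by
    rw [hxx]
    obtain ⟨n, hn⟩ := hN
    refine ⟨n, ?_⟩
    rw [_root_.smul_pow, Commute.mul_pow (Commute.refl N), hn]; simp
  obtain ⟨a, ha⟩ := unip' (K := K) p hnil
  have hodd : Odd (p ^ a) := (hp.out.odd_of_ne_two hp2).pow
  have xN : Commute x N := by
    change _ * _ = _ * _
    rw [hx, smul_mul_assoc, S.cn, mul_smul_comm]
  have xc : Commute x c := by
    change _ * _ = _ * _
    rw [hx, smul_mul_assoc, mul_smul_comm]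
  have xs : x * s = (-1 : K) • (s * x) := by
    rw [hx, smul_mul_assoc, mul_smul_comm, S.sc, smul_comm (-1 : K) (2 : K)⁻¹, smul_smul (-1 : K)]; simp
  refine lemmaE p hp2 S (by ring) (by ring) (by ring) (e := x ^ (p ^ a)) ((S.cc.smul _).pow _) ?_ ?_ ?_ ?_
  · rw [← pow_two, ← pow_mul, mul_comm, pow_mul, ha a le_rfl]
  · exact (xc.pow_left _).symm
  · exact (xN.pow_left _).symm
  · rw [pow_semi xs, hodd.neg_one_pow]; simp

lemma Inv.neg {b : Module.End K V} (h : Inv f c N b) : Inv f c N (-b) :=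
  ⟨h.adj.neg, by rw [neg_mul_neg, h.sq], by rw [neg_mul, h.bc, mul_neg],
      by rw [neg_mul, h.bN, mul_neg]⟩

lemma odd_flip (p : ℕ) [CharP K p] [hp : Fact p.Prime] (hp2 : p ≠ 2) [FiniteDimensional K V]
    (S : Sys f c N 1 1 1 1) (T : Submodule K V) (hT : NdOn f T) (hc : ∀ x ∈ T, c x ∈ T)
    (hN : ∀ x ∈ T, N x ∈ T) (ho : Odd (finrank K T)) : ∃ b, Inv f c N b ∧ LinearMap.det b = -1 := by
  set D := decNd S.q T hT with hD
  obtain ⟨cA, cB, h1⟩ := (decNd_stab S.q T hT c c S.cc hc hc).ex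
  obtain ⟨NA, NB, h3⟩ := (decNd_stab S.q T hT N (-N) S.nn hN fun x hx => T.neg_mem (hN x hx)).ex
  rw [← hD] at h1 h3
  have S' := S
  rw [h1, h3, ← D.glue_one] at S'
  obtain ⟨SA, SB⟩ := Sys.left D S'
  obtain ⟨bA, hA⟩ := lemmaW p hp2 SA
  obtain ⟨bB, hB⟩ := lemmaW p hp2 SB
  have hA' : Inv (f.restrict T) cA NA (-bA) :=
    hA.neg
  have dn : LinearMap.det (-bA) = - LinearMap.det bA := by
    rw [← neg_one_smul K bA, LinearMap.det_smul, ho.neg_one_pow, neg_one_mul]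
  have i1 := D.inv_glue hA hB
  have i2 := D.inv_glue hA' hB
  have d1 : LinearMap.det (D.glue bA bB) * LinearMap.det (D.glue bA bB) = 1 := by
    rw [← map_mul, i1.sq, map_one]
  rw [← h1, ← h3] at i1 i2
  rcases mul_self_eq_one_iff.mp d1 with h | h
  · refine ⟨_, i2, ?_⟩
    rw [D.det_glue, dn, neg_mul, ← D.det_glue, h]
  · exact ⟨_, i1, h⟩

lemma no_odd (h2 : (2 : K) ≠ 0) [FiniteDimensional K V] (q : QS f) (aN : Adj f N (-N))
    (hinj : Function.Injective N) (T : Submodule K V) (hT : NdOn f T)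
    (hN : ∀ x ∈ T, N x ∈ T) : ¬ Odd (finrank K T) := by
  have qT : QS (f.restrict T) := (decNd q T hT).qsA q
  refine skew_even (f := f.restrict T) (N := N.restrict hN) h2 qT ?_ ?_
  · intro x y
    have := aN x y
    exact this
  · intro x y hxy
    exact Subtype.ext (hinj (congrArg Subtype.val hxy))

lemma caseB_fin (p : ℕ) [CharP K p] [hp : Fact p.Prime] (hp2 : p ≠ 2) [Finite K]
    (hm1 : ∀ a b : K, a * a + b * b = 0 → a = 0)
    (hsq : ∀ d : K, ∃ a, d = a * a ∨ d = -(a * a)) [FiniteDimensional K V]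
    [FiniteDimensional K A] [FiniteDimensional K B] (D : Dec f fA fB)
    {cA NA sA αA αA' : Module.End K A} {cB NB sB αB αB' : Module.End K B} (q : QS f)
    (SA : Sys fA cA NA sA (-1) 1 1) (SB : Sys fB cB NB sB (-1) 1 1)
    (nA : IsNilpotent NA) (nB : Function.Injective NB)
    (IA : IsoP fA αA αA') (IB : IsoP fB αB αB')
    (hd : LinearMap.det αA * LinearMap.det αB = 1)
    (cA' : αA * cA = cA * αA) (cB' : αB * cB = cB * αB)
    (NA' : αA * NA = -(NA * αA)) (NB' : αB * NB = -(NB * αB)) :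
    ∃ b, Inv f (D.glue cA cB) (D.glue NA NB) b ∧ Om f b := by
  have h2 : (2 : K) ≠ 0 := two_ne p hp2
  obtain ⟨b1, i1, o1⟩ := caseB_nil p hp2 SA nA
  rcases caseB_unit p hp2 hm1 hsq SB nB with ⟨b2, i2, o2⟩ | H
  · exact ⟨_, D.inv_glue i1 i2, D.om_glue o1 o2⟩
  have comm : ∀ {W : Type v} [AddCommGroup W] [Module K W] {fW : LinearMap.BilinForm K W}
      {c N a b : Module.End K W}, Inv fW c N b → a * c = c * a → a * N = -(N * a) →
      (a * b) * c = c * (a * b) ∧ (a * b) * N = N * (a * b) := by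
    intro W _ _ fW c N a b h h1 h3
    constructor
    · rw [mul_assoc, h.bc, ← mul_assoc, h1, mul_assoc]
    · rw [mul_assoc, h.bN, mul_neg, ← mul_assoc, h3, neg_mul, neg_neg, mul_assoc]
  have dB : LinearMap.det αB = -1 := by
    obtain ⟨b2, i2, o2⟩ := H 1 (Or.inl rfl)
    obtain ⟨k1, k2⟩ := comm i2 cB' NB'
    have hb := o2.det one_ne_zero
    rcases tlemma p hp2 SB.q (IB.mul (IsoP.invol i2.adj i2.sq)) k1 k2 with h | ⟨T, hT, -, hTN, ho⟩
    · rw [map_mul, hb] at h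
      linear_combination -h
    · exact absurd ho (no_odd h2 SB.q SB.nn nB T hT hTN)
  have dA : LinearMap.det αA = -1 := by
    rw [dB] at hd
    linear_combination -hd
  obtain ⟨k1, k2⟩ := comm i1 cA' NA'
  have hb := o1.det
  rcases tlemma p hp2 SA.q (IA.mul (IsoP.invol i1.adj i1.sq)) k1 k2 with h | ⟨T, hT, hTc, hTN, ho⟩
  · exfalso
    rw [map_mul, hb, dA] at h
    apply h2
    linear_combination -h
  · obtain ⟨b, ib, db⟩ := odd_flip p hp2 SA.one T hT hTc hTN ho
    have : ∃ ε : K, (ε = 1 ∨ ε = -1) ∧ Cl fA ε b := by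
      rcases invol_odd h2 hsq SA.q ib.adj ib.sq db with h | h
      · exact ⟨1, Or.inl rfl, h⟩
      · exact ⟨-1, Or.inr rfl, h⟩
    obtain ⟨ε, hε, hcl⟩ := this
    obtain ⟨b2, i2, o2⟩ := H ε hε
    have hε0 : ε ≠ 0 := by rcases hε with rfl | rfl <;> simp
    exact ⟨_, D.inv_glue ib i2, Cl.glue2 h2 q D hε0 hcl o2⟩

theorem caseB (p : ℕ) [CharP K p] [hp : Fact p.Prime] (hp2 : p ≠ 2) [Finite K]
    (hm1 : ∀ a b : K, a * a + b * b = 0 → a = 0)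
    (hsq : ∀ d : K, ∃ a, d = a * a ∨ d = -(a * a)) [FiniteDimensional K V]
    {α α' : Module.End K V} (S : Sys f c N s (-1) 1 1) (I : IsoP f α α')
    (hd : LinearMap.det α = 1) (hc : α * c = c * α) (hN : α * N = -(N * α)) :
    ∃ b, Inv f c N b ∧ Om f b := by
  have aN : Adj f N ((-1 : K) • N) := by rw [neg_one_smul]; exact S.nn
  obtain ⟨A, B, D, hst, hfit⟩ := fitSplit S.q aN
  have hN1 : N * α = (-1 : K) • (α * N) := by rw [hN, neg_one_smul, neg_neg]
  have hN2 : N * α' = (-1 : K) • (α' * N) := by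
    rw [neg_one_smul]
    calc N * α' = (α' * α) * N * α' := by rw [I.linv, one_mul]
      _ = α' * (α * N) * α' := by simp only [mul_assoc]
      _ = -(α' * N * (α * α')) := by rw [hN]; simp only [mul_assoc, mul_neg, neg_mul]
      _ = _ := by rw [I.rinv, mul_one]
  have Nc : N * c = (1 : K) • (c * N) := by rw [one_smul, S.cn]
  have NN : N * N = (1 : K) • (N * N) := by rw [one_smul]
  have NnN : N * (-N) = (1 : K) • (-N * N) := by rw [one_smul, mul_neg, neg_mul]
  have Ns : N * s = (1 : K) • (s * N) := by rw [one_smul, S.sn, one_smul]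
  have as : Adj f s s := by have := S.ss; rwa [one_smul] at this
  obtain ⟨cA, cB, h1⟩ := (hst c c _ _ S.cc Nc Nc).ex
  obtain ⟨NA, NB, h3⟩ := (hst N (-N) _ _ S.nn NN NnN).ex
  obtain ⟨sA, sB, h4⟩ := (hst s s _ _ as Ns Ns).ex
  obtain ⟨aA, aB, h5⟩ := (hst α α' _ _ I.adj hN1 hN2).ex
  obtain ⟨aA', aB', h6⟩ := (hst α' α _ _ (I.inv S.q).adj hN2 hN1).ex
  obtain ⟨nA, nB⟩ := hfit _ _ h3
  subst h1 h3 h4 h5 h6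
  obtain ⟨SA, SB⟩ := Sys.left D S
  obtain ⟨IA, IB⟩ := D.iso_split I
  rw [D.det_glue] at hd
  rw [D.glue_mul, D.glue_mul] at hc hN
  rw [D.glue_neg] at hN
  obtain ⟨hcA, hcB⟩ := D.glue_inj hc
  obtain ⟨hNA, hNB⟩ := D.glue_inj hN
  exact caseB_fin p hp2 hm1 hsq D S.q SA SB nA nB IA IB hd hcA hcB hNA hNB
end Biref
namespace Biref
universe u v
variable {K : Type u} [Field K] {V : Type v} [AddCommGroup V] [Module K V]
  {f : LinearMap.BilinForm K V}

lemma iso_of_orth {e : V ≃ₗ[K] V} (h : e ∈ orthGroup f) :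
    IsoP f (e : Module.End K V) ((e⁻¹ : V ≃ₗ[K] V) : Module.End K V) := by
  refine ⟨fun x y => ?_, ?_, ?_⟩
  · have := h x (e⁻¹ y)
    rw [← LinearEquiv.mul_apply, mul_inv_cancel] at this
    exact this
  · ext x; exact e.apply_symm_apply x
  · ext x; exact e.symm_apply_apply x

lemma omega_orth {e : V ≃ₗ[K] V} (h : e ∈ omegaGroup f) : e ∈ orthGroup f :=
  (Subgroup.commutator_le.mpr (fun a ha b hb =>
    mul_mem (mul_mem (mul_mem ha hb) (inv_mem ha)) (inv_mem hb)) :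
    ⁅orthGroup f, orthGroup f⁆ ≤ orthGroup f) h

lemma omega_det {e : V ≃ₗ[K] V} (h : e ∈ omegaGroup f) : LinearMap.det (e : Module.End K V) = 1 := by
  have : omegaGroup f ≤ specialOrthGroup f := by
    refine Subgroup.commutator_le.mpr fun a ha b hb => ⟨?_, ?_⟩
    · exact mul_mem (mul_mem (mul_mem ha hb) (inv_mem ha)) (inv_mem hb)
    · have ia := congrArg LinearMap.det (iso_of_orth ha).rinv
      have ib := congrArg LinearMap.det (iso_of_orth hb).rinv
      rw [map_mul, map_one] at ia ib
      rw [commutatorElement_def, LinearEquiv.coe_toLinearMap_mul, LinearEquiv.coe_toLinearMap_mul,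
        LinearEquiv.coe_toLinearMap_mul, map_mul, map_mul, map_mul]
      linear_combination (LinearMap.det (b : Module.End K V) *
        LinearMap.det ((b⁻¹ : V ≃ₗ[K] V) : Module.End K V)) * ia + ib
  exact (this h).2

lemma sysA {P P' s : Module.End K V} (q : QS f) (I : IsoP f P P') {e : K} (he : e * e = 1)
    (as : Adj f s (e • s)) (s2 : s * s = e • 1) {r : K} (hr : r * r = 1)
    (h : s * P = r • (P' * s)) : Sys f (P + P') (P - P') s r (-r) e := by
  have h' : s * P' = r • (P * s) := by
    calc s * P' = r • (P * (r • (P' * s)) * P') := by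
          rw [mul_smul_comm, smul_mul_assoc, smul_smul, hr, one_smul, ← mul_assoc P, I.rinv, one_mul]
      _ = r • (P * s) := by
          rw [← h, mul_assoc, mul_assoc s, I.rinv, mul_one]
  have aP' := (I.inv q).adj
  refine ⟨q, ?_, ?_, as, ?_, ?_, ?_, ?_, s2⟩
  · have := I.adj.add aP'
    rwa [add_comm P' P] at this
  · have := I.adj.sub aP'
    rwa [neg_sub]
  · simp only [mul_add, mul_sub, add_mul, sub_mul, I.rinv, I.linv]; abel
  · simp only [mul_add, mul_sub, add_mul, sub_mul, I.rinv, I.linv]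
    have : (4 : K) • (1 : Module.End K V) = 1 + 1 + 1 + 1 := by
      module
    rw [this]; abel
  · rw [mul_add, h, h', add_mul, ← smul_add, add_comm]
  · rw [mul_sub, h, h', sub_mul, neg_smul, ← smul_neg, ← smul_sub, neg_sub]

lemma inv_rev (h2 : (2 : K) ≠ 0) {P P' b : Module.End K V} (h : Inv f (P + P') (P - P') b) :
    b * P = P' * b := by
  have h1 := h.bc
  have h3 := h.bN
  have : (2 : K) • (b * P) = (2 : K) • (P' * b) := by
    have e1 : (2 : K) • (b * P) = b * (P + P') + b * (P - P') := by
      rw [mul_add, mul_sub]; module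
    rw [e1, h1, h3, add_mul, sub_mul]; module
  have := congrArg (fun X => (2 : K)⁻¹ • X) this
  simpa [smul_smul, h2] using this

lemma hm1_of [Fintype K] (h3 : Fintype.card K % 4 = 3) (a b : K) (h : a * a + b * b = 0) : a = 0 := by
  by_contra ha
  have : IsSquare (-1 : K) := by
    refine ⟨b / a, ?_⟩
    field_simp
    linear_combination -h
  rw [FiniteField.isSquare_neg_one_iff] at this
  exact this h3

lemma hsq_of [Fintype K] (h3 : Fintype.card K % 4 = 3) (d : K) : ∃ a, d = a * a ∨ d = -(a * a) := by
  classical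
  by_cases h : IsSquare d
  · obtain ⟨a, ha⟩ := h
    exact ⟨a, Or.inl ha⟩
  have hn : ¬ IsSquare (-1 : K) := by
    rw [FiniteField.isSquare_neg_one_iff]; simp [h3]
  have hd : d ≠ 0 := by rintro rfl; exact h ⟨0, by simp⟩
  have hc : ringChar K ≠ 2 := by
    intro h2
    have := FiniteField.even_card_iff_char_two.mp h2
    omega
  have h4 : quadraticChar K (-d) = 1 := by
    rw [← neg_one_mul, map_mul, quadraticChar_neg_one_iff_not_isSquare.mpr hn,
      quadraticChar_neg_one_iff_not_isSquare.mpr h]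
    norm_num
  obtain ⟨a, ha⟩ := (quadraticChar_one_iff_isSquare (neg_ne_zero.mpr hd)).mp h4
  exact ⟨a, Or.inr (by rw [← ha, neg_neg])⟩

lemma finish {φ e : V ≃ₗ[K] V} (hφ : φ ∈ omegaGroup f) (he : e ∈ omegaGroup f)
    (h1 : e * e = 1) (h2 : e * φ = φ⁻¹ * e) : IsBireflectionalIn (omegaGroup f) φ := by
  refine ⟨e, e * φ, he, mul_mem he hφ, by rw [pow_two, h1], ?_, by rw [← mul_assoc, h1, one_mul]⟩
  rw [pow_two]
  nth_rewrite 1 [h2]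
  rw [mul_assoc, ← mul_assoc e e, h1, one_mul, inv_mul_cancel]

lemma finish' (h2 : (2 : K) ≠ 0) {φ : V ≃ₗ[K] V} (hφ : φ ∈ omegaGroup f)
    (H : ∃ b, Inv f ((φ : Module.End K V) + ((φ⁻¹ : V ≃ₗ[K] V) : Module.End K V))
      ((φ : Module.End K V) - ((φ⁻¹ : V ≃ₗ[K] V) : Module.End K V)) b ∧ Om f b) :
    IsBireflectionalIn (omegaGroup f) φ := by
  obtain ⟨b, hb, ob⟩ := H
  obtain ⟨e, he, hx⟩ := ob.toOmega
  have h3 := inv_rev h2 hb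
  refine finish hφ he ?_ ?_
  · ext x
    have := congrArg (fun X : Module.End K V => X x) hb.sq
    simp only [Module.End.mul_apply] at this
    rw [LinearEquiv.mul_apply, hx, hx, this]; rfl
  · ext x
    have := congrArg (fun X : Module.End K V => X x) h3
    simp only [Module.End.mul_apply] at this
    rw [LinearEquiv.mul_apply, hx, LinearEquiv.mul_apply, hx]; exact this

lemma pm_cases {x : V ≃ₗ[K] V} (h : (∀ v, x v = v) ∨ (∀ v, x v = -v)) :
    ∃ e : K, (e = 1 ∨ e = -1) ∧ (x : Module.End K V) = e • 1 := by
  rcases h with h | h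
  · exact ⟨1, Or.inl rfl, by ext v; simp [h]⟩
  · exact ⟨-1, Or.inr rfl, by ext v; simp [h]⟩

theorem back [Fintype K] (h3 : Fintype.card K % 4 = 3) [FiniteDimensional K V]
    (qs : QS f) (φ : V ≃ₗ[K] V) (hφ : φ ∈ omegaGroup f)
    (hrev : IsReversibleIn (omegaGroup f) φ) {σ τ : V ≃ₗ[K] V} (hσ : σ ∈ omegaGroup f)
    (hτ : τ ∈ omegaGroup f) {e1 e2 e3 : K} (he1 : e1 = 1 ∨ e1 = -1) (he2 : e2 = 1 ∨ e2 = -1)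
    (he3 : e3 = 1 ∨ e3 = -1)
    (hs : (σ : Module.End K V) * σ = e1 • 1) (ht : (τ : Module.End K V) * τ = e2 • 1)
    (hst : (φ : Module.End K V) = e3 • ((σ : Module.End K V) * τ)) :
    IsBireflectionalIn (omegaGroup f) φ := by
  obtain ⟨p, hc⟩ := CharP.exists K
  have hpp : Fact p.Prime := ⟨CharP.char_is_prime K p⟩
  have hp2 : p ≠ 2 := by
    rintro rfl
    have := FiniteField.even_card_iff_char_two.mp (ringChar.eq K 2)
    omega
  have h2 : (2 : K) ≠ 0 := two_ne p hp2
  have sq : ∀ {e : K}, (e = 1 ∨ e = -1) → e * e = 1 := by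
    rintro e (rfl | rfl) <;> ring
  have hm1 := hm1_of h3
  have hsq := hsq_of h3
  have IP := iso_of_orth (omega_orth hφ)
  have Is := iso_of_orth (omega_orth hσ)
  have It := iso_of_orth (omega_orth hτ)
  have adjs : ∀ {s s' : Module.End K V} {e : K}, IsoP f s s' → e * e = 1 → s * s = e • 1 →
      Adj f s (e • s) := by
    intro s s' e I he h
    have : s' = e • s := by
      calc s' = (e • (s * s)) * s' := by rw [h, smul_smul, he, one_smul, one_mul]
        _ = e • s := by rw [smul_mul_assoc, mul_assoc, I.rinv, mul_one]
    rw [← this]; exact I.adj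
  have as := adjs Is (sq he1) hs
  have at' := adjs It (sq he2) ht
  set P : Module.End K V := (φ : Module.End K V) with hP
  set P' : Module.End K V := ((φ⁻¹ : V ≃ₗ[K] V) : Module.End K V) with hP'
  set s : Module.End K V := (σ : Module.End K V) with hs'
  set t : Module.End K V := (τ : Module.End K V) with ht'
  have hPi : P' = (e3 * e1 * e2) • (t * s) := by
    have h5 : P * ((e3 * e1 * e2) • (t * s)) = 1 := by
      have h7 : (s * t) * (t * s) = (e2 * e1) • 1 := by
        rw [mul_assoc, ← mul_assoc t, ht, smul_mul_assoc, one_mul, mul_smul_comm, hs, smul_smul]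
      rw [hst, smul_mul_assoc, mul_smul_comm, h7, smul_smul, smul_smul]
      have : e3 * (e3 * e1 * e2) * (e2 * e1) = 1 := by
        linear_combination (e1 * e1 * e2 * e2) * sq he3 + (e2 * e2) * sq he1 + sq he2
      rw [this, one_smul]
    calc P' = P' * (P * ((e3 * e1 * e2) • (t * s))) := by rw [h5, mul_one]
      _ = _ := by rw [← mul_assoc, IP.linv, one_mul]
  have sP : s * P = (e1 * e2) • (P' * s) := by
    have h7 : t * s * s = e1 • t := by rw [mul_assoc, hs, mul_smul_comm, mul_one]
    rw [hst, hPi, mul_smul_comm, ← mul_assoc, hs, smul_mul_assoc, one_mul, smul_mul_assoc, h7,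
      smul_smul, smul_smul, smul_smul]
    congr 1
    linear_combination (-(e3 * e1)) * (e1 * e1 * sq he2 + sq he1)
  have tP : t * P = (e1 * e2) • (P' * t) := by
    rw [hst, hPi, mul_smul_comm, smul_mul_assoc, smul_smul, mul_assoc]
    congr 1
    linear_combination (-e3) * (e1 * e1 * sq he2 + sq he1)
  obtain ⟨α, hα, hα'⟩ := hrev
  have Iα := iso_of_orth (omega_orth hα)
  have dα := omega_det hα
  set a : Module.End K V := (α : Module.End K V) with ha
  have aP : a * P = P' * a := by
    have h5 : α * φ = φ⁻¹ * α := mul_inv_eq_iff_eq_mul.mp hα'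
    have := congrArg (fun e : V ≃ₗ[K] V => (e : Module.End K V)) h5
    exact this
  have aP' : a * P' = P * a := by
    have h5 : α * φ⁻¹ = φ * α := by
      have h6 : α * φ = φ⁻¹ * α := mul_inv_eq_iff_eq_mul.mp hα'
      rw [mul_inv_eq_iff_eq_mul, mul_assoc, h6, mul_inv_cancel_left]
    have := congrArg (fun e : V ≃ₗ[K] V => (e : Module.End K V)) h5
    exact this
  have ac : a * (P + P') = (P + P') * a := by rw [mul_add, aP, aP', add_mul, add_comm]
  have aN : a * (P - P') = -((P - P') * a) := by rw [mul_sub, aP, aP', sub_mul, neg_sub]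
  rcases he1 with rfl | rfl <;> rcases he2 with rfl | rfl
  · refine finish hφ hσ ?_ ?_
    · ext x
      rw [one_smul] at hs
      exact congrArg (fun X : Module.End K V => X x) hs
    · rw [one_mul, one_smul] at sP
      ext x
      exact congrArg (fun X : Module.End K V => X x) sP
  · have S := sysA qs IP (sq (Or.inl rfl)) as hs (by ring) sP
    rw [one_mul, neg_neg] at S
    exact finish' h2 hφ (caseB p hp2 hm1 hsq S Iα dα ac aN)
  · have S := sysA qs IP (sq (Or.inl rfl)) at' ht (by ring) tP
    rw [mul_one, neg_neg] at S
    exact finish' h2 hφ (caseB p hp2 hm1 hsq S Iα dα ac aN)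
  · have S := sysA qs IP (sq (Or.inr rfl)) as hs (by ring) sP
    rw [neg_mul_neg, one_mul] at S
    exact finish' h2 hφ (caseA p hp2 hm1 S)
end Biref
namespace Biref
variable {K V : Type*} [Field K] [AddCommGroup V] [Module K V]
theorem stmt8 [Fintype K] {q : ℕ} (hq : Fintype.card K = q) (h3 : q % 4 = 3)
    [FiniteDimensional K V]
    (f : LinearMap.BilinForm K V) (hsymm : f.IsSymm) (hnd : f.Nondegenerate)
    (φ : V ≃ₗ[K] V) (hφ : φ ∈ omegaGroup f)
    (hrev : IsReversibleIn (omegaGroup f) φ) :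
    IsBireflectionalIn (omegaGroup f) φ ↔
      IsBireflectional
        (QuotientGroup.mk (⟨φ, hφ⟩ : ↥(omegaGroup f)) : ↥(omegaGroup f) ⧸ pmOne f) := by
  constructor
  · rintro ⟨σ, τ, hσ, hτ, h1, h2, h⟩
    refine ⟨QuotientGroup.mk ⟨σ, hσ⟩, QuotientGroup.mk ⟨τ, hτ⟩, ?_, ?_, ?_⟩
    · rw [← QuotientGroup.mk_pow]
      have : (⟨σ, hσ⟩ : ↥(omegaGroup f)) ^ 2 = 1 := Subtype.ext h1
      rw [this]; rfl
    · rw [← QuotientGroup.mk_pow]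
      have : (⟨τ, hτ⟩ : ↥(omegaGroup f)) ^ 2 = 1 := Subtype.ext h2
      rw [this]; rfl
    · rw [← QuotientGroup.mk_mul]
      congr 1
      exact Subtype.ext h
  · rintro ⟨σ, τ, h1, h2, h⟩
    obtain ⟨⟨σ, hσ⟩, rfl⟩ := QuotientGroup.mk_surjective σ
    obtain ⟨⟨τ, hτ⟩, rfl⟩ := QuotientGroup.mk_surjective τ
    rw [← QuotientGroup.mk_pow, QuotientGroup.eq_one_iff] at h1 h2
    rw [← QuotientGroup.mk_mul, eq_comm, QuotientGroup.eq] at h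
    obtain ⟨e1, he1, k1⟩ := pm_cases h1
    obtain ⟨e2, he2, k2⟩ := pm_cases h2
    obtain ⟨e3, he3, k3⟩ := pm_cases h
    have qs : QS f := ⟨fun x y => by simpa using hsymm.eq x y, fun x hx => hnd.1 x hx⟩
    refine back (by rw [hq]; exact h3) qs φ hφ hrev hσ hτ he1 he2 he3 ?_ ?_ ?_
    · rw [← k1]; rw [pow_two]; rfl
    · rw [← k2]; rw [pow_two]; rfl
    · have h5 : φ = (σ * τ) * ((σ * τ)⁻¹ * φ) := by group
      have h6 : (φ : Module.End K V) = ((σ : Module.End K V) * τ) *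
          (((σ * τ)⁻¹ * φ : V ≃ₗ[K] V) : Module.End K V) :=
        congrArg (fun e : V ≃ₗ[K] V => (e : Module.End K V)) h5
      have k4 : (((σ * τ)⁻¹ * φ : V ≃ₗ[K] V) : Module.End K V) = e3 • 1 := k3
      rw [h6, k4, mul_smul_comm, mul_one]
end Biref
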